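/- arXiv:1712.09199 — 2 statements merged into one kernel-verified Lean document; each statement's English description precedes it below -/
import Mathlib

section
/- Let n ≥ 2 and let A ⊂ ℝⁿ be a Borel set with dim A > 2. Then for σ almost every unit vector e ∈ S^{n-1}, the set P_e(A) ⊂ ℝ has non-empty interior. -/
/-!
The proof is Fourier analytic. Fix `2 < s < dim A`.

By Frostman's lemma (`ProjInt.frostman`) a compact subset `K` of `A` carries a probability measure
`μ` with `μ (B(x, r)) ≲ r ^ s`. It is proved through binary coding of a unit cube by sequences of
letters. There, Hausdorff measure is replaced by a net content, the cost of covers by cylinders;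
it is strongly subadditive, hence continuous along increasing sequences of sets
(`ProjInt.content_iUnion_le_iSup`), hence capacitable (`ProjInt.exists_compact_content`), and the
measure is obtained from a flow on the tree of words (`ProjInt.exists_measure_cyl`).

The bound on balls bounds the Gaussian energy of `μ` at scale `2⁻ᵏ` by a multiple of `2 ^ (-s k)`.
By Parseval for Gaussians, `∫ |μ̂|²` over the shell `|ξ| ≈ 2 ^ k` is at most of order
`2 ^ ((n - s) k)`. As `s > 2`, the inequality `x ≤ cᵏ x² + c⁻ᵏ` with `c = 2 ^ (s / 2) > 2`, used in
place of Cauchy-Schwarz, gives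
`∫ |μ̂(ξ)| |ξ| ^ (1 - n) dξ < ∞` over `|ξ| ≥ 1` (`ProjInt.lintegral_charFun_weighted_lt_top`).
In polar coordinates this says that `t ↦ μ̂ (t e)` is integrable for almost every direction `e`
(`ProjInt.ae_integrable_charFun`). Polar coordinates in Mathlib use the cone measure on the sphere;
a slicing argument shows that its null sets are null for the Hausdorff measure of dimension `n - 1`
(`ProjInt.ae_hausdorffMeasure_sphere`).

Finally `t ↦ μ̂ (t e)` is the Fourier transform of the image of `μ` under `P_e`. Since it is
integrable, this image has a continuous density, and `P_e K`, on which the image lives, contains the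
nonempty open set where the density does not vanish
(`ProjInt.interior_nonempty_of_integrable_charFun`).
-/

open MeasureTheory Metric
open scoped ENNReal RealInnerProductSpace

/-! ### Net content on sequence space -/

namespace ProjInt

section Content

variable {ι : Type*}

/-- The list of the first `k` letters of `x`, the most recent letter first. -/
def hist (x : ℕ → ι) : ℕ → List ι
  | 0 => []
  | k + 1 => x k :: hist x k

lemma length_hist (x : ℕ → ι) (k : ℕ) : (hist x k).length = k := by
  induction k with
  | zero => rfl
  | succ k ih => simp [hist, ih]

lemma hist_suffix (x : ℕ → ι) {j k : ℕ} (h : j ≤ k) : hist x j <:+ hist x k := by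
  induction k, h using Nat.le_induction with
  | base => exact List.suffix_refl _
  | succ k _ ih => exact ih.trans (List.suffix_cons _ _)

/-- The cylinder of sequences whose initial segment, read backwards, is the word `w`. Words are
stored with the most recent letter first, so that ancestors of `w` in the tree of words are
the suffixes of `w`. -/
def cyl (w : List ι) : Set (ℕ → ι) := {x | hist x w.length = w}

lemma mem_cyl_hist (x : ℕ → ι) (k : ℕ) : x ∈ cyl (hist x k) := by
  simp [cyl, length_hist]

lemma suffix_of_mem_cyl {x : ℕ → ι} {v w : List ι} (hv : x ∈ cyl v) (hw : x ∈ cyl w)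
    (h : v.length ≤ w.length) : v <:+ w := by
  have := hist_suffix x h
  rwa [show hist x v.length = v from hv, show hist x w.length = w from hw] at this

lemma mem_cyl_of_suffix {x : ℕ → ι} {v w : List ι} (hw : x ∈ cyl w) (h : v <:+ w) :
    x ∈ cyl v := by
  have h1 : hist x v.length <:+ w := by
    have := hist_suffix x h.length_le
    rwa [show hist x w.length = w from hw] at this
  exact (List.suffix_of_suffix_length_le h1 h (length_hist _ _).le).eq_of_length
    (length_hist _ _)

lemma cyl_nil : cyl ([] : List ι) = Set.univ := by
  ext x; simp [cyl, hist]

lemma cyl_eq_iUnion (w : List ι) : cyl w = ⋃ i, cyl (i :: w) := by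
  ext x
  simp only [Set.mem_iUnion]
  constructor
  · intro h
    refine ⟨x w.length, ?_⟩
    have h' : hist x w.length = w := h
    simp [cyl, hist, h']
  · rintro ⟨i, hi⟩
    exact mem_cyl_of_suffix hi (List.suffix_cons _ _)

lemma disjoint_cyl {v w : List ι} (h : v.length = w.length) (hne : v ≠ w) :
    Disjoint (cyl v) (cyl w) := by
  rw [Set.disjoint_left]
  intro x hv hw
  exact hne ((suffix_of_mem_cyl hv hw h.le).eq_of_length h)

/-- The union of the cylinders over a family of words. -/
def cyls (S : Set (List ι)) : Set (ℕ → ι) := ⋃ w ∈ S, cyl w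

lemma mem_cyls {S : Set (List ι)} {x : ℕ → ι} : x ∈ cyls S ↔ ∃ w ∈ S, x ∈ cyl w := by
  simp [cyls]

/-- The total weight of a family of words. -/
noncomputable def wt (ρ : List ι → ℝ≥0∞) (S : Set (List ι)) : ℝ≥0∞ := ∑' w : S, ρ w

lemma wt_eq (ρ : List ι → ℝ≥0∞) (S : Set (List ι)) : wt ρ S = ∑' w, S.indicator ρ w :=
  tsum_subtype S ρ

/-- The net content of `A` with respect to the weight `ρ`: the infimum of the total weights of
all covers of `A` by cylinders. -/
noncomputable def content (ρ : List ι → ℝ≥0∞) (A : Set (ℕ → ι)) : ℝ≥0∞ :=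
  ⨅ (S : Set (List ι)) (_ : A ⊆ cyls S), wt ρ S

variable {ρ : List ι → ℝ≥0∞}

lemma content_le {A : Set (ℕ → ι)} {S : Set (List ι)} (h : A ⊆ cyls S) :
    content ρ A ≤ wt ρ S := iInf₂_le S h

lemma exists_cover {A : Set (ℕ → ι)} {c : ℝ≥0∞} (h : content ρ A < c) :
    ∃ S, A ⊆ cyls S ∧ wt ρ S < c := by
  simpa [content, iInf_lt_iff] using h

lemma content_mono {A B : Set (ℕ → ι)} (h : A ⊆ B) : content ρ A ≤ content ρ B :=
  le_iInf₂ fun _ hS => content_le (h.trans hS)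

lemma content_cyl_le {A : Set (ℕ → ι)} {w : List ι} (h : A ⊆ cyl w) : content ρ A ≤ ρ w := by
  refine (content_le (S := {w}) ?_).trans ?_
  · simpa [cyls] using h
  · simp [wt]

lemma content_empty : content ρ ∅ = 0 := by
  refine le_antisymm ((content_le (S := ∅) (Set.empty_subset _)).trans ?_) (zero_le)
  simp [wt]

lemma content_iUnion_le [Finite ι] (A : ι → Set (ℕ → ι)) :
    content ρ (⋃ i, A i) ≤ ∑' i, content ρ (A i) := by
  refine ENNReal.le_of_forall_pos_le_add fun ε hε hfin => ?_
  obtain ⟨δ, hδ, hsum⟩ := ENNReal.exists_pos_sum_of_countable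
    (ENNReal.coe_pos.2 hε).ne' ι
  have hc : ∀ i, ∃ S, A i ⊆ cyls S ∧ wt ρ S < content ρ (A i) + δ i := fun i =>
    exists_cover (ENNReal.lt_add_right (ENNReal.ne_top_of_tsum_ne_top hfin.ne i)
      (ENNReal.coe_pos.2 (hδ i)).ne')
  choose S hS hw using hc
  calc content ρ (⋃ i, A i) ≤ wt ρ (⋃ i, S i) := by
        refine content_le (Set.iUnion_subset fun i x hx => ?_)
        obtain ⟨w, hwS, hxw⟩ := mem_cyls.1 (hS i hx)
        exact mem_cyls.2 ⟨w, Set.mem_iUnion.2 ⟨i, hwS⟩, hxw⟩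
    _ ≤ ∑' i, wt ρ (S i) := ENNReal.tsum_iUnion_le_tsum _ _
    _ ≤ ∑' i, (content ρ (A i) + δ i) := ENNReal.tsum_le_tsum fun i => (hw i).le
    _ = ∑' i, content ρ (A i) + ∑' i, (δ i : ℝ≥0∞) := ENNReal.tsum_add
    _ ≤ _ := by gcongr

/-- The words of `S` which have no proper ancestor in `S`; their cylinders are the maximal ones. -/
def top (S : Set (List ι)) : Set (List ι) := {w ∈ S | ∀ v ∈ S, v <:+ w → v = w}

lemma top_subset (S : Set (List ι)) : top S ⊆ S := fun _ h => h.1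

lemma exists_suffix_mem_top {S : Set (List ι)} {w : List ι} (h : w ∈ S) :
    ∃ v ∈ top S, v <:+ w := by
  induction hn : w.length using Nat.strong_induction_on generalizing w with
  | _ k ih =>
    by_cases ht : w ∈ top S
    · exact ⟨w, ht, List.suffix_refl _⟩
    · obtain ⟨v, hv, hvw, hne⟩ : ∃ v ∈ S, v <:+ w ∧ v ≠ w := by
        by_contra! hcon
        exact ht ⟨h, hcon⟩
      have hlt : v.length < k := by
        rw [← hn]
        exact lt_of_le_of_ne hvw.length_le fun he => hne (hvw.eq_of_length he)
      obtain ⟨u, hu, huv⟩ := ih _ hlt hv rfl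
      exact ⟨u, hu, huv.trans hvw⟩

lemma subset_cyls_top {A : Set (ℕ → ι)} {S : Set (List ι)} (h : A ⊆ cyls S) :
    A ⊆ cyls (top S) := fun _ hx => by
  obtain ⟨w, hw, hxw⟩ := mem_cyls.1 (h hx)
  obtain ⟨v, hv, hvw⟩ := exists_suffix_mem_top hw
  exact mem_cyls.2 ⟨v, hv, mem_cyl_of_suffix hxw hvw⟩

/-- Strong subadditivity: if `S` covers `A` and `T` covers `B`, then the maximal cylinders of
`S ∪ T` cover `A ∪ B`, and what is left over, counted with multiplicity, covers `A ∩ B`. -/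
lemma wt_top_add_content_le {A B : Set (ℕ → ι)} {S T : Set (List ι)} (hA : A ⊆ cyls S)
    (hB : B ⊆ cyls T) :
    wt ρ (top (S ∪ T)) + content ρ (A ∩ B) ≤ wt ρ S + wt ρ T := by
  classical
  set R : Set (List ι) := ((S ∪ T) \ top (S ∪ T)) ∪ (S ∩ T) with hR
  have hcov : A ∩ B ⊆ cyls R := by
    rintro x ⟨hxA, hxB⟩
    obtain ⟨v, hv, hxv⟩ := mem_cyls.1 (hA hxA)
    obtain ⟨w, hw, hxw⟩ := mem_cyls.1 (hB hxB)
    rw [mem_cyls]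
    by_cases hvw : v = w
    · subst hvw
      exact ⟨v, Or.inr ⟨hv, hw⟩, hxv⟩
    rcases le_total v.length w.length with h | h
    · refine ⟨w, Or.inl ⟨Or.inr hw, fun ht => hvw ?_⟩, hxw⟩
      exact ht.2 v (Or.inl hv) (suffix_of_mem_cyl hxv hxw h)
    · refine ⟨v, Or.inl ⟨Or.inl hv, fun ht => hvw ?_⟩, hxv⟩
      exact (ht.2 w (Or.inr hw) (suffix_of_mem_cyl hxw hxv h)).symm
  calc wt ρ (top (S ∪ T)) + content ρ (A ∩ B) ≤ wt ρ (top (S ∪ T)) + wt ρ R := by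
        gcongr; exact content_le hcov
    _ ≤ wt ρ S + wt ρ T := by
        simp only [wt_eq, ← ENNReal.tsum_add]
        refine ENNReal.tsum_le_tsum fun w => ?_
        have := top_subset (S ∪ T)
        have h2 : w ∈ top (S ∪ T) → w ∈ S ∨ w ∈ T := fun h => this h
        by_cases hS : w ∈ S <;> by_cases hT : w ∈ T <;> by_cases ht : w ∈ top (S ∪ T) <;>
          simp_all [Set.indicator]

/-- The successive covers used to prove that the content is continuous along increasing
sequences: at each step one adds a new family and keeps the maximal cylinders. -/
def accum (C : ℕ → Set (List ι)) : ℕ → Set (List ι)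
  | 0 => C 0
  | k + 1 => top (accum C k ∪ C (k + 1))

lemma subset_cyls_accum {A : ℕ → Set (ℕ → ι)} {C : ℕ → Set (List ι)}
    (hC : ∀ k, A k ⊆ cyls (C k)) : ∀ k, A k ⊆ cyls (accum C k)
  | 0 => hC 0
  | k + 1 => subset_cyls_top fun x hx => by
      obtain ⟨w, hw, hxw⟩ := mem_cyls.1 (hC (k + 1) hx)
      exact mem_cyls.2 ⟨w, Or.inr hw, hxw⟩

/-- Each accumulated cover is almost optimal: strong subadditivity lets the errors of the single
covers add up, because `A k ∩ A (k + 1) = A k`. -/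
lemma wt_accum_le {A : ℕ → Set (ℕ → ι)} (hA : Monotone A) {C : ℕ → Set (List ι)}
    (hC : ∀ k, A k ⊆ cyls (C k)) (hfin : ∀ k, content ρ (A k) ≠ ∞) {δ : ℕ → ℝ≥0∞}
    (hw : ∀ k, wt ρ (C k) ≤ content ρ (A k) + δ k) (k : ℕ) :
    wt ρ (accum C k) ≤ content ρ (A k) + ∑ j ∈ Finset.range (k + 1), δ j := by
  induction k with
  | zero => simpa [accum] using hw 0
  | succ k ih =>
    have h1 := wt_top_add_content_le (ρ := ρ) (subset_cyls_accum hC k) (hC (k + 1))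
    rw [Set.inter_eq_left.2 (hA k.le_succ)] at h1
    refine (ENNReal.add_le_add_iff_right (hfin k)).1 (h1.trans ((add_le_add ih (hw (k + 1))).trans ?_))
    rw [Finset.sum_range_succ _ (k + 1)]
    exact le_of_eq (by ring)

/-- The net content is continuous along increasing sequences of sets. -/
theorem content_iUnion_le_iSup {A : ℕ → Set (ℕ → ι)} (hA : Monotone A) :
    content ρ (⋃ k, A k) ≤ ⨆ k, content ρ (A k) := by
  classical
  refine ENNReal.le_of_forall_pos_le_add fun ε hε hfin => ?_
  obtain ⟨δ, hδ, hsum⟩ := ENNReal.exists_pos_sum_of_countable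
    (ENNReal.coe_pos.2 hε).ne' ℕ
  have hfin' : ∀ k, content ρ (A k) ≠ ∞ := fun k =>
    ((le_iSup (fun k => content ρ (A k)) k).trans_lt hfin).ne
  have hc : ∀ k, ∃ S, A k ⊆ cyls S ∧ wt ρ S < content ρ (A k) + δ k := fun k =>
    exists_cover (ENNReal.lt_add_right (hfin' k) (ENNReal.coe_pos.2 (hδ k)).ne')
  choose C hC hw using hc
  set D := accum C with hD
  have hDw : ∀ k, wt ρ (D k) ≤ (⨆ k, content ρ (A k)) + ε := fun k => by
    refine (wt_accum_le hA hC hfin' (fun k => (hw k).le) k).trans ?_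
    gcongr
    · exact le_iSup (fun k => content ρ (A k)) k
    · exact (ENNReal.sum_le_tsum _).trans hsum.le
  have hcov : (⋃ k, A k) ⊆ cyls (top (⋃ k, D k)) := by
    refine subset_cyls_top (Set.iUnion_subset fun k x hx => ?_)
    obtain ⟨w, hw, hxw⟩ := mem_cyls.1 (subset_cyls_accum hC k hx)
    exact mem_cyls.2 ⟨w, Set.mem_iUnion.2 ⟨k, hw⟩, hxw⟩
  refine (content_le hcov).trans ?_
  -- A word that is maximal in the union of the accumulated covers belongs to all late covers, so
  -- finite partial sums of weights are controlled by a single cover `D k`.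
  have hpers : ∀ w ∈ top (⋃ k, D k), ∃ k, ∀ j, k ≤ j → w ∈ D j := by
    rintro w ⟨hw, hmin⟩
    obtain ⟨k, hk⟩ := Set.mem_iUnion.1 hw
    refine ⟨k, fun j hj => ?_⟩
    induction j, hj using Nat.le_induction with
    | base => exact hk
    | succ j _ ih =>
      obtain ⟨v, hv, hvw⟩ := exists_suffix_mem_top (S := D j ∪ C (j + 1)) (Or.inl ih)
      exact hmin v (Set.mem_iUnion.2 ⟨j + 1, hv⟩) hvw ▸ hv
  rw [wt_eq, ENNReal.tsum_eq_iSup_sum]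
  refine iSup_le fun F => ?_
  choose! N hN using hpers
  have hbound : ∀ w ∈ F, (top (⋃ k, D k)).indicator ρ w ≤ (D (F.sup N)).indicator ρ w := by
    intro w hwF
    by_cases h : w ∈ top (⋃ k, D k)
    · rw [Set.indicator_of_mem h, Set.indicator_of_mem (hN w h _ (Finset.le_sup hwF))]
    · rw [Set.indicator_of_notMem h]; exact zero_le
  calc ∑ w ∈ F, (top (⋃ k, D k)).indicator ρ w ≤ ∑ w ∈ F, (D (F.sup N)).indicator ρ w :=
        Finset.sum_le_sum hbound
    _ ≤ wt ρ (D (F.sup N)) := by rw [wt_eq]; exact ENNReal.sum_le_tsum _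
    _ ≤ _ := hDw _

end Content

end ProjInt

/-! ### Capacitability -/

namespace ProjInt

section Capacity

variable {ι : Type*} {ρ : List ι → ℝ≥0∞}

/-- The points of Baire space whose first `k` coordinates are bounded by those of `g`. -/
def box (g : ℕ → ℕ) (k : ℕ) : Set (ℕ → ℕ) := {x | ∀ i < k, x i ≤ g i}

lemma isCompact_bounded (g : ℕ → ℕ) : IsCompact {x : ℕ → ℕ | ∀ i, x i ≤ g i} := by
  convert isCompact_univ_pi (fun i => (Set.finite_Iic (g i)).isCompact) using 1
  ext x
  simp [Pi.le_def]

/-- A neighbourhood of the compact product `∏ [0, g i]` in Baire space contains a set defined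
by bounding finitely many coordinates. -/
lemma exists_box_subset (g : ℕ → ℕ) {V : Set (ℕ → ℕ)} (hV : IsOpen V)
    (h : {x : ℕ → ℕ | ∀ i, x i ≤ g i} ⊆ V) : ∃ k, box g k ⊆ V := by
  have hcomp := isCompact_bounded g
  -- The increasing open sets `W k` cover the compact product, so a single `W k` contains it; points
  -- of the box are truncated into the compact product.
  let W : ℕ → Set (ℕ → ℕ) := fun k => {x | PiNat.cylinder x k ⊆ V}
  have hWo : ∀ k, IsOpen (W k) := fun k => by
    rw [isOpen_iff_forall_mem_open]
    intro x hx
    refine ⟨PiNat.cylinder x k, fun y hy => ?_, PiNat.isOpen_cylinder _ x k,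
      PiNat.self_mem_cylinder x k⟩
    change PiNat.cylinder y k ⊆ V
    rwa [PiNat.mem_cylinder_iff_eq.1 hy]
  have hWmono : Monotone W := fun j k hjk x hx =>
    (PiNat.cylinder_anti x hjk).trans hx
  have hcov : {x : ℕ → ℕ | ∀ i, x i ≤ g i} ⊆ ⋃ k, W k := fun x hx => by
    obtain ⟨u, ⟨y, k, rfl⟩, hxu, huV⟩ :=
      (PiNat.isTopologicalBasis_cylinders (fun _ : ℕ => ℕ)).exists_subset_of_mem_open (h hx) hV
    refine Set.mem_iUnion.2 ⟨k, ?_⟩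
    change PiNat.cylinder x k ⊆ V
    rwa [PiNat.mem_cylinder_iff_eq.1 hxu]
  obtain ⟨k, hk⟩ := hcomp.elim_directed_cover W hWo hcov hWmono.directed_le
  refine ⟨k, fun y hy => ?_⟩
  have h1 : (fun i => min (y i) (g i)) ∈ W k := hk fun i => min_le_right _ _
  refine h1 fun i hi => ?_
  exact (min_eq_left (hy i hi)).symm

variable [TopologicalSpace ι] [DiscreteTopology ι]

lemma isOpen_cyl (w : List ι) : IsOpen (cyl w) := by
  induction w with
  | nil => simp [cyl_nil]
  | cons i w ih =>
    have : cyl (i :: w) = cyl w ∩ {x | x w.length = i} := by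
      ext x
      simp only [cyl, Set.mem_ofPred_eq, List.length_cons, hist, List.cons.injEq, Set.mem_inter_iff]
      tauto
    rw [this]
    exact ih.inter ((isOpen_discrete ({i} : Set ι)).preimage
      (continuous_apply (A := fun _ : ℕ => ι) w.length))

lemma isClopen_cyl (w : List ι) : IsClopen (cyl w) := by
  refine ⟨⟨?_⟩, isOpen_cyl w⟩
  have : (cyl w)ᶜ = ⋃ (v : List ι) (_ : v.length = w.length ∧ v ≠ w), cyl v := by
    ext x
    simp only [Set.mem_iUnion, exists_prop, Set.mem_compl_iff]
    constructor
    · intro h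
      refine ⟨hist x w.length, ⟨length_hist _ _, h⟩, mem_cyl_hist _ _⟩
    · rintro ⟨v, ⟨h1, h2⟩, hv⟩ hw
      exact Set.disjoint_left.1 (disjoint_cyl h1 h2) hv hw
  rw [this]
  exact isOpen_biUnion fun v _ => isOpen_cyl v

/-- The cylinders form a base of the topology. -/
lemma exists_cyl_subset {U : Set (ℕ → ι)} (hU : IsOpen U) {x : ℕ → ι} (hx : x ∈ U) :
    ∃ w, x ∈ cyl w ∧ cyl w ⊆ U := by
  obtain ⟨u, ⟨y, k, rfl⟩, hxu, huV⟩ :=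
    (PiNat.isTopologicalBasis_cylinders (fun _ : ℕ => ι)).exists_subset_of_mem_open hx hU
  refine ⟨hist x k, mem_cyl_hist x k, fun z hz => huV ?_⟩
  have hz' : hist z k = hist x k := by
    have : hist z (hist x k).length = hist x k := hz
    rwa [length_hist] at this
  rw [← PiNat.mem_cylinder_iff_eq.1 hxu]
  clear hxu huV hz
  induction k with
  | zero => intro i hi; omega
  | succ k ih =>
    simp only [hist, List.cons.injEq] at hz'
    intro i hi
    rcases Nat.lt_succ_iff_lt_or_eq.1 hi with h | h
    · exact ih hz'.2 i h
    · subst h; exact hz'.1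

/-- Capacitability: an analytic set of content larger than `c` has a compact subset of content at
least `c`. Continuity along increasing sequences bounds the coordinates in Baire space one at a
time, and compactness passes to the limit, as cylinders are open. -/
theorem exists_compact_content {A : Set (ℕ → ι)} (hA : AnalyticSet A) {c : ℝ≥0∞}
    (hc : c < content ρ A) : ∃ K ⊆ A, IsCompact K ∧ c ≤ content ρ K := by
  rw [AnalyticSet] at hA
  rcases hA with rfl | ⟨f, hf, rfl⟩
  · simp [content_empty] at hc
  -- With `k` coordinates bounded by `g`, a large enough bound on the next one costs too little
  -- content to fall below `c`.
  have hstep : ∀ (k : ℕ) (g : ℕ → ℕ), c < content ρ (f '' box g k) →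
      ∃ m, c < content ρ (f '' box (Function.update g k m) (k + 1)) := by
    intro k g hg
    have hmono : Monotone fun m => f '' box (Function.update g k m) (k + 1) := by
      intro m m' hm
      refine Set.image_mono fun x hx i hi => (hx i hi).trans ?_
      exact update_le_update_iff.2 ⟨hm, fun _ _ => le_rfl⟩ i
    have hU : f '' box g k ⊆ ⋃ m, f '' box (Function.update g k m) (k + 1) := by
      rintro _ ⟨x, hx, rfl⟩
      refine Set.mem_iUnion.2 ⟨x k, x, fun i hi => ?_, rfl⟩
      by_cases h : i = k
      · subst h; simp
      · rw [Function.update_of_ne h]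
        exact hx i (by omega)
    exact lt_iSup_iff.1 (hg.trans_le ((content_mono hU).trans (content_iUnion_le_iSup hmono)))
  choose! m hm using hstep
  let G : ℕ → ℕ → ℕ := fun k => Nat.rec (fun _ => 0) (fun k g => Function.update g k (m k g)) k
  have hGs : ∀ k, G (k + 1) = Function.update (G k) k (m k (G k)) := fun k => rfl
  have hG : ∀ k, c < content ρ (f '' box (G k) k) := by
    intro k
    induction k with
    | zero =>
      convert hc
      rw [← Set.image_univ]
      congr 1
      ext x; simp [box]
    | succ k ih => rw [hGs]; exact hm k _ ih
  let g : ℕ → ℕ := fun i => G (i + 1) i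
  have hGg : ∀ k, ∀ i < k, G k i = g i := by
    intro k
    induction k with
    | zero => intro i hi; omega
    | succ k ih =>
      intro i hi
      by_cases h : i = k
      · subst h; rfl
      · rw [hGs, Function.update_of_ne h]
        exact ih i (by omega)
  have hcomp := isCompact_bounded g
  refine ⟨f '' {x | ∀ i, x i ≤ g i}, Set.image_subset_range _ _, hcomp.image hf, ?_⟩
  -- A cheap cover of the image of the compact product, being open, covers the image of some box.
  by_contra! hlt
  obtain ⟨S, hS, hw⟩ := exists_cover hlt
  have hop : IsOpen (f ⁻¹' cyls S) :=
    (isOpen_biUnion fun w _ => isOpen_cyl w).preimage hf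
  obtain ⟨k, hk⟩ := exists_box_subset g hop (Set.image_subset_iff.1 hS)
  have hbox : box (G k) k = box g k := by
    ext x
    exact forall₂_congr fun i hi => by rw [hGg k i hi]
  have h1 := hG k
  rw [hbox] at h1
  exact absurd (h1.trans_le ((content_le (Set.image_subset_iff.2 hk)).trans hw.le)) (lt_irrefl c)

end Capacity

end ProjInt

/-! ### Frostman measures on sequence space -/

namespace ProjInt

section Flow

variable {ι : Type*}

lemma cyl_nonempty [Nonempty ι] (w : List ι) : (cyl w).Nonempty := by
  classical
  induction w with
  | nil => rw [cyl_nil]; exact ⟨fun _ => Classical.arbitrary ι, trivial⟩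
  | cons i w ih =>
    obtain ⟨x, hx⟩ := ih
    have key : ∀ k ≤ w.length, hist (Function.update x w.length i) k = hist x k := by
      intro k
      induction k with
      | zero => intro _; rfl
      | succ k ih =>
        intro hk
        rw [hist, hist, ih (by omega), Function.update_of_ne (by omega)]
    refine ⟨Function.update x w.length i, ?_⟩
    have hx' : hist x w.length = w := hx
    simp [cyl, hist, key _ le_rfl, hx']

section

variable [Fintype ι]

/-- The flow on the tree of words which distributes the mass of each word among its children
proportionally to `g`. -/
noncomputable def flow (g : List ι → ℝ≥0∞) : List ι → ℝ≥0∞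
  | [] => 1
  | i :: w => flow g w * (g (i :: w) / ∑ j, g (j :: w))

lemma flow_le {g : List ι → ℝ≥0∞} (h0 : g [] ≠ 0) (hfin : ∀ w, g w ≠ ∞)
    (hsub : ∀ w, g w ≤ ∑ i, g (i :: w)) (w : List ι) : flow g w ≤ g w / g [] := by
  induction w with
  | nil => simp [flow, ENNReal.div_self h0 (hfin [])]
  | cons i w ih =>
    have hS : ∑ j, g (j :: w) ≠ ∞ := by simp [hfin]
    calc flow g w * (g (i :: w) / ∑ j, g (j :: w))
        ≤ ((∑ j, g (j :: w)) / g []) * (g (i :: w) / ∑ j, g (j :: w)) := by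
          gcongr
          exact ih.trans (ENNReal.div_le_div_right (hsub w) _)
      _ = ((∑ j, g (j :: w)) / ∑ j, g (j :: w)) * (g (i :: w) / g []) := by
          simp only [div_eq_mul_inv]; ring
      _ ≤ 1 * (g (i :: w) / g []) := by gcongr; exact ENNReal.div_self_le_one
      _ = _ := one_mul _

lemma sum_flow {g : List ι → ℝ≥0∞} (h0 : g [] ≠ 0) (hfin : ∀ w, g w ≠ ∞)
    (hsub : ∀ w, g w ≤ ∑ i, g (i :: w)) (w : List ι) : ∑ i, flow g (i :: w) = flow g w := by
  have hS : ∑ j, g (j :: w) ≠ ∞ := by simp [hfin]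
  simp only [flow, ← Finset.mul_sum, div_eq_mul_inv]
  rw [← Finset.sum_mul]
  by_cases h : ∑ j, g (j :: w) = 0
  · have hw : g w = 0 := le_antisymm (h ▸ hsub w) zero_le
    have : flow g w = 0 := le_antisymm ((flow_le h0 hfin hsub w).trans (by simp [hw])) zero_le
    simp [this]
  · rw [ENNReal.mul_inv_cancel h hS, mul_one]

end

section

variable [TopologicalSpace ι] [DiscreteTopology ι] [MeasurableSpace (ℕ → ι)] [BorelSpace (ℕ → ι)]

lemma measurableSet_cyl (w : List ι) : MeasurableSet (cyl w) := (isOpen_cyl w).measurableSet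

end

variable [Fintype ι] [Nonempty ι]

variable [MeasurableSpace (ℕ → ι)]

/-- The discrete approximation at `N` levels below `w` of the measure with cylinder masses `m`. -/
noncomputable def approx (m : List ι → ℝ≥0∞) : ℕ → List ι → Measure (ℕ → ι)
  | 0, w => m w • Measure.dirac (cyl_nonempty w).some
  | N + 1, w => ∑ i, approx m N (i :: w)

variable {m : List ι → ℝ≥0∞}

lemma approx_univ (hm : ∀ w, ∑ i, m (i :: w) = m w) (N : ℕ) (w : List ι) :
    approx m N w Set.univ = m w := by
  induction N generalizing w with
  | zero => simp [approx]
  | succ N ih => simp [approx, ih, hm]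

variable [TopologicalSpace ι] [DiscreteTopology ι] [BorelSpace (ℕ → ι)]

lemma approx_compl (m : List ι → ℝ≥0∞) (N : ℕ) (w : List ι) : approx m N w (cyl w)ᶜ = 0 := by
  induction N generalizing w with
  | zero =>
    simp [approx, Measure.dirac_apply' _ (measurableSet_cyl w).compl, (cyl_nonempty w).some_mem]
  | succ N ih =>
    simp only [approx, Measure.coe_finsetSum, Finset.sum_apply, Finset.sum_eq_zero_iff]
    intro i _
    refine measure_mono_null ?_ (ih (i :: w))
    rw [Set.compl_subset_compl, cyl_eq_iUnion w]
    exact Set.subset_iUnion (fun i => cyl (i :: w)) i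

lemma approx_cyl (hm : ∀ w, ∑ i, m (i :: w) = m w) (N : ℕ) {v w : List ι} (h : v <:+ w)
    (hN : w.length ≤ v.length + N) : approx m N v (cyl w) = m w := by
  classical
  by_cases hvw : v = w
  · subst hvw
    rw [← approx_univ hm N v]
    refine (measure_congr ?_)
    rw [ae_eq_univ]
    exact approx_compl m N v
  induction N generalizing v with
  | zero => exact absurd (h.eq_of_length (le_antisymm h.length_le (by omega))) hvw
  | succ N ih =>
    have hlt : v.length < w.length :=
      lt_of_le_of_ne h.length_le fun he => hvw (h.eq_of_length he)
    obtain ⟨j, hj⟩ : ∃ j, j :: v <:+ w := by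
      obtain ⟨x, hx⟩ := cyl_nonempty w
      have hxv := mem_cyl_of_suffix hx h
      rw [cyl_eq_iUnion v] at hxv
      obtain ⟨j, hj⟩ := Set.mem_iUnion.1 hxv
      exact ⟨j, suffix_of_mem_cyl hj hx (by simpa using hlt)⟩
    simp only [approx, Measure.coe_finsetSum, Finset.sum_apply]
    rw [Finset.sum_eq_single j]
    · by_cases hjw : j :: v = w
      · rw [← hjw, ← approx_univ hm N (j :: v)]
        refine (measure_congr ?_)
        rw [ae_eq_univ]
        exact approx_compl m N _
      · exact ih hj (by simp; omega) hjw
    · intro i _ hij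
      refine measure_mono_null (fun x (hx : x ∈ cyl w) => (?_ : x ∉ cyl (i :: v)))
        (approx_compl m N (i :: v))
      intro hxi
      have hxj := mem_cyl_of_suffix hx hj
      exact Set.disjoint_left.1 (disjoint_cyl (by simp) (by simpa using hij)) hxi hxj
    · simp

/-- A unit flow on the tree of words is given by a probability measure on sequences: the discrete
approximations have a cluster point, and the mass of a cylinder, which is clopen, is eventually
constant along them. -/
theorem exists_measure_cyl (h1 : m [] = 1) (hm : ∀ w, ∑ i, m (i :: w) = m w) :
    ∃ μ : Measure (ℕ → ι), IsProbabilityMeasure μ ∧ ∀ w, μ (cyl w) = m w := by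
  let u : ℕ → ProbabilityMeasure (ℕ → ι) := fun N =>
    ⟨approx m N [], ⟨by rw [approx_univ hm, h1]⟩⟩
  let F : Ultrafilter (ProbabilityMeasure (ℕ → ι)) := (Filter.hyperfilter ℕ).map u
  obtain ⟨μ, -, hμ⟩ := isCompact_univ.ultrafilter_le_nhds F (by simp)
  have hlim : Filter.Tendsto u (Filter.hyperfilter ℕ : Filter ℕ) (nhds μ) := hμ
  refine ⟨μ, inferInstance, fun w => ?_⟩
  have h2 := ProbabilityMeasure.tendsto_measure_of_null_frontier_of_tendsto' hlim (E := cyl w)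
    (by simp [(isClopen_cyl w).frontier_eq])
  refine tendsto_nhds_unique h2 (tendsto_const_nhds.congr' ?_)
  have h3 : ∀ᶠ N in Filter.atTop, m w = (u N : Measure (ℕ → ι)) (cyl w) := by
    filter_upwards [Filter.eventually_ge_atTop w.length] with N hN
    exact (approx_cyl hm N (List.nil_suffix) (by simpa using hN)).symm
  exact Nat.hyperfilter_le_atTop h3

/-- Frostman's lemma on sequence space: a Borel set of positive content carries, on a compact
subset, a probability measure bounded on cylinders by a multiple of the weight. The measure is the
flow which follows the contents of the pieces of the compact subset. -/
theorem frostman_cyl {ρ : List ι → ℝ≥0∞} (hρ : ∀ w, ρ w ≠ ∞) {A : Set (ℕ → ι)}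
    (hA : MeasurableSet A) (hpos : content ρ A ≠ 0) :
    ∃ K ⊆ A, IsCompact K ∧ ∃ μ : Measure (ℕ → ι), IsProbabilityMeasure μ ∧ μ Kᶜ = 0 ∧
      ∃ C : ℝ≥0∞, C ≠ ∞ ∧ ∀ w, μ (cyl w) ≤ C * ρ w := by
  have : PolishSpace ι := inferInstance
  obtain ⟨c, hc0, hc⟩ := exists_between (pos_iff_ne_zero.2 hpos)
  obtain ⟨K, hKA, hK, hcK⟩ := exists_compact_content hA.analyticSet hc
  -- The contents of the pieces of `K` are subadditive along the tree, which is what makes the flow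
  -- dominated by them.
  set g : List ι → ℝ≥0∞ := fun w => content ρ (K ∩ cyl w) with hg
  have hgρ : ∀ w, g w ≤ ρ w := fun w => content_cyl_le Set.inter_subset_right
  have hfin : ∀ w, g w ≠ ∞ := fun w => ((hgρ w).trans_lt (hρ w).lt_top).ne
  have h0 : g [] ≠ 0 := by
    simp only [hg, cyl_nil, Set.inter_univ]
    exact (hc0.trans_le hcK).ne'
  have hsub : ∀ w, g w ≤ ∑ i, g (i :: w) := fun w => by
    simp only [hg]
    rw [cyl_eq_iUnion w, Set.inter_iUnion]
    exact (content_iUnion_le _).trans_eq (tsum_fintype _)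
  obtain ⟨μ, hμ, hcyl⟩ := exists_measure_cyl (m := flow g) rfl (sum_flow h0 hfin hsub)
  refine ⟨K, hKA, hK, μ, hμ, ?_, (g [])⁻¹, ENNReal.inv_ne_top.2 h0, fun w => ?_⟩
  · have hcov : Kᶜ ⊆ ⋃ (w : List ι) (_ : Disjoint K (cyl w)), cyl w := fun x hx => by
      obtain ⟨w, hxw, hw⟩ := exists_cyl_subset hK.isClosed.isOpen_compl hx
      exact Set.mem_iUnion₂.2 ⟨w, (Set.disjoint_left.2 fun y hy hyw => hw hyw hy), hxw⟩
    refine measure_mono_null hcov ?_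
    rw [measure_iUnion_null_iff]
    intro w
    rw [measure_iUnion_null_iff]
    intro hd
    rw [hcyl]
    refine le_antisymm ((flow_le h0 hfin hsub w).trans ?_) zero_le
    simp [hg, Set.disjoint_iff_inter_eq_empty.1 hd, content_empty]
  · rw [hcyl]
    refine (flow_le h0 hfin hsub w).trans ?_
    rw [div_eq_mul_inv, mul_comm]
    gcongr
    exact hgρ w

end Flow

end ProjInt

/-! ### Dyadic coding and the lemma of Frostman in ℝⁿ -/

namespace ProjInt

section HausdorffNull

variable {X : Type*} [EMetricSpace X] [MeasurableSpace X] [BorelSpace X]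

/-- Hausdorff null sets are detected by covers with no constraint on the diameters. -/
lemma hausdorffMeasure_eq_zero {κ : Type*} [Countable κ] {s : ℝ} (hs : 0 < s) {E : Set X}
    (h : ∀ ε : ℝ≥0∞, ε ≠ 0 → ∃ t : κ → Set X, E ⊆ ⋃ i, t i ∧ ∑' i, ediam (t i) ^ s ≤ ε) :
    μH[s] E = 0 := by
  have hε : ∀ k : ℕ, ((k : ℝ≥0∞)⁻¹ ^ s) ≠ 0 := fun k => by
    simp [ENNReal.rpow_eq_zero_iff, hs, not_lt.2 hs.le]
  choose t ht hsum using fun k : ℕ => h _ (hε k)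
  have hlim : Filter.Tendsto (fun k : ℕ => (k : ℝ≥0∞)⁻¹) Filter.atTop (nhds 0) :=
    ENNReal.tendsto_inv_nat_nhds_zero
  have hle := Measure.hausdorffMeasure_le_liminf_tsum s E (fun k : ℕ => (k : ℝ≥0∞)⁻¹) hlim t
    (Filter.Eventually.of_forall fun k i => by
      have : ediam (t k i) ^ s ≤ (k : ℝ≥0∞)⁻¹ ^ s := (ENNReal.le_tsum i).trans (hsum k)
      exact (ENNReal.rpow_le_rpow_iff hs).1 this)
    (Filter.Eventually.of_forall ht)
  refine le_antisymm (hle.trans ?_) zero_le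
  have h0 : Filter.Tendsto (fun k : ℕ => (k : ℝ≥0∞)⁻¹ ^ s) Filter.atTop (nhds 0) := by
    have := hlim.ennrpow_const s
    rwa [ENNReal.zero_rpow_of_pos hs] at this
  rw [← h0.liminf_eq]
  exact Filter.liminf_le_liminf (Filter.Eventually.of_forall hsum)

/-- Hausdorff null sets have covers of arbitrarily small total `s`-dimensional size. -/
lemma exists_cover_of_hausdorffMeasure_eq_zero {s : ℝ} (hs : 0 < s) {E : Set X}
    (h : μH[s] E = 0) {ε : ℝ≥0∞} (hε : ε ≠ 0) :
    ∃ t : ℕ → Set X, E ⊆ ⋃ i, t i ∧ ∑' i, ediam (t i) ^ s < ε := by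
  rw [Measure.hausdorffMeasure_apply] at h
  have h1 := le_iSup₂ (f := fun (r : ℝ≥0∞) (_ : 0 < r) =>
    ⨅ (t : ℕ → Set X) (_ : E ⊆ ⋃ n, t n) (_ : ∀ n, ediam (t n) ≤ r),
      ∑' n, ⨆ _ : (t n).Nonempty, ediam (t n) ^ s) 1 one_pos
  have h2 := (h1.trans h.le).trans_lt (pos_iff_ne_zero.2 hε)
  simp only [iInf_lt_iff] at h2
  obtain ⟨t, ht, -, hsum⟩ := h2
  refine ⟨t, ht, lt_of_le_of_lt (ENNReal.tsum_le_tsum fun n => ?_) hsum⟩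
  rcases (t n).eq_empty_or_nonempty with h | h
  · simp [h, hs]
  · exact le_iSup_of_le h le_rfl

end HausdorffNull

section Coding

variable {n : ℕ}

/-- The letters of the dyadic coding of a cube in `ℝⁿ`: one binary digit per coordinate. -/
abbrev Letter (n : ℕ) : Type := Fin n → Fin 2

/-- The binary coding of the unit cube with corner `z`. -/
noncomputable def code (z : Fin n → ℤ) (x : ℕ → Letter n) : EuclideanSpace ℝ (Fin n) :=
  WithLp.toLp 2 fun i => z i + Real.ofDigits fun k => x k i

lemma continuous_code (z : Fin n → ℤ) : Continuous (code z) := by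
  refine (PiLp.continuous_toLp 2 _).comp (continuous_pi fun i => continuous_const.add ?_)
  exact Real.continuous_ofDigits.comp (continuous_pi fun k => by fun_prop)

/-- The numerator, over `2 ^ w.length`, of the `i`-th coordinate of the lower corner of the dyadic
cube of the word `w`, relative to the corner of the unit cube. -/
def corner (i : Fin n) : List (Letter n) → ℕ
  | [] => 0
  | d :: w => 2 * corner i w + d i

lemma corner_injective {v w : List (Letter n)} (hl : v.length = w.length)
    (h : ∀ i, corner i v = corner i w) : v = w := by
  induction v generalizing w with
  | nil => exact (List.length_eq_zero_iff.1 hl.symm).symm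
  | cons d v ih =>
    cases w with
    | nil => simp at hl
    | cons e w =>
      simp only [corner] at h
      have hd : d = e := by
        funext i
        have := h i
        ext
        omega
      have hw : v = w := ih (by simpa using hl) fun i => by
        have := h i
        omega
      rw [hd, hw]

lemma sum_ofDigitsTerm (x : ℕ → Letter n) (i : Fin n) (k : ℕ) :
    ∑ j ∈ Finset.range k, Real.ofDigitsTerm (fun j => x j i) j = corner i (hist x k) / 2 ^ k := by
  induction k with
  | zero => simp [hist, corner]
  | succ k ih =>
    rw [Finset.sum_range_succ, ih]
    simp only [hist, corner, Real.ofDigitsTerm]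
    push_cast
    field_simp
    ring

/-- The point coded by `x` lies in the dyadic cube of side `2⁻ᵏ` given by the first `k` letters. -/
lemma code_mem (z : Fin n → ℤ) (x : ℕ → Letter n) (i : Fin n) (k : ℕ) :
    (corner i (hist x k) : ℝ) ≤ (code z x i - z i) * 2 ^ k ∧
      (code z x i - z i) * 2 ^ k ≤ corner i (hist x k) + 1 := by
  have h := Real.ofDigits_eq_sum_add_ofDigits (fun j => x j i) k
  rw [sum_ofDigitsTerm] at h
  have h0 := Real.ofDigits_nonneg (fun j => x (j + k) i)
  have h1 := Real.ofDigits_le_one (fun j => x (j + k) i)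
  have hc : (code z x i - z i) * 2 ^ k =
      corner i (hist x k) + Real.ofDigits (fun j => x (j + k) i) := by
    simp only [code, add_sub_cancel_left, h]
    push_cast
    field_simp
  rw [hc]
  constructor <;> linarith

/-- Every point of the cube with corner `z` is coded. -/
lemma exists_code (z : Fin n → ℤ) {a : EuclideanSpace ℝ (Fin n)}
    (h : ∀ i, a i - z i ∈ Set.Icc (0 : ℝ) 1) : ∃ x, code z x = a := by
  choose d _ hd using fun i => Real.ofDigits_SurjOn (b := 2) one_lt_two (h i)
  refine ⟨fun k i => d i k, ?_⟩
  ext i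
  simp [code, hd]

/-- The weight of a word: the side of the corresponding dyadic cube, to the power `s`. -/
noncomputable def sideWt (s : ℝ) (w : List (Letter n)) : ℝ≥0∞ := ((2⁻¹ : ℝ≥0∞) ^ w.length) ^ s

lemma ediam_code_le (z : Fin n → ℤ) : ∃ D : ℝ≥0∞, D ≠ ∞ ∧ ∀ w : List (Letter n),
    ediam (code z '' cyl w) ≤ D * (2⁻¹ : ℝ≥0∞) ^ w.length := by
  obtain ⟨D, hD⟩ : ∃ D : NNReal,
      AntilipschitzWith D (WithLp.ofLp : EuclideanSpace ℝ (Fin n) → Fin n → ℝ) :=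
    ⟨_, PiLp.antilipschitzWith_ofLp 2 _⟩
  refine ⟨D, ENNReal.coe_ne_top, fun w => ediam_le ?_⟩
  rintro _ ⟨x, hx, rfl⟩ _ ⟨y, hy, rfl⟩
  refine (hD _ _).trans ?_
  gcongr
  rw [edist_pi_le_iff]
  intro i
  have hhist : hist x w.length = hist y w.length :=
    (show hist x w.length = w from hx).trans (show hist y w.length = w from hy).symm
  have hx' := code_mem z x i w.length
  have hy' := code_mem z y i w.length
  rw [hhist] at hx'
  have hr : |code z x i - code z y i| ≤ (2 ^ w.length)⁻¹ := by
    rw [abs_le, ← one_div, neg_le, le_div_iff₀ (by positivity), le_div_iff₀ (by positivity)]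
    constructor <;> linarith [hx'.1, hx'.2, hy'.1, hy'.2]
  have h2 : (2⁻¹ : ℝ≥0∞) ^ w.length = ENNReal.ofReal ((2 ^ w.length)⁻¹) := by
    rw [ENNReal.ofReal_inv_of_pos (by positivity), ENNReal.ofReal_pow (by norm_num), ENNReal.inv_pow]
    simp
  rw [h2, edist_dist, Real.dist_eq]
  exact ENNReal.ofReal_le_ofReal hr

/-- A subset of a unit cube that is not Hausdorff null has positive dyadic content, since the cubes
of a cover have diameters comparable to their sides. -/
lemma content_ne_zero (z : Fin n → ℤ) {s : ℝ} (hs : 0 < s) {A : Set (EuclideanSpace ℝ (Fin n))}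
    (hA : ∀ a ∈ A, ∀ i, a i - z i ∈ Set.Icc (0 : ℝ) 1) (hpos : μH[s] A ≠ 0) :
    content (sideWt s) (code z ⁻¹' A) ≠ 0 := by
  classical
  intro h0
  obtain ⟨D, hD, hdiam⟩ := ediam_code_le z
  refine hpos (hausdorffMeasure_eq_zero (κ := List (Letter n)) hs fun ε hε => ?_)
  have hDs : D ^ s ≠ ∞ := ENNReal.rpow_ne_top_of_nonneg hs.le hD
  have hlt : content (sideWt s) (code z ⁻¹' A) < ε / D ^ s := by
    rw [h0]; exact ENNReal.div_pos hε hDs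
  obtain ⟨S, hS, hw⟩ := exists_cover hlt
  refine ⟨fun w => if w ∈ S then code z '' cyl w else ∅, fun a ha => ?_, ?_⟩
  · obtain ⟨x, rfl⟩ := exists_code z (hA a ha)
    obtain ⟨w, hwS, hxw⟩ := mem_cyls.1 (hS (show x ∈ code z ⁻¹' A from ha))
    refine Set.mem_iUnion.2 ⟨w, ?_⟩
    rw [if_pos hwS]
    exact ⟨x, hxw, rfl⟩
  · calc ∑' w, ediam (if w ∈ S then code z '' cyl w else ∅) ^ s
        ≤ ∑' w, D ^ s * S.indicator (sideWt s) w := by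
          refine ENNReal.tsum_le_tsum fun w => ?_
          by_cases h : w ∈ S
          · rw [if_pos h, Set.indicator_of_mem h, sideWt, ← ENNReal.mul_rpow_of_nonneg _ _ hs.le]
            exact ENNReal.rpow_le_rpow (hdiam w) hs.le
          · simp [h, hs]
      _ = D ^ s * wt (sideWt s) S := by rw [ENNReal.tsum_mul_left, wt_eq]
      _ ≤ D ^ s * (ε / D ^ s) := by gcongr
      _ ≤ ε := ENNReal.mul_div_le

/-- A bound on the mass of dyadic cubes gives a bound on the mass of balls, as a ball of radius
`t 2⁻ᵏ` meets at most `(2 t + 2)ⁿ` dyadic cubes of side `2⁻ᵏ`. -/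
lemma measure_ball_le (z : Fin n → ℤ) {μ : Measure (ℕ → Letter n)} {s : ℝ} {C : ℝ≥0∞}
    (hμ : ∀ w, μ (cyl w) ≤ C * sideWt s w) (a : EuclideanSpace ℝ (Fin n)) (k t : ℕ) :
    μ (code z ⁻¹' closedBall a (t / 2 ^ k)) ≤
      (2 * t + 2 : ℝ≥0∞) ^ n * (C * ((2⁻¹ : ℝ≥0∞) ^ k) ^ s) := by
  classical
  -- The corners of the cubes that meet the ball lie in the integer box `∏ [lo i, hi i]`.
  let lo : Fin n → ℤ := fun i => ⌈(a i - z i) * 2 ^ k - t - 1⌉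
  let hi : Fin n → ℤ := fun i => ⌊(a i - z i) * 2 ^ k + t⌋
  let V : Finset (Fin n → ℤ) := Fintype.piFinset fun i => Finset.Icc (lo i) (hi i)
  have hcov : code z ⁻¹' closedBall a (t / 2 ^ k) ⊆
      ⋃ v ∈ V, {x | ∀ i, (corner i (hist x k) : ℤ) = v i} := by
    intro x hx
    refine Set.mem_iUnion₂.2 ⟨fun i => (corner i (hist x k) : ℤ), ?_, fun i => rfl⟩
    rw [Fintype.mem_piFinset]
    intro i
    have hd : |code z x i - a i| ≤ t / 2 ^ k := by
      have h1 : dist (code z x) a ≤ t / 2 ^ k := hx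
      have h2 := PiLp.norm_apply_le (code z x - a) i
      rw [dist_eq_norm] at h1
      simpa [Real.norm_eq_abs] using h2.trans h1
    obtain ⟨h1, h2⟩ := code_mem z x i k
    have h2k : (0 : ℝ) < 2 ^ k := by positivity
    rw [abs_le, neg_le, le_div_iff₀ h2k, le_div_iff₀ h2k] at hd
    rw [Finset.mem_Icc, Int.ceil_le, Int.le_floor]
    push_cast
    constructor <;> nlinarith [hd.1, hd.2]
  have hone : ∀ v : Fin n → ℤ, μ {x | ∀ i, (corner i (hist x k) : ℤ) = v i} ≤
      C * ((2⁻¹ : ℝ≥0∞) ^ k) ^ s := by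
    intro v
    rcases Set.eq_empty_or_nonempty {x : ℕ → Letter n | ∀ i, (corner i (hist x k) : ℤ) = v i}
      with h | ⟨x₀, hx₀⟩
    · rw [h]; simp
    · have hsub : {x | ∀ i, (corner i (hist x k) : ℤ) = v i} ⊆ cyl (hist x₀ k) := by
        intro x hx
        have : hist x k = hist x₀ k := corner_injective (by simp [length_hist]) fun i => by
          have h1 := hx i
          have h2 := hx₀ i
          omega
        rw [← this]
        exact mem_cyl_hist x k
      refine (measure_mono hsub).trans ((hμ _).trans ?_)
      rw [sideWt, length_hist]
  have hcard : (V.card : ℝ≥0∞) ≤ (2 * t + 2 : ℝ≥0∞) ^ n := by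
    have hnat : V.card ≤ (2 * t + 2) ^ n := by
      rw [Fintype.card_piFinset]
      refine (Finset.prod_le_pow_card _ _ (2 * t + 2) fun i _ => ?_).trans (by simp)
      rw [Int.card_Icc]
      have h1 : (a i - z i) * 2 ^ k - t - 1 ≤ lo i := Int.le_ceil _
      have h2 : (hi i : ℝ) ≤ (a i - z i) * 2 ^ k + t := Int.floor_le _
      have h3 : (hi i : ℝ) + 1 - lo i ≤ 2 * t + 2 := by linarith
      have h4 : hi i + 1 - lo i ≤ 2 * t + 2 := by exact_mod_cast h3
      omega
    exact_mod_cast hnat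
  calc μ (code z ⁻¹' closedBall a (t / 2 ^ k))
      ≤ ∑ v ∈ V, μ {x | ∀ i, (corner i (hist x k) : ℤ) = v i} :=
        (measure_mono hcov).trans (measure_biUnion_finset_le _ _)
    _ ≤ ∑ _v ∈ V, C * ((2⁻¹ : ℝ≥0∞) ^ k) ^ s := Finset.sum_le_sum fun v _ => hone v
    _ = V.card * (C * ((2⁻¹ : ℝ≥0∞) ^ k) ^ s) := by simp
    _ ≤ _ := by gcongr

/-- Frostman's lemma: a Borel set of Hausdorff dimension larger than `s` carries, on a compact
subset, a probability measure whose mass in a ball of radius `r` is of order at most `r ^ s`. -/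
theorem frostman {A : Set (EuclideanSpace ℝ (Fin n))} (hA : MeasurableSet A) {s : NNReal}
    (hs : 0 < s) (hdim : s < dimH A) :
    ∃ K ⊆ A, IsCompact K ∧ ∃ μ : Measure (EuclideanSpace ℝ (Fin n)), IsProbabilityMeasure μ ∧
      μ Kᶜ = 0 ∧ ∃ C : ℝ≥0∞, C ≠ ∞ ∧ ∀ a, ∀ k t : ℕ, μ (closedBall a (t / 2 ^ k)) ≤
        (2 * t + 2 : ℝ≥0∞) ^ n * (C * ((2⁻¹ : ℝ≥0∞) ^ k) ^ (s : ℝ)) := by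
  let Q : (Fin n → ℤ) → Set (EuclideanSpace ℝ (Fin n)) :=
    fun z => {a | ∀ i, a i - z i ∈ Set.Icc (0 : ℝ) 1}
  have hQ : ∀ z, IsClosed (Q z) := fun z => by
    have : Q z = ⋂ i, {a : EuclideanSpace ℝ (Fin n) | a i - (z i : ℝ) ∈ Set.Icc (0 : ℝ) 1} := by
      ext a; simp [Q]
    rw [this]
    exact isClosed_iInter fun i => isClosed_Icc.preimage
      (f := fun a : EuclideanSpace ℝ (Fin n) => a i - (z i : ℝ)) (by fun_prop)
  have hAQ : A = ⋃ z, A ∩ Q z := by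
    rw [← Set.inter_iUnion, eq_comm, Set.inter_eq_left]
    intro a _
    refine Set.mem_iUnion.2 ⟨fun i => ⌊a i⌋, fun i => ⟨?_, ?_⟩⟩
    · linarith [Int.floor_le (a i)]
    · linarith [Int.lt_floor_add_one (a i)]
  rw [hAQ, dimH_iUnion] at hdim
  obtain ⟨z, hz⟩ := lt_iSup_iff.1 hdim
  have hpos : μH[(s : ℝ)] (A ∩ Q z) ≠ 0 := by
    have := hausdorffMeasure_of_lt_dimH hz
    simp [this]
  have hc := content_ne_zero z (s := s) (by exact_mod_cast hs) (fun a ha => ha.2) hpos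
  obtain ⟨K, hKA, hK, μ, hμ, hμK, C, hC, hcyl⟩ := frostman_cyl (ρ := sideWt (s : ℝ))
    (fun w => by unfold sideWt; finiteness)
    ((hA.inter (hQ z).measurableSet).preimage (continuous_code z).measurable) hc
  have hm := (continuous_code z).measurable
  refine ⟨code z '' K, ?_, hK.image (continuous_code z), μ.map (code z),
    Measure.isProbabilityMeasure_map hm.aemeasurable, ?_, C, hC, fun a k t => ?_⟩
  · rintro _ ⟨x, hx, rfl⟩
    exact (hKA hx).1
  · rw [Measure.map_apply hm (hK.image (continuous_code z)).isClosed.isOpen_compl.measurableSet]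
    exact measure_mono_null (fun x hx hxK => hx ⟨x, hxK, rfl⟩) hμK
  · rw [Measure.map_apply hm measurableSet_closedBall]
    exact measure_ball_le z hcyl a k t

end Coding

end ProjInt

/-! ### Gaussian energies -/

namespace ProjInt

section Energy

variable {n : ℕ}

lemma integrable_gauss {b : ℝ} (hb : 0 < b) :
    Integrable (fun ξ : EuclideanSpace ℝ (Fin n) => Real.exp (-b * ‖ξ‖ ^ 2)) := by
  have h := GaussianFourier.integrable_cexp_neg_mul_sq_norm_add
    (V := EuclideanSpace ℝ (Fin n)) (b := (b : ℂ)) (by simpa using hb) 0 0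
  refine h.re.congr (Filter.Eventually.of_forall fun ξ => ?_)
  have : (-(b : ℂ) * ‖ξ‖ ^ 2 + 0 * ⟪(0 : EuclideanSpace ℝ (Fin n)), ξ⟫ : ℂ) =
      ((-b * ‖ξ‖ ^ 2 : ℝ) : ℂ) := by push_cast; ring
  simp only [this, ← Complex.ofReal_exp]
  rfl

/-- The Fourier transform of a Gaussian, integrated against a probability measure. -/
lemma integral_charFun_gauss (ν : Measure (EuclideanSpace ℝ (Fin n))) [IsProbabilityMeasure ν]
    {b : ℝ} (hb : 0 < b) :
    ∫ ξ, charFun ν ξ * (Real.exp (-b * ‖ξ‖ ^ 2) : ℂ) =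
      (((Real.pi / b) ^ (n / 2 : ℝ) * ∫ x, Real.exp (-‖x‖ ^ 2 / (4 * b)) ∂ν : ℝ) : ℂ) := by
  have hint : Integrable (fun p : EuclideanSpace ℝ (Fin n) × EuclideanSpace ℝ (Fin n) =>
      Complex.exp (⟪p.2, p.1⟫ * Complex.I) * (Real.exp (-b * ‖p.1‖ ^ 2) : ℂ))
      (volume.prod ν) := by
    have h1 : Integrable (fun p : EuclideanSpace ℝ (Fin n) × EuclideanSpace ℝ (Fin n) =>
      (Real.exp (-b * ‖p.1‖ ^ 2) : ℂ)) (volume.prod ν) :=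
      ((integrable_gauss hb).ofReal (𝕜 := ℂ)).comp_fst ν
    refine h1.bdd_mul (c := 1) (by fun_prop) (Filter.Eventually.of_forall fun p => ?_)
    rw [Complex.norm_exp_ofReal_mul_I]
  simp_rw [charFun_apply, ← integral_mul_const]
  rw [integral_integral_swap hint]
  have hinner : ∀ x : EuclideanSpace ℝ (Fin n),
      ∫ ξ : EuclideanSpace ℝ (Fin n),
        Complex.exp (⟪x, ξ⟫ * Complex.I) * (Real.exp (-b * ‖ξ‖ ^ 2) : ℂ) =
      (((Real.pi / b) ^ (n / 2 : ℝ) * Real.exp (-‖x‖ ^ 2 / (4 * b)) : ℝ) : ℂ) := by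
    intro x
    have h := GaussianFourier.integral_cexp_neg_mul_sq_norm_add
      (V := EuclideanSpace ℝ (Fin n)) (b := (b : ℂ)) (by simpa using hb) Complex.I x
    rw [finrank_euclideanSpace_fin] at h
    have hb' : 0 ≤ Real.pi / b := by positivity
    rw [Complex.ofReal_mul, Complex.ofReal_cpow hb', Complex.ofReal_exp]
    push_cast
    convert h using 2
    · funext ξ
      rw [← Complex.exp_add]
      congr 1
      ring
    · congr 1
      rw [Complex.I_sq]
      ring
  simp_rw [hinner]
  rw [integral_complex_ofReal, integral_const_mul]

/-- The smoothed `L²` norm of the Fourier transform is a Gaussian energy, hence is bounded by any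
bound on the Gaussian potentials. -/
lemma integral_charFun_sq_gauss (μ : Measure (EuclideanSpace ℝ (Fin n))) [IsProbabilityMeasure μ]
    {b M : ℝ} (hb : 0 < b) (hM : ∀ y, ∫ x, Real.exp (-‖x - y‖ ^ 2 / (4 * b)) ∂μ ≤ M) :
    ∫ ξ, ‖charFun μ ξ‖ ^ 2 * Real.exp (-b * ‖ξ‖ ^ 2) ≤ (Real.pi / b) ^ (n / 2 : ℝ) * M := by
  have hneg : Measurable (fun x : EuclideanSpace ℝ (Fin n) => -x) := measurable_neg
  -- `|μ̂|²` is the Fourier transform of the convolution of `μ` with its reflection.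
  let ρ := μ.map (fun x => -x)
  have : IsProbabilityMeasure ρ := Measure.isProbabilityMeasure_map hneg.aemeasurable
  have hρ : ∀ ξ, charFun ρ ξ = star (charFun μ ξ) := by
    intro ξ
    rw [charFun_apply, integral_map hneg.aemeasurable (by fun_prop), Complex.star_def,
      ← charFun_neg, charFun_apply]
    simp
  have h := integral_charFun_gauss (μ ∗ ρ) hb
  have hL : ∀ ξ, charFun (μ ∗ ρ) ξ * (Real.exp (-b * ‖ξ‖ ^ 2) : ℂ) =
      ((‖charFun μ ξ‖ ^ 2 * Real.exp (-b * ‖ξ‖ ^ 2) : ℝ) : ℂ) := by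
    intro ξ
    rw [charFun_conv, hρ, Complex.star_def, Complex.mul_conj, Complex.normSq_eq_norm_sq]
    push_cast
    rfl
  simp_rw [hL] at h
  rw [integral_complex_ofReal] at h
  rw [Complex.ofReal_inj.1 h]
  gcongr
  have hG : Integrable (fun x : EuclideanSpace ℝ (Fin n) => Real.exp (-‖x‖ ^ 2 / (4 * b)))
      (μ ∗ ρ) := by
    refine Integrable.of_bound (by fun_prop) 1 (Filter.Eventually.of_forall fun x => ?_)
    rw [Real.norm_eq_abs, Real.abs_exp, Real.exp_le_one_iff]
    have : 0 ≤ ‖x‖ ^ 2 / (4 * b) := by positivity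
    rw [neg_div]; linarith
  have hc : μ ∗ ρ = ρ ∗ μ := Measure.conv_comm _ _
  rw [hc] at hG ⊢
  rw [integral_conv hG]
  calc ∫ x, ∫ y, Real.exp (-‖x + y‖ ^ 2 / (4 * b)) ∂μ ∂ρ ≤ ∫ _x, M ∂ρ := by
        refine integral_mono_of_nonneg (Filter.Eventually.of_forall fun x => ?_)
          (integrable_const M) (Filter.Eventually.of_forall fun x => ?_)
        · exact integral_nonneg fun y => (Real.exp_pos _).le
        · have := hM (-x)
          simpa [add_comm] using this
    _ = M := by simp

lemma tsum_weight_ne_top (n : ℕ) : ∑' t : ℕ, ENNReal.ofReal (Real.exp 3 * Real.exp (-(t + 2))) *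
    (2 * (t + 1 : ℕ) + 2 : ℝ≥0∞) ^ n ≠ ∞ := by
  have h0 := (summable_nat_add_iff 2).2 (Real.summable_pow_mul_exp_neg_nat_mul n one_pos)
  have h1 : ∀ t : ℕ, ENNReal.ofReal (Real.exp 3 * Real.exp (-(t + 2))) *
      (2 * (t + 1 : ℕ) + 2 : ℝ≥0∞) ^ n = ENNReal.ofReal (Real.exp 3 * 2 ^ n *
        ((t + 2 : ℕ) ^ n * Real.exp (-1 * (t + 2 : ℕ)))) := by
    intro t
    have : (2 * (t + 1 : ℕ) + 2 : ℝ≥0∞) = ENNReal.ofReal (2 * (t + 2 : ℕ)) := by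
      rw [show (2 * (t + 2 : ℕ) : ℝ) = ((2 * (t + 1) + 2 : ℕ) : ℝ) by push_cast; ring,
        ENNReal.ofReal_natCast]
      push_cast; ring
    rw [this, ← ENNReal.ofReal_pow (by positivity), ← ENNReal.ofReal_mul (by positivity)]
    congr 1
    push_cast
    rw [mul_pow, neg_one_mul]
    ring
  simp_rw [h1]
  exact (h0.mul_left _).tsum_ofReal_ne_top

/-- Polynomial decay of the mass of balls bounds the Gaussian potentials. -/
lemma exists_gauss_potential_le {μ : Measure (EuclideanSpace ℝ (Fin n))} [IsProbabilityMeasure μ]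
    {C : ℝ≥0∞} (hC : C ≠ ∞) {c : ℝ} (hc : 0 < c)
    (hball : ∀ a, ∀ k t : ℕ, μ (closedBall a (t / 2 ^ k)) ≤
        (2 * t + 2 : ℝ≥0∞) ^ n * (C * ENNReal.ofReal (c⁻¹ ^ k))) :
    ∃ M : ℝ, 0 ≤ M ∧ ∀ k : ℕ, ∀ y, ∫ x, Real.exp (-(2 ^ k * ‖x - y‖) ^ 2 / 2) ∂μ ≤ M * c⁻¹ ^ k := by
  set S := ∑' t : ℕ, ENNReal.ofReal (Real.exp 3 * Real.exp (-(t + 2))) *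
    (2 * (t + 1 : ℕ) + 2 : ℝ≥0∞) ^ n with hS
  have hSfin : S ≠ ∞ := tsum_weight_ne_top n
  refine ⟨(S * C).toReal, ENNReal.toReal_nonneg, fun k y => ?_⟩
  rw [integral_eq_lintegral_of_nonneg_ae
    (Filter.Eventually.of_forall fun x => (Real.exp_pos _).le) (by fun_prop)]
  have hfin : S * C * ENNReal.ofReal (c⁻¹ ^ k) ≠ ∞ := by finiteness
  have hr : (S * C).toReal * c⁻¹ ^ k = (S * C * ENNReal.ofReal (c⁻¹ ^ k)).toReal := by
    rw [ENNReal.toReal_mul (a := S * C), ENNReal.toReal_ofReal (by positivity)]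
  rw [hr]
  refine ENNReal.toReal_mono hfin ?_
  -- With `t = ⌊u⌋`, the point lies in the ball of radius `(t + 1) / 2 ^ k`, and `-u² / 2 ≤ 1 - u`.
  have hpt : ∀ x, ENNReal.ofReal (Real.exp (-(2 ^ k * ‖x - y‖) ^ 2 / 2)) ≤
      ∑' t : ℕ, ENNReal.ofReal (Real.exp 3 * Real.exp (-(t + 2))) *
        (closedBall y ((t + 1 : ℕ) / 2 ^ k)).indicator 1 x := by
    intro x
    set u := 2 ^ k * ‖x - y‖ with hu
    have hu0 : 0 ≤ u := by positivity
    refine le_trans ?_ (ENNReal.le_tsum ⌊u⌋₊)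
    have hmem : x ∈ closedBall y ((⌊u⌋₊ + 1 : ℕ) / 2 ^ k) := by
      rw [mem_closedBall, dist_eq_norm, le_div_iff₀ (by positivity), mul_comm]
      push_cast
      exact (Nat.lt_floor_add_one u).le
    rw [Set.indicator_of_mem hmem, Pi.one_apply, mul_one, ← Real.exp_add]
    refine ENNReal.ofReal_le_ofReal (Real.exp_le_exp.2 ?_)
    have := Nat.floor_le hu0
    nlinarith [sq_nonneg (u - 1)]
  calc ∫⁻ x, ENNReal.ofReal (Real.exp (-(2 ^ k * ‖x - y‖) ^ 2 / 2)) ∂μ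
      ≤ ∫⁻ x, ∑' t : ℕ, ENNReal.ofReal (Real.exp 3 * Real.exp (-(t + 2))) *
        (closedBall y ((t + 1 : ℕ) / 2 ^ k)).indicator 1 x ∂μ := lintegral_mono hpt
    _ = ∑' t : ℕ, ENNReal.ofReal (Real.exp 3 * Real.exp (-(t + 2))) *
          μ (closedBall y ((t + 1 : ℕ) / 2 ^ k)) := by
        rw [lintegral_tsum fun t => ((measurable_one.indicator
          measurableSet_closedBall).const_mul _).aemeasurable]
        congr 1; funext t
        rw [lintegral_const_mul _ (measurable_one.indicator measurableSet_closedBall),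
          lintegral_indicator_one measurableSet_closedBall]
    _ ≤ ∑' t : ℕ, ENNReal.ofReal (Real.exp 3 * Real.exp (-(t + 2))) *
          ((2 * (t + 1 : ℕ) + 2 : ℝ≥0∞) ^ n * (C * ENNReal.ofReal (c⁻¹ ^ k))) := by
        gcongr with t
        exact hball y k (t + 1)
    _ = S * C * ENNReal.ofReal (c⁻¹ ^ k) := by
        simp_rw [← mul_assoc]
        rw [ENNReal.tsum_mul_right, ENNReal.tsum_mul_right, hS]

end Energy

end ProjInt

/-! ### Weighted integrability of the Fourier transform -/

namespace ProjInt

section Decay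

variable {n : ℕ}

lemma gauss_const (n k : ℕ) : (Real.pi / (2 * 4 ^ k)⁻¹) ^ (n / 2 : ℝ) =
    (2 * Real.pi) ^ (n / 2 : ℝ) * (2 ^ n) ^ k := by
  rw [div_inv_eq_mul, show Real.pi * (2 * 4 ^ k) = 2 * Real.pi * (2 ^ k) ^ 2 by
    rw [← pow_mul, mul_comm k 2, pow_mul]; norm_num; ring,
    Real.mul_rpow (by positivity) (by positivity)]
  congr 1
  rw [← Real.rpow_natCast, ← Real.rpow_mul (by positivity), ← pow_mul, mul_comm n k, pow_mul,
    ← Real.rpow_natCast (2 ^ k) n]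
  congr 1
  push_cast
  ring

/-- A bound for the `L²` norm of `charFun μ` smoothed at frequency `2ᵏ`. -/
lemma lintegral_charFun_sq_le (μ : Measure (EuclideanSpace ℝ (Fin n))) [IsProbabilityMeasure μ]
    {c M : ℝ} (hM : ∀ k : ℕ, ∀ y,
      ∫ x, Real.exp (-(2 ^ k * ‖x - y‖) ^ 2 / 2) ∂μ ≤ M * c⁻¹ ^ k) (k : ℕ) :
    ∫⁻ ξ, ENNReal.ofReal (‖charFun μ ξ‖ ^ 2 * Real.exp (-(2 * 4 ^ k)⁻¹ * ‖ξ‖ ^ 2)) ≤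
      ENNReal.ofReal ((2 * Real.pi) ^ (n / 2 : ℝ) * M * (2 ^ n * c⁻¹) ^ k) := by
  have hb : (0 : ℝ) < (2 * 4 ^ k)⁻¹ := by positivity
  have hint : Integrable (fun ξ => ‖charFun μ ξ‖ ^ 2 * Real.exp (-(2 * 4 ^ k)⁻¹ * ‖ξ‖ ^ 2)) := by
    refine (integrable_gauss hb).bdd_mul (c := 1) ?_ (Filter.Eventually.of_forall fun ξ => ?_)
    · exact (measurable_charFun.norm.pow_const 2).aestronglyMeasurable
    · rw [norm_pow, norm_norm]
      exact pow_le_one₀ (norm_nonneg _) (norm_charFun_le_one ξ)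
  rw [← ofReal_integral_eq_lintegral_ofReal hint (Filter.Eventually.of_forall fun ξ => by positivity)]
  refine ENNReal.ofReal_le_ofReal ?_
  refine (integral_charFun_sq_gauss μ hb (M := M * c⁻¹ ^ k) fun y => ?_).trans_eq ?_
  · convert hM k y using 4
    rw [mul_pow, ← pow_mul, mul_comm k 2, pow_mul]
    norm_num
    field_simp
    norm_num
  · rw [gauss_const, mul_pow]
    ring

lemma lintegral_gauss_eq (k : ℕ) :
    ∫⁻ ξ : EuclideanSpace ℝ (Fin n), ENNReal.ofReal (Real.exp (-(2 * 4 ^ k)⁻¹ * ‖ξ‖ ^ 2)) =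
      ENNReal.ofReal ((2 * Real.pi) ^ (n / 2 : ℝ) * (2 ^ n) ^ k) := by
  have hb : (0 : ℝ) < (2 * 4 ^ k)⁻¹ := by positivity
  rw [← ofReal_integral_eq_lintegral_ofReal (integrable_gauss hb)
    (Filter.Eventually.of_forall fun ξ => by positivity),
    GaussianFourier.integral_rexp_neg_mul_sq_norm hb, finrank_euclideanSpace_fin,
    gauss_const]

/-- Gaussian potentials decaying faster than `4⁻ᵏ` make the Fourier transform integrable away from
the origin against the reciprocal of the Jacobian of polar coordinates. On the shell `‖ξ‖ ≈ 2ᵏ` the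
proof uses `x ≤ cᵏ x² + c⁻ᵏ` for `x = ‖charFun μ ξ‖`; after the weight `2^{-k(n-1)}` both terms
contribute of order `(2 / c)ᵏ`. -/
lemma lintegral_charFun_weighted_lt_top (hn : 1 ≤ n) (μ : Measure (EuclideanSpace ℝ (Fin n)))
    [IsProbabilityMeasure μ] {c M : ℝ} (hc : 2 < c) (hM0 : 0 ≤ M) (hM : ∀ k : ℕ, ∀ y,
      ∫ x, Real.exp (-(2 ^ k * ‖x - y‖) ^ 2 / 2) ∂μ ≤ M * (c ^ 2)⁻¹ ^ k) :
    ∫⁻ ξ in {ξ | 1 ≤ ‖ξ‖}, ENNReal.ofReal (‖charFun μ ξ‖ * (‖ξ‖ ^ (n - 1))⁻¹) < ∞ := by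
  have hc0 : 0 < c := by linarith
  let G : ℝ := (2 * Real.pi) ^ (n / 2 : ℝ)
  have hG : 0 < G := by positivity
  let q : ℝ := (2 ^ (n - 1))⁻¹
  have hq : 0 < q := by positivity
  have hq2 : q * 2 ^ n = 2 := by
    obtain ⟨m, rfl⟩ := Nat.exists_eq_add_of_le' hn
    simp only [q, Nat.add_sub_cancel, pow_succ]
    field_simp
  -- `F k` dominates the integrand on the shell `2 ^ k ≤ ‖ξ‖ < 2 ^ (k + 1)`; there the Gaussian factor
  -- is at least `exp (-2)`.
  let F : ℕ → EuclideanSpace ℝ (Fin n) → ℝ≥0∞ := fun k ξ =>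
    ENNReal.ofReal (Real.exp 2 * (q * c) ^ k) *
      ENNReal.ofReal (‖charFun μ ξ‖ ^ 2 * Real.exp (-(2 * 4 ^ k)⁻¹ * ‖ξ‖ ^ 2)) +
    ENNReal.ofReal (Real.exp 2 * (q * c⁻¹) ^ k) *
      ENNReal.ofReal (Real.exp (-(2 * 4 ^ k)⁻¹ * ‖ξ‖ ^ 2))
  have hm1 : ∀ k : ℕ, Measurable fun ξ : EuclideanSpace ℝ (Fin n) =>
      ENNReal.ofReal (‖charFun μ ξ‖ ^ 2 * Real.exp (-(2 * 4 ^ k)⁻¹ * ‖ξ‖ ^ 2)) := fun k =>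
    ENNReal.measurable_ofReal.comp ((measurable_charFun.norm.pow_const 2).mul (by fun_prop))
  have hm2 : ∀ k : ℕ, Measurable fun ξ : EuclideanSpace ℝ (Fin n) =>
      ENNReal.ofReal (Real.exp (-(2 * 4 ^ k)⁻¹ * ‖ξ‖ ^ 2)) := fun k => by fun_prop
  have hpt : ∀ ξ ∈ {ξ : EuclideanSpace ℝ (Fin n) | 1 ≤ ‖ξ‖},
      ENNReal.ofReal (‖charFun μ ξ‖ * (‖ξ‖ ^ (n - 1))⁻¹) ≤ ∑' k, F k ξ := by
    intro ξ (hξ : 1 ≤ ‖ξ‖)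
    obtain ⟨k, hk1, hk2⟩ := exists_nat_pow_near hξ (one_lt_two)
    refine le_trans ?_ (ENNReal.le_tsum k)
    simp only [F]
    rw [← ENNReal.ofReal_mul (by positivity), ← ENNReal.ofReal_mul (by positivity),
      ← ENNReal.ofReal_add (by positivity) (by positivity)]
    refine ENNReal.ofReal_le_ofReal ?_
    set x := ‖charFun μ ξ‖
    have hx : 0 ≤ x := norm_nonneg _
    have h1 : (‖ξ‖ ^ (n - 1))⁻¹ ≤ q ^ k := by
      simp only [q]
      rw [inv_pow, ← pow_mul, mul_comm, pow_mul]
      gcongr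
    have h2 : 1 ≤ Real.exp 2 * Real.exp (-(2 * 4 ^ k)⁻¹ * ‖ξ‖ ^ 2) := by
      rw [← Real.exp_add, Real.one_le_exp_iff]
      have h3 : ‖ξ‖ ^ 2 ≤ 4 * 4 ^ k := by
        calc ‖ξ‖ ^ 2 ≤ (2 ^ (k + 1)) ^ 2 := by gcongr
          _ = 4 * 4 ^ k := by rw [← pow_mul, mul_comm, pow_mul]; norm_num [pow_succ, mul_comm]
      have h4 : (2 * 4 ^ k)⁻¹ * ‖ξ‖ ^ 2 ≤ 2 := by
        rw [inv_mul_le_iff₀ (by positivity)]; linarith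
      linarith
    have h5 : x ≤ c ^ k * x ^ 2 + c⁻¹ ^ k := by
      have hck : 0 < c ^ k := by positivity
      rw [inv_pow]
      have : 0 ≤ (c ^ k)⁻¹ * ((c ^ k * x - 1) ^ 2 + c ^ k * x) := by positivity
      have h6 : (c ^ k)⁻¹ * ((c ^ k * x - 1) ^ 2 + c ^ k * x) =
        c ^ k * x ^ 2 + (c ^ k)⁻¹ - x := by field_simp; ring
      linarith
    set g := Real.exp (-(2 * 4 ^ k)⁻¹ * ‖ξ‖ ^ 2)
    calc x * (‖ξ‖ ^ (n - 1))⁻¹ ≤ (c ^ k * x ^ 2 + c⁻¹ ^ k) * q ^ k * 1 := by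
          rw [mul_one]; gcongr
      _ ≤ (c ^ k * x ^ 2 + c⁻¹ ^ k) * q ^ k * (Real.exp 2 * g) := by gcongr
      _ = _ := by rw [mul_pow, mul_pow]; ring
  have hF : ∀ k, ∫⁻ ξ, F k ξ ≤ ENNReal.ofReal (Real.exp 2 * G * (M + 1) * (2 * c⁻¹) ^ k) := by
    intro k
    simp only [F]
    rw [lintegral_add_right _ ((hm2 k).const_mul _), lintegral_const_mul _ (hm1 k),
      lintegral_const_mul _ (hm2 k), lintegral_gauss_eq]
    calc _ ≤ ENNReal.ofReal (Real.exp 2 * (q * c) ^ k) *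
          ENNReal.ofReal (G * M * (2 ^ n * (c ^ 2)⁻¹) ^ k) +
          ENNReal.ofReal (Real.exp 2 * (q * c⁻¹) ^ k) * ENNReal.ofReal (G * (2 ^ n) ^ k) := by
          gcongr
          exact lintegral_charFun_sq_le μ hM k
      _ = _ := by
          rw [← ENNReal.ofReal_mul (by positivity), ← ENNReal.ofReal_mul (by positivity),
            ← ENNReal.ofReal_add (by positivity) (by positivity)]
          congr 1
          have e1 : (q * c) ^ k * (2 ^ n * (c ^ 2)⁻¹) ^ k = (2 * c⁻¹) ^ k := by
            rw [← mul_pow, show q * c * (2 ^ n * (c ^ 2)⁻¹) = q * 2 ^ n * c⁻¹ by field_simp, hq2]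
          have e2 : (q * c⁻¹) ^ k * (2 ^ n) ^ k = (2 * c⁻¹) ^ k := by
            rw [← mul_pow, show q * c⁻¹ * 2 ^ n = q * 2 ^ n * c⁻¹ by ring, hq2]
          linear_combination Real.exp 2 * G * M * e1 + Real.exp 2 * G * e2
  calc ∫⁻ ξ in {ξ | 1 ≤ ‖ξ‖}, ENNReal.ofReal (‖charFun μ ξ‖ * (‖ξ‖ ^ (n - 1))⁻¹)
      ≤ ∫⁻ ξ in {ξ | 1 ≤ ‖ξ‖}, ∑' k, F k ξ :=
        setLIntegral_mono' (measurableSet_le measurable_const measurable_norm) hpt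
    _ ≤ ∫⁻ ξ, ∑' k, F k ξ := setLIntegral_le_lintegral _ _
    _ = ∑' k, ∫⁻ ξ, F k ξ := lintegral_tsum fun k =>
        (((hm1 k).const_mul _).add ((hm2 k).const_mul _)).aemeasurable
    _ ≤ ∑' k, ENNReal.ofReal (Real.exp 2 * G * (M + 1) * (2 * c⁻¹) ^ k) := ENNReal.tsum_le_tsum hF
    _ < ∞ := by
        refine lt_top_iff_ne_top.2 (Summable.tsum_ofReal_ne_top (Summable.mul_left _ ?_))
        refine summable_geometric_of_lt_one (by positivity) ?_
        rw [← div_eq_mul_inv, div_lt_one hc0]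
        exact hc

end Decay

end ProjInt

/-! ### Polar coordinates -/

namespace ProjInt

section Polar

variable {n : ℕ}

/-- Integrability over `ℝⁿ` implies weighted integrability along
almost every ray. -/
lemma ae_lintegral_ray_lt_top {f : EuclideanSpace ℝ (Fin n) → ℝ≥0∞} (hf : Measurable f)
    (hfin : ∫⁻ ξ, f ξ < ∞) :
    ∀ᵐ e : sphere (0 : EuclideanSpace ℝ (Fin n)) 1 ∂volume.toSphere,
      ∫⁻ r in Set.Ioi (0 : ℝ), ENNReal.ofReal (r ^ (n - 1)) * f (r • (e : EuclideanSpace ℝ (Fin n))) <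
        ∞ := by
  let E := EuclideanSpace ℝ (Fin n)
  let g : sphere (0 : E) 1 × Set.Ioi (0 : ℝ) → ℝ≥0∞ := fun p => f ((p.2 : ℝ) • (p.1 : E))
  have hg : Measurable g := by
    refine hf.comp ?_
    fun_prop
  have hpol := (volume : Measure E).measurePreserving_homeomorphUnitSphereProd
  have hle : ∫⁻ p, g p ∂((volume : Measure E).toSphere.prod
      (Measure.volumeIoiPow (Module.finrank ℝ E - 1))) < ∞ := by
    rw [← hpol.lintegral_comp_emb (Homeomorph.measurableEmbedding _)]
    have h1 : ∀ a : ({0}ᶜ : Set E), g (homeomorphUnitSphereProd E a) = f a := by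
      intro a
      simp only [g]
      rw [← homeomorphUnitSphereProd_symm_apply_coe, Homeomorph.symm_apply_apply]
    simp_rw [h1]
    rw [lintegral_subtype_comap (measurableSet_singleton _).compl f]
    exact (setLIntegral_le_lintegral _ _).trans_lt hfin
  rw [lintegral_prod _ hg.aemeasurable] at hle
  filter_upwards [ae_lt_top hg.lintegral_prod_right' hle.ne] with e he
  rw [Measure.volumeIoiPow, lintegral_withDensity_eq_lintegral_mul _ (by fun_prop)
    (by fun_prop : Measurable fun y => g (e, y)), finrank_euclideanSpace_fin] at he
  rw [← lintegral_subtype_comap measurableSet_Ioi]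
  exact he

/-- The weight `‖ξ‖ ^ (n - 1)` cancels the Jacobian of polar coordinates, so that weighted
integrability of the Fourier transform yields integrability on almost every line through the
origin. -/
lemma ae_integrable_charFun (μ : Measure (EuclideanSpace ℝ (Fin n))) [IsProbabilityMeasure μ]
    (hfin : ∫⁻ ξ in {ξ | 1 ≤ ‖ξ‖}, ENNReal.ofReal (‖charFun μ ξ‖ * (‖ξ‖ ^ (n - 1))⁻¹) < ∞) :
    ∀ᵐ e : sphere (0 : EuclideanSpace ℝ (Fin n)) 1 ∂volume.toSphere,
      Integrable fun t : ℝ => charFun μ (t • (e : EuclideanSpace ℝ (Fin n))) := by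
  have hS : MeasurableSet {ξ : EuclideanSpace ℝ (Fin n) | 1 ≤ ‖ξ‖} :=
    measurableSet_le measurable_const measurable_norm
  have hm : Measurable fun ξ => ENNReal.ofReal (‖charFun μ ξ‖ * (‖ξ‖ ^ (n - 1))⁻¹) :=
    ENNReal.measurable_ofReal.comp (measurable_charFun.norm.mul (by fun_prop))
  rw [← lintegral_indicator hS] at hfin
  filter_upwards [ae_lintegral_ray_lt_top (hm.indicator hS) hfin] with e he
  have hme : Measurable fun t : ℝ => charFun μ (t • (e : EuclideanSpace ℝ (Fin n))) :=
    measurable_charFun.comp (by fun_prop)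
  have hnorm : ‖(e : EuclideanSpace ℝ (Fin n))‖ = 1 := by simp
  have h1 : IntegrableOn (fun t : ℝ => charFun μ (t • (e : EuclideanSpace ℝ (Fin n))))
      (Set.Ici 1) := by
    refine ⟨hme.aestronglyMeasurable, ?_⟩
    rw [hasFiniteIntegral_iff_norm]
    refine lt_of_le_of_lt ?_ he
    refine le_trans (setLIntegral_mono' measurableSet_Ici fun r (hr : 1 ≤ r) => ?_)
      (lintegral_mono_set (Set.Ici_subset_Ioi.2 one_pos))
    have hr0 : 0 < r := by linarith
    have hnr : ‖r • (e : EuclideanSpace ℝ (Fin n))‖ = r := by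
      rw [norm_smul, hnorm, mul_one, Real.norm_eq_abs, abs_of_pos hr0]
    rw [Set.indicator_of_mem (s := {ξ : EuclideanSpace ℝ (Fin n) | 1 ≤ ‖ξ‖})
      (show 1 ≤ ‖r • (e : EuclideanSpace ℝ (Fin n))‖ by rwa [hnr]), hnr,
      ← ENNReal.ofReal_mul (by positivity)]
    refine ENNReal.ofReal_le_ofReal (le_of_eq ?_)
    field_simp
  have h2 : IntegrableOn (fun t : ℝ => charFun μ (t • (e : EuclideanSpace ℝ (Fin n))))
      (Set.Icc 0 1) := by
    refine Integrable.of_bound hme.aestronglyMeasurable 1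
      (Filter.Eventually.of_forall fun t => norm_charFun_le_one _)
  have h3 : IntegrableOn (fun t : ℝ => charFun μ (t • (e : EuclideanSpace ℝ (Fin n))))
      (Set.Ici 0) := by
    rw [← Set.Icc_union_Ici_eq_Ici zero_le_one]
    exact h2.union h1
  have h4 : IntegrableOn (fun t : ℝ => charFun μ (t • (e : EuclideanSpace ℝ (Fin n))))
      (Set.Iic 0) := by
    -- On the negative half-line, the symmetry `charFun μ (-ξ) = conj (charFun μ ξ)` is used.
    have h5 : ∀ t : ℝ, charFun μ (t • (e : EuclideanSpace ℝ (Fin n))) =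
        star (charFun μ (-t • (e : EuclideanSpace ℝ (Fin n)))) := fun t => by
      rw [neg_smul, charFun_neg]; simp
    have h6 : IntegrableOn (fun t : ℝ => charFun μ (-t • (e : EuclideanSpace ℝ (Fin n))))
        (Set.Iic 0) := IntegrableOn.comp_neg_Iic (c := 0)
      (f := fun t : ℝ => charFun μ (t • (e : EuclideanSpace ℝ (Fin n)))) (by simpa using h3)
    refine ⟨hme.aestronglyMeasurable, ?_⟩
    have h7 := h6.2
    rw [hasFiniteIntegral_iff_norm] at h7 ⊢
    refine lt_of_le_of_lt (lintegral_mono fun t => ?_) h7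
    rw [h5, norm_star]
  rw [← integrableOn_univ, ← Set.Iic_union_Ici]
  exact h4.union h3

end Polar

end ProjInt

/-! ### Null sets of directions -/

namespace ProjInt

section Slicing

open scoped Pointwise

variable {n : ℕ}

lemma hausdorffMeasure_eq_zero_of_volume {S : Set (EuclideanSpace ℝ (Fin n))}
    (h : volume S = 0) : μH[(n : ℝ)] S = 0 := by
  obtain ⟨D, hD⟩ : ∃ D : NNReal,
      AntilipschitzWith D (WithLp.ofLp : EuclideanSpace ℝ (Fin n) → Fin n → ℝ) :=
    ⟨_, PiLp.antilipschitzWith_ofLp 2 _⟩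
  have h1 := hD.le_hausdorffMeasure_image (d := (n : ℝ)) (Nat.cast_nonneg n) S
  have h2 : μH[(n : ℝ)] ((WithLp.ofLp : EuclideanSpace ℝ (Fin n) → Fin n → ℝ) '' S) = 0 := by
    have h3 := hausdorffMeasure_pi_real (ι := Fin n)
    rw [Fintype.card_fin] at h3
    rw [h3, ← (EuclideanSpace.volume_preserving_symm_measurableEquiv_toLp (Fin n)).measure_preimage_emb
      (MeasurableEquiv.measurableEmbedding _)]
    refine measure_mono_null ?_ h
    rintro x ⟨y, hy, hxy⟩
    rwa [← show y = x from (WithLp.ofLp_injective 2) hxy]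
  rw [h2, mul_zero] at h1
  exact le_antisymm h1 zero_le

/-- One direction of Eilenberg's slicing inequality: if the cone over a subset of the sphere is
null, then the set itself is null in dimension `n - 1`. Some dilated copy of the sphere meets a
cover of the cone efficiently, since the radii at which a piece is met form a set of length at most
its diameter. -/
lemma hausdorffMeasure_eq_zero_of_cone (hn : 2 ≤ n) {N : Set (EuclideanSpace ℝ (Fin n))}
    (hN : N ⊆ sphere 0 1) {S : Set (EuclideanSpace ℝ (Fin n))}
    (hS : ∀ t ∈ Set.Ioo (0 : ℝ) 1, ∀ x ∈ N, t • x ∈ S) (h0 : volume S = 0) :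
    μH[(n : ℝ) - 1] N = 0 := by
  classical
  have hn2 : (2 : ℝ) ≤ n := by exact_mod_cast hn
  set s : ℝ := (n : ℝ) - 1 with hs
  have hs0 : 0 < s := by linarith
  refine hausdorffMeasure_eq_zero (κ := ℕ) hs0 fun ε hε => ?_
  by_cases hεt : ε = ∞
  · exact ⟨fun _ => Set.univ, fun x _ => Set.mem_iUnion.2 ⟨0, trivial⟩, hεt ▸ le_top⟩
  let η : ℝ≥0∞ := ε / 2 ^ s / 2
  have h2s : (2 : ℝ≥0∞) ^ s ≠ ∞ := by finiteness
  have h2s0 : (2 : ℝ≥0∞) ^ s ≠ 0 := by simp [ENNReal.rpow_eq_zero_iff]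
  have hη : η ≠ 0 := (ENNReal.div_pos (ENNReal.div_pos hε h2s).ne' (by norm_num)).ne'
  obtain ⟨U, hU, hsum⟩ := exists_cover_of_hausdorffMeasure_eq_zero
    (s := n) (by linarith) (hausdorffMeasure_eq_zero_of_volume h0) hη
  let R : ℕ → Set ℝ := fun i => closure (norm '' U i)
  have hR : ∀ i, volume (R i) ≤ ediam (U i) := fun i => by
    refine (Real.volume_le_diam _).trans ?_
    rw [ediam_closure]
    simpa using lipschitzWith_one_norm.ediam_image_le (U i)
  -- `F t` is the total size of the pieces that meet the sphere of radius `t`; its average over `t` is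
  -- at most the `n`-dimensional size of the cover.
  let F : ℝ → ℝ≥0∞ := fun t => ∑' i, ediam (U i) ^ s * (R i).indicator 1 t
  have hF : ∫⁻ t, F t < η := by
    simp only [F]
    rw [lintegral_tsum fun i => ((measurable_one.indicator
      isClosed_closure.measurableSet).const_mul _).aemeasurable]
    refine lt_of_le_of_lt (ENNReal.tsum_le_tsum fun i => ?_) hsum
    rw [lintegral_const_mul _ (measurable_one.indicator isClosed_closure.measurableSet),
      lintegral_indicator_one isClosed_closure.measurableSet]
    calc ediam (U i) ^ s * volume (R i) ≤ ediam (U i) ^ s * ediam (U i) ^ (1 : ℝ) := by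
          rw [ENNReal.rpow_one]; gcongr; exact hR i
      _ = ediam (U i) ^ (n : ℝ) := by
          rw [← ENNReal.rpow_add_of_nonneg _ _ hs0.le zero_le_one, hs, sub_add_cancel]
  obtain ⟨t, ⟨ht1, ht2⟩, ht⟩ : ∃ t ∈ Set.Ioo (1 / 2 : ℝ) 1, F t < 2 * η := by
    by_contra! hcon
    have h1 : ∫⁻ _t in Set.Ioo (1 / 2 : ℝ) 1, 2 * η ≤ ∫⁻ t, F t :=
      (setLIntegral_mono' measurableSet_Ioo hcon).trans (setLIntegral_le_lintegral _ _)
    rw [setLIntegral_const, Real.volume_Ioo] at h1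
    have h2 : ENNReal.ofReal (1 - 1 / 2) = 2⁻¹ := by
      rw [show (1 - 1 / 2 : ℝ) = 2⁻¹ by norm_num, ENNReal.ofReal_inv_of_pos two_pos]
      simp
    rw [h2, mul_comm 2 η, mul_assoc, ENNReal.mul_inv_cancel (by norm_num) (by norm_num),
      mul_one] at h1
    exact absurd hF (not_lt.2 h1)
  -- Dilating by `t⁻¹ ≤ 2` brings the pieces that meet the sphere of radius `t` back to the unit
  -- sphere.
  have ht0 : 0 < t := by linarith
  refine ⟨fun i => if t ∈ R i then t⁻¹ • U i else ∅, fun x hx => ?_, ?_⟩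
  · obtain ⟨i, hi⟩ := Set.mem_iUnion.1 (hU (hS t ⟨ht0, ht2⟩ x hx))
    refine Set.mem_iUnion.2 ⟨i, ?_⟩
    have hxn : ‖x‖ = 1 := by simpa using hN hx
    have : t ∈ R i := subset_closure ⟨t • x, hi, by
      rw [norm_smul, hxn, mul_one, Real.norm_eq_abs, abs_of_pos ht0]⟩
    rw [if_pos this]
    exact ⟨t • x, hi, by simp [smul_smul, ht0.ne']⟩
  · calc ∑' i, ediam (if t ∈ R i then t⁻¹ • U i else ∅) ^ s
        ≤ ∑' i, 2 ^ s * (ediam (U i) ^ s * (R i).indicator 1 t) := by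
          refine ENNReal.tsum_le_tsum fun i => ?_
          by_cases hi : t ∈ R i
          · rw [if_pos hi, Set.indicator_of_mem hi, Pi.one_apply, mul_one,
              ← ENNReal.mul_rpow_of_nonneg _ _ hs0.le]
            refine ENNReal.rpow_le_rpow ?_ hs0.le
            rw [ediam_smul₀, ENNReal.smul_def, smul_eq_mul]
            gcongr
            have h3 : ‖t⁻¹‖₊ ≤ 2 := by
              rw [← NNReal.coe_le_coe, coe_nnnorm, Real.norm_eq_abs,
                abs_of_pos (inv_pos.2 ht0)]
              push_cast
              rw [inv_le_comm₀ ht0 two_pos]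
              linarith
            exact_mod_cast h3
          · simp [hi, hs0]
      _ = 2 ^ s * F t := by rw [ENNReal.tsum_mul_left]
      _ ≤ 2 ^ s * (2 * η) := by gcongr
      _ = ε := by
          simp only [η]
          rw [ENNReal.mul_div_cancel (by norm_num) (by norm_num),
            ENNReal.mul_div_cancel h2s0 h2s]

/-- A property that holds for almost every direction in the polar decomposition of Lebesgue
measure holds `(n - 1)`-dimensionally almost everywhere on the sphere. -/
lemma ae_hausdorffMeasure_sphere (hn : 2 ≤ n) {p : EuclideanSpace ℝ (Fin n) → Prop}
    (hp : ∀ᵐ e : sphere (0 : EuclideanSpace ℝ (Fin n)) 1 ∂volume.toSphere, p e) :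
    ∀ᵐ e ∂((μH[(n : ℝ) - 1] : Measure (EuclideanSpace ℝ (Fin n))).restrict (sphere 0 1)), p e := by
  obtain ⟨N, hNsub, hNm, hN0⟩ := exists_measurable_superset_of_null (ae_iff.1 hp)
  rw [Measure.toSphere_apply' _ hNm, finrank_euclideanSpace_fin] at hN0
  have hv := (mul_eq_zero.1 hN0).resolve_left (by simp; omega)
  have hz := hausdorffMeasure_eq_zero_of_cone hn (N := Subtype.val '' N)
    (by rintro _ ⟨x, -, rfl⟩; exact x.2)
    (fun t ht x hx => Set.smul_mem_smul ht hx) hv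
  rw [ae_restrict_iff' isClosed_sphere.measurableSet, ae_iff]
  refine measure_mono_null (fun e he => ?_) hz
  have he' : e ∈ sphere (0 : EuclideanSpace ℝ (Fin n)) 1 ∧ ¬ p e := by
    simpa using he
  exact ⟨⟨e, he'.1⟩, hNsub he'.2, rfl⟩

end Slicing

end ProjInt

/-! ### Measures with integrable Fourier transform -/

namespace ProjInt

section Density

open scoped FourierTransform SchwartzMap ContDiff

/-- A probability measure with integrable Fourier transform has a continuous density `H`, stated
in the form tested by Schwartz functions. -/
lemma exists_continuous_density (ν : Measure ℝ) [IsProbabilityMeasure ν]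
    (hν : Integrable (charFun ν)) :
    ∃ H : ℝ → ℂ, Continuous H ∧ ∀ ψ : 𝓢(ℝ, ℂ), ∫ x, ψ x ∂ν = ∫ x, ψ x * H x := by
  -- `charFun` has no `2π` in the exponent, whereas `𝓕` does.
  let G : ℝ → ℂ := fun ξ => charFun ν (2 * Real.pi * ξ)
  have hG : Integrable G := hν.comp_mul_left' (by positivity)
  have hinner : Continuous fun p : ℝ × ℝ => (innerₗ ℝ) p.1 p.2 := by
    simp only [innerₗ_apply_apply]; fun_prop
  refine ⟨𝓕 G, VectorFourier.fourierIntegral_continuous Real.continuous_fourierChar hinner hG,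
    fun ψ => ?_⟩
  have h1 := VectorFourier.integral_fourierIntegral_smul_eq_flip (μ := ν) (ν := volume)
    (L := innerₗ ℝ) (f := fun _ => (1 : ℂ)) (g := (𝓕⁻ ψ : 𝓢(ℝ, ℂ))) Real.continuous_fourierChar
    hinner (integrable_const 1) (𝓕⁻ ψ : 𝓢(ℝ, ℂ)).integrable
  have h2 := VectorFourier.integral_fourierIntegral_smul_eq_flip (μ := volume) (ν := volume)
    (L := innerₗ ℝ) (f := G) (g := ψ) Real.continuous_fourierChar
    hinner hG ψ.integrable
  have h3 : ∀ ξ, VectorFourier.fourierIntegral Real.fourierChar ν (innerₗ ℝ) (fun _ => (1 : ℂ)) ξ =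
      G (-ξ) := by
    intro ξ
    simp only [G]
    rw [charFun_eq_fourierIntegral']
    congr 1
    simp
    field_simp
  have h4 : ∀ x, VectorFourier.fourierIntegral Real.fourierChar volume (innerₗ ℝ).flip
      (𝓕⁻ ψ : 𝓢(ℝ, ℂ)) x = ψ x := by
    intro x
    rw [flip_innerₗ]
    have : 𝓕 (𝓕⁻ ψ) = ψ := FourierTransform.fourier_fourierInv_eq ψ
    exact congrArg (fun f : 𝓢(ℝ, ℂ) => f x) this
  have h5 : ∀ x, VectorFourier.fourierIntegral Real.fourierChar volume (innerₗ ℝ).flip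
      ψ x = (𝓕⁻ ψ : 𝓢(ℝ, ℂ)) (-x) := by
    intro x
    rw [flip_innerₗ, SchwartzMap.fourierInv_coe, Real.fourierInv_eq_fourier_neg, neg_neg]
    rfl
  simp only [h3, h4, smul_eq_mul, one_mul] at h1
  simp only [h5, smul_eq_mul] at h2
  rw [← h1, ← integral_neg_eq_self]
  simp only [neg_neg]
  rw [← h2]
  congr 1
  funext x
  rw [mul_comm]
  rfl

/-- If a measure with integrable Fourier transform lives on a compact set, then the set contains the
nonempty open set on which the continuous density does not vanish. -/
lemma interior_nonempty_of_integrable_charFun {ν : Measure ℝ} [IsProbabilityMeasure ν]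
    (hν : Integrable (charFun ν)) {K : Set ℝ} (hK : IsCompact K) (hνK : ν Kᶜ = 0) :
    (interior K).Nonempty := by
  obtain ⟨H, hH, hrep⟩ := exists_continuous_density ν hν
  have htest : ∀ g : ℝ → ℝ, ContDiff ℝ ∞ g → HasCompactSupport g →
      ∫ x, (g x : ℂ) ∂ν = ∫ x, g x • H x := by
    intro g hg hgc
    have hgc' : HasCompactSupport fun x => (g x : ℂ) := hgc.comp_left Complex.ofReal_zero
    have hg' : ContDiff ℝ ∞ fun x => (g x : ℂ) := Complex.ofRealCLM.contDiff.comp hg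
    simpa using hrep (hgc'.toSchwartzMap hg')
  have hzero : ∀ᵐ x, x ∈ Kᶜ → H x = 0 := by
    refine hK.isClosed.isOpen_compl.ae_eq_zero_of_integral_contDiff_smul_eq_zero
      (hH.locallyIntegrable.locallyIntegrableOn _) fun g hg hgc hgs => ?_
    rw [← htest g hg hgc]
    refine integral_eq_zero_of_ae ?_
    have : ∀ᵐ x ∂ν, x ∈ K := hνK
    filter_upwards [this] with x hx
    have : g x = 0 := image_eq_zero_of_notMem_tsupport fun h => hgs h hx
    simp [this]
  have hopen : IsOpen {x | H x ≠ 0} := isOpen_ne_fun hH continuous_const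
  have hsub : {x | H x ≠ 0} ⊆ K := by
    intro x hx
    by_contra hxK
    have hO : IsOpen ({x | H x ≠ 0} ∩ Kᶜ) := hopen.inter hK.isClosed.isOpen_compl
    have h0 : volume ({x | H x ≠ 0} ∩ Kᶜ) = 0 := by
      refine measure_mono_null (fun y hy => ?_) (ae_iff.1 hzero)
      have h1 : H y ≠ 0 := hy.1
      have h2 : y ∉ K := hy.2
      simp [h1, h2]
    exact (hO.measure_pos volume ⟨x, hx, hxK⟩).ne' h0
  -- If `H` vanished identically, a bump function equal to `1` on `K` would give `ν` mass zero.
  obtain ⟨x, hx⟩ : ∃ x, H x ≠ 0 := by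
    by_contra! hcon
    obtain ⟨r, hr⟩ := hK.isBounded.subset_closedBall 0
    let φ : ContDiffBump (0 : ℝ) := ⟨|r| + 1, |r| + 2, by positivity, by linarith⟩
    have h1 := htest φ φ.contDiff φ.hasCompactSupport
    simp only [hcon, smul_zero, integral_zero] at h1
    have h2 : ∫ x, (φ x : ℂ) ∂ν = ∫ _x, (1 : ℂ) ∂ν := by
      refine integral_congr_ae ?_
      have : ∀ᵐ x ∂ν, x ∈ K := hνK
      filter_upwards [this] with x hx
      have : x ∈ closedBall (0 : ℝ) φ.rIn :=
        closedBall_subset_closedBall (by simp only [φ]; linarith [le_abs_self r]) (hr hx)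
      simp [φ.one_of_mem_closedBall this]
    rw [h2] at h1
    simp at h1
  exact ⟨x, interior_maximal hsub hopen hx⟩

end Density

end ProjInt

/-! ### Projections -/

namespace ProjInt

/-- If `μ` lives on a compact subset of `A` and its characteristic function is integrable along the
line `ℝe`, then the image of `μ` under `⟪e, ·⟫` has an integrable Fourier transform, so `P_e A` has
non-empty interior. -/
theorem interior_projection_nonempty {n : ℕ} {A K : Set (EuclideanSpace ℝ (Fin n))} (hKA : K ⊆ A)
    (hK : IsCompact K) {μ : Measure (EuclideanSpace ℝ (Fin n))} [IsProbabilityMeasure μ]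
    (hμK : μ Kᶜ = 0) {e : EuclideanSpace ℝ (Fin n)}
    (he : Integrable fun t : ℝ => charFun μ (t • e)) :
    (interior ((fun x => ⟪e, x⟫) '' A)).Nonempty := by
  have hcont : Continuous fun x : EuclideanSpace ℝ (Fin n) => ⟪e, x⟫ := by fun_prop
  let ν : Measure ℝ := μ.map fun x => ⟪e, x⟫
  have : IsProbabilityMeasure ν :=
    Measure.isProbabilityMeasure_map hcont.measurable.aemeasurable
  have hν : Integrable (charFun ν) := by
    have : charFun ν = fun t : ℝ => charFun μ (t • e) := by
      funext t
      rw [charFun_apply, integral_map hcont.measurable.aemeasurable (by fun_prop), charFun_apply]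
      simp [inner_smul_right, real_inner_comm]
    rwa [this]
  have hKc := hK.image hcont
  have hνK : ν ((fun x => ⟪e, x⟫) '' K)ᶜ = 0 := by
    rw [Measure.map_apply hcont.measurable hKc.isClosed.isOpen_compl.measurableSet]
    exact measure_mono_null (fun x hx hxK => hx ⟨x, hxK, rfl⟩) hμK
  exact (ProjInt.interior_nonempty_of_integrable_charFun hν hKc hνK).mono
    (interior_mono (Set.image_mono hKA))

end ProjInt

/-- Projection theorem, part (3): if `A ⊆ ℝⁿ` is a Borel set with `dim A > 2`,
then for surface-measure almost every unit vector `e ∈ S^{n-1}`, the projection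
`P_e(A) = {e·x : x ∈ A} ⊆ ℝ` has non-empty interior. -/
theorem projection_nonempty_interior (n : ℕ) (hn : 2 ≤ n)
    (A : Set (EuclideanSpace ℝ (Fin n))) (hA : MeasurableSet A)
    (hdim : 2 < dimH A) :
    ∀ᵐ e ∂((μH[(n : ℝ) - 1] :
        Measure (EuclideanSpace ℝ (Fin n))).restrict (sphere 0 1)),
      (interior ((fun x => ⟪e, x⟫) '' A)).Nonempty := by
  obtain ⟨s, hs2, hsA⟩ := ENNReal.lt_iff_exists_nnreal_btwn.1 hdim
  have hs2' : (2 : ℝ) < s := by exact_mod_cast hs2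
  have hs0 : 0 < s := by
    have : (0 : ℝ) < s := by linarith
    exact_mod_cast this
  obtain ⟨K, hKA, hK, μ, hμ, hμK, C, hC, hball⟩ := ProjInt.frostman hA hs0 hsA
  -- `c` is the square root of the Frostman rate `2 ^ s`; the energy series has ratio `2 / c`.
  let c : ℝ := 2 ^ ((s : ℝ) / 2)
  have hc : 2 < c := by
    calc (2 : ℝ) = 2 ^ (1 : ℝ) := (Real.rpow_one 2).symm
      _ < c := Real.rpow_lt_rpow_of_exponent_lt one_lt_two (by linarith)
  have hc2 : c ^ 2 = 2 ^ (s : ℝ) := by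
    rw [← Real.rpow_natCast, ← Real.rpow_mul zero_le_two]
    congr 1
    push_cast
    ring
  have hrate : ∀ k : ℕ, ((2⁻¹ : ℝ≥0∞) ^ k) ^ (s : ℝ) = ENNReal.ofReal ((c ^ 2)⁻¹ ^ k) := by
    intro k
    rw [hc2, ← ENNReal.rpow_natCast, ← ENNReal.rpow_mul, mul_comm, ENNReal.rpow_mul,
      ENNReal.rpow_natCast, ENNReal.inv_rpow, ENNReal.ofReal_pow (by positivity),
      ENNReal.ofReal_inv_of_pos (by positivity), ← ENNReal.ofReal_rpow_of_pos two_pos,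
      ENNReal.ofReal_ofNat]
  simp_rw [hrate] at hball
  obtain ⟨M, hM0, hM⟩ := ProjInt.exists_gauss_potential_le hC
    (by positivity : (0 : ℝ) < c ^ 2) hball
  have hfin := ProjInt.lintegral_charFun_weighted_lt_top (by omega) μ hc hM0 hM
  have hline := ProjInt.ae_integrable_charFun μ hfin
  have hae : ∀ᵐ e ∂((μH[(n : ℝ) - 1] : Measure (EuclideanSpace ℝ (Fin n))).restrict (sphere 0 1)),
      Integrable fun t : ℝ => charFun μ (t • e) :=
    ProjInt.ae_hausdorffMeasure_sphere hn hline
  refine hae.mono fun e he => ?_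
  exact ProjInt.interior_projection_nonempty hKA hK hμK he
end

section
/- Let n ≥ 2 and let A ⊂ ℝⁿ be a Borel set with dim A ≤ 1. Then dim {e ∈ S^{n-1} : dim P_e(A) < dim A} ≤ n - 2 + dim A. -/
/-!
The proof is the energy argument of Kaufman. By countable stability of the dimension it is enough to
bound, for each rational `t < dim A`, the set of directions with `dim P_e(A) < t`. Choose `t'` with
`t < t' < dim A` and a Frostman measure `μ` on `A` with exponent larger than `t'`. If the `t`-energy of
the projection of `μ` in direction `e` is finite, then `dim P_e(A) ≥ t` (`Kaufman.le_dimH_of_energy`),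
so the exceptional directions lie in the set `F` of unit vectors for which this energy is infinite.
Suppose that `F` had dimension larger than `n - 2 + dim A`. Since `F` is Borel, it carries a Frostman
measure `ν` with exponent `n - 2 + t'`. For such a measure, the strip of unit vectors `e` with
`|⟪e, v⟫| ≤ ρ` has measure `O((ρ / ‖v‖) ^ t')` (`Kaufman.exists_measure_strip_le`): in the sphere it is
the neighbourhood of an `(n - 2)`-dimensional great sphere. Summing over dyadic `ρ` and using Fubini,
the energy of the projections is `ν`-integrable (`Kaufman.lintegral_projEnergy_ne_top`), which
contradicts that it is infinite on `F`.

Most of the work goes into Frostman measures on Borel sets (`Kaufman.exists_frostman`). These are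
obtained from an `ℓ²` capacity: the capacity of `B` is the least norm of `g ∈ ℓ²`, `g ≥ 0`, with
`∑ g j * ψ j ≥ 1` on `B`, where the `ψ j` are bump functions on dyadic cubes, weighted by
`2 ^ (k * t / 2)` at scale `2 ^ (-k)`.

* A set of capacity zero has zero Hausdorff measure in every dimension larger than `t`
  (`Kaufman.hausdorffMeasure_eq_zero_of_cap`).
* The uniform convexity of `ℓ²` makes the capacity continuous along increasing unions
  (`Kaufman.cap_iUnion_le`), and the argument of Choquet then finds, inside an analytic set of positive
  capacity, a compact set of positive capacity (`Kaufman.exists_compact_cap_pos`).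
* By the Hahn-Banach and Riesz-Markov-Kakutani theorems, a compact set of positive capacity carries a
  nonzero measure with `∑ (∫ ψ j) ^ 2 ≤ 1` (`Kaufman.exists_measure_of_cap_pos`). This is a bound for
  the discrete `t`-energy, and restricting the measure to a set where the corresponding potential is
  bounded gives the Frostman condition.
-/

open MeasureTheory Metric
open scoped ENNReal RealInnerProductSpace

namespace Kaufman

open Set Filter Topology
open scoped NNReal

/-! ### Capacities in ℓ² -/

section Capacity

variable {X J : Type*}

/-- The potential `∑ j, g j * ψ j x` of a coefficient sequence `g ∈ ℓ²(J)`, as an extended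
nonnegative number. It is only used for nonnegative `g` and `ψ`; negative terms count as `0`. -/
noncomputable def pot (ψ : J → X → ℝ) (g : lp (fun _ : J => ℝ) 2) (x : X) : ℝ≥0∞ :=
  ∑' j, ENNReal.ofReal (g j * ψ j x)

/-- `g` is admissible for `B` if its coefficients are nonnegative and its potential is at least `1`
on `B`. -/
structure Adm (ψ : J → X → ℝ) (B : Set X) (g : lp (fun _ : J => ℝ) 2) : Prop where
  nonneg : ∀ j, 0 ≤ g j
  one_le : ∀ x ∈ B, 1 ≤ pot ψ g x

/-- The capacity of `B`: the least `ℓ²` norm of a sequence admissible for `B`, and `∞` if there is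
none. -/
noncomputable def cap (ψ : J → X → ℝ) (B : Set X) : ℝ≥0∞ :=
  ⨅ (g : lp (fun _ : J => ℝ) 2) (_ : Adm ψ B g), ENNReal.ofReal ‖g‖

lemma cap_le {ψ : J → X → ℝ} {B : Set X} {g : lp (fun _ : J => ℝ) 2} (h : Adm ψ B g) :
    cap ψ B ≤ ENNReal.ofReal ‖g‖ := iInf₂_le g h

lemma exists_of_cap_lt {ψ : J → X → ℝ} {B : Set X} {c : ℝ≥0∞} (h : cap ψ B < c) :
    ∃ g, Adm ψ B g ∧ ENNReal.ofReal ‖g‖ < c := by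
  simpa [cap, iInf_lt_iff] using h

lemma Adm.mono {ψ : J → X → ℝ} {B B' : Set X} {g : lp (fun _ : J => ℝ) 2} (h : Adm ψ B g)
    (hB : B' ⊆ B) : Adm ψ B' g := ⟨h.nonneg, fun x hx => h.one_le x (hB hx)⟩

lemma cap_mono {ψ : J → X → ℝ} {B B' : Set X} (hB : B' ⊆ B) : cap ψ B' ≤ cap ψ B :=
  le_iInf₂ fun _ hg => cap_le (hg.mono hB)

lemma pot_mono {ψ : J → X → ℝ} (hψ : ∀ j x, 0 ≤ ψ j x) {g g' : lp (fun _ : J => ℝ) 2}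
    (h : ∀ j, g j ≤ g' j) (x : X) : pot ψ g x ≤ pot ψ g' x :=
  ENNReal.tsum_le_tsum fun j =>
    ENNReal.ofReal_le_ofReal (mul_le_mul_of_nonneg_right (h j) (hψ j x))

lemma pot_add {ψ : J → X → ℝ} (hψ : ∀ j x, 0 ≤ ψ j x) {g g' : lp (fun _ : J => ℝ) 2}
    (hg : ∀ j, 0 ≤ g j) (hg' : ∀ j, 0 ≤ g' j) (x : X) :
    pot ψ (g + g') x = pot ψ g x + pot ψ g' x := by
  rw [pot, pot, pot, ← ENNReal.tsum_add]
  refine tsum_congr fun j => ?_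
  rw [← ENNReal.ofReal_add (mul_nonneg (hg j) (hψ j x)) (mul_nonneg (hg' j) (hψ j x))]
  simp [add_mul]

lemma pot_smul {ψ : J → X → ℝ} {g : lp (fun _ : J => ℝ) 2} {c : ℝ} (hc : 0 ≤ c) (x : X) :
    pot ψ (c • g) x = ENNReal.ofReal c * pot ψ g x := by
  rw [pot, pot, ← ENNReal.tsum_mul_left]
  refine tsum_congr fun j => ?_
  rw [← ENNReal.ofReal_mul hc]
  simp [mul_assoc]

lemma norm_sq_eq (g : lp (fun _ : J => ℝ) 2) : ‖g‖ ^ 2 = ∑' j, (g j) ^ 2 := by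
  have := lp.norm_rpow_eq_tsum (p := 2) (by norm_num) g
  simpa using this

lemma summable_sq (g : lp (fun _ : J => ℝ) 2) : Summable fun j => (g j) ^ 2 := by
  have := (lp.memℓp g).summable (by norm_num)
  simpa using this

/-- A sequence in `ℓ²` that tends to `0` fast enough is dominated, coordinate by coordinate, by a
single element of small norm. -/
lemma exists_dominating (d : ℕ → lp (fun _ : J => ℝ) 2) {δ : ℝ} (hδ : 0 ≤ δ)
    (hd : ∀ m, ‖d m‖ ^ 2 ≤ δ ^ 2 / 2 / 2 ^ m) :
    ∃ D : lp (fun _ : J => ℝ) 2, (∀ m j, |d m j| ≤ D j) ∧ ‖D‖ ≤ δ := by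
  have hs : Summable fun m => ‖d m‖ ^ 2 :=
    Summable.of_nonneg_of_le (fun _ => by positivity) hd (summable_geometric_two' (δ ^ 2))
  have hp : Summable fun p : ℕ × J => (d p.1 p.2) ^ 2 := by
    rw [summable_prod_of_nonneg (fun _ => sq_nonneg _)]
    exact ⟨fun m => summable_sq (d m), by simpa only [← norm_sq_eq] using hs⟩
  have hp' : Summable fun p : J × ℕ => (d p.2 p.1) ^ 2 := hp.prod_symm
  have h1 := (summable_prod_of_nonneg (f := fun p : J × ℕ => (d p.2 p.1) ^ 2)
    (fun _ => sq_nonneg _)).1 hp'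
  have hnn : ∀ j, 0 ≤ ∑' m, (d m j) ^ 2 := fun j => tsum_nonneg fun _ => sq_nonneg _
  have hmem : Memℓp (fun j => √(∑' m, (d m j) ^ 2)) 2 := by
    apply memℓp_gen
    simpa [Real.sq_sqrt (hnn _)] using h1.2
  refine ⟨⟨_, hmem⟩, fun m j => ?_, ?_⟩
  · change _ ≤ √(∑' m, (d m j) ^ 2)
    rw [← Real.sqrt_sq_eq_abs]
    exact Real.sqrt_le_sqrt ((h1.1 j).le_tsum m fun _ _ => sq_nonneg _)
  · refine abs_le_of_sq_le_sq' ?_ hδ |>.2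
    rw [norm_sq_eq]
    calc ∑' j, (√(∑' m, (d m j) ^ 2)) ^ 2 = ∑' j, ∑' m, (d m j) ^ 2 := by
          simp [Real.sq_sqrt (hnn _)]
      _ = ∑' m, ∑' j, (d m j) ^ 2 := Summable.tsum_comm (f := fun m j => (d m j) ^ 2) hp
      _ = ∑' m, ‖d m‖ ^ 2 := by simp only [norm_sq_eq]
      _ ≤ ∑' m : ℕ, δ ^ 2 / 2 / 2 ^ m :=
          hs.tsum_le_tsum hd (summable_geometric_two' (δ ^ 2))
      _ = δ ^ 2 := tsum_geometric_two' _

/-- The capacity is continuous along increasing unions of arbitrary sets. By the parallelogram law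
and the admissibility of midpoints, near-minimizers `g m` for `A m` form a Cauchy sequence; the limit
of the `g m`, enlarged by a small element dominating the errors along a subsequence, is admissible for
the union. -/
lemma cap_iUnion_le {ψ : J → X → ℝ} (hψ : ∀ j x, 0 ≤ ψ j x) {A : ℕ → Set X} (hA : Monotone A)
    {c : ℝ} (hc : 0 ≤ c) (h : ∀ m, cap ψ (A m) ≤ ENNReal.ofReal c) :
    cap ψ (⋃ m, A m) ≤ ENNReal.ofReal c := by
  set a : ℕ → ℝ := fun m => (cap ψ (A m)).toReal with ha
  have hfin : ∀ m, cap ψ (A m) ≠ ∞ := fun m => ne_top_of_le_ne_top ENNReal.ofReal_ne_top (h m)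
  have ha0 : ∀ m, 0 ≤ a m := fun m => ENNReal.toReal_nonneg
  have hac : ∀ m, a m ≤ c := fun m => ENNReal.toReal_le_of_le_ofReal hc (h m)
  have hmono : Monotone a := fun m l hml =>
    ENNReal.toReal_mono (hfin l) (cap_mono (hA hml))
  have hlow : ∀ m g, Adm ψ (A m) g → a m ≤ ‖g‖ := fun m g hg =>
    ENNReal.toReal_le_of_le_ofReal (norm_nonneg g) (cap_le hg)
  obtain ⟨L, hL⟩ : ∃ L, Tendsto a atTop (𝓝 L) :=
    ⟨_, tendsto_atTop_ciSup hmono ⟨c, by rintro _ ⟨m, rfl⟩; exact hac m⟩⟩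
  have haL : ∀ m, a m ≤ L := hmono.ge_of_tendsto hL
  have hLc : L ≤ c := le_of_tendsto' hL hac
  have hL0 : 0 ≤ L := (ha0 0).trans (haL 0)
  have hex : ∀ m : ℕ, ∃ g, Adm ψ (A m) g ∧ ‖g‖ < a m + 1 / ((m : ℝ) + 1) := by
    intro m
    have hlt : cap ψ (A m) < ENNReal.ofReal (a m + 1 / ((m : ℝ) + 1)) := by
      rw [ENNReal.lt_ofReal_iff_toReal_lt (hfin m)]
      have : (0 : ℝ) < 1 / ((m : ℝ) + 1) := by positivity
      change a m < _
      linarith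
    obtain ⟨g, hg, hlt⟩ := exists_of_cap_lt hlt
    exact ⟨g, hg, (ENNReal.ofReal_lt_ofReal_iff_of_nonneg (norm_nonneg _)).1 hlt⟩
  choose g hg hgn using hex
  -- the midpoint of two admissible elements is admissible
  have hmid : ∀ m l, m ≤ l → 2 * a m ≤ ‖g m + g l‖ := by
    intro m l hml
    have hadm : Adm ψ (A m) ((1 / 2 : ℝ) • (g m + g l)) := by
      refine ⟨fun j => ?_, fun x hx => ?_⟩
      · have h1 := (hg m).nonneg j
        have h2 := (hg l).nonneg j
        simp only [lp.coeFn_smul, lp.coeFn_add, Pi.smul_apply, Pi.add_apply, smul_eq_mul]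
        positivity
      · rw [pot_smul (by norm_num), pot_add hψ (hg m).nonneg (hg l).nonneg]
        calc (1 : ℝ≥0∞) = ENNReal.ofReal (1 / 2) * (1 + 1) := by
              rw [one_add_one_eq_two, ← ENNReal.ofReal_ofNat 2, ← ENNReal.ofReal_mul (by norm_num)]
              norm_num
          _ ≤ _ := by
              gcongr
              · exact (hg m).one_le x hx
              · exact (hg l).one_le x (hA hml hx)
    have := hlow m _ hadm
    rw [norm_smul] at this
    norm_num at this
    linarith
  have hcauchy : CauchySeq g := by
    rw [Metric.cauchySeq_iff]
    intro ε hε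
    obtain ⟨η, hη, hη1⟩ : ∃ η : ℝ, 0 < η ∧ 16 * (L + 1) * η < ε ^ 2 ∧ η ≤ 1 := by
      refine ⟨min 1 (ε ^ 2 / (32 * (L + 1))), by positivity, ?_, min_le_left _ _⟩
      calc 16 * (L + 1) * min 1 (ε ^ 2 / (32 * (L + 1)))
          ≤ 16 * (L + 1) * (ε ^ 2 / (32 * (L + 1))) := by gcongr; exact min_le_right _ _
        _ = ε ^ 2 / 2 := by field_simp; norm_num
        _ < ε ^ 2 := by have : 0 < ε ^ 2 := by positivity
                        linarith
    have h1 : ∀ᶠ m in atTop, L - η < a m := hL.eventually (lt_mem_nhds (by linarith))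
    have h2 : ∀ᶠ m : ℕ in atTop, 1 / ((m : ℝ) + 1) < η :=
      tendsto_one_div_add_atTop_nhds_zero_nat.eventually (gt_mem_nhds hη)
    obtain ⟨N, hN⟩ := eventually_atTop.1 (h1.and h2)
    have key : ∀ m l, N ≤ m → m ≤ l → dist (g m) (g l) < ε := by
      intro m l hm hml
      have e1 := parallelogram_law_with_norm ℝ (g m) (g l)
      have e2 := hmid m l hml
      have e3 := hgn m
      have e4 := hgn l
      have e5 := hN m hm
      have e6 := hN l (hm.trans hml)
      have e7 := haL m
      have e8 := haL l
      have n1 := norm_nonneg (g m)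
      have n2 := norm_nonneg (g l)
      have b1 : ‖g m‖ * ‖g m‖ ≤ (L + η) * (L + η) := by
        apply mul_self_le_mul_self n1; linarith [e5.2]
      have b2 : ‖g l‖ * ‖g l‖ ≤ (L + η) * (L + η) := by
        apply mul_self_le_mul_self n2; linarith [e6.2]
      have b3 : 4 * (L * L - 2 * L * η) ≤ ‖g m + g l‖ * ‖g m + g l‖ := by
        have h3 : (2 * a m) * (2 * a m) ≤ ‖g m + g l‖ * ‖g m + g l‖ :=
          mul_self_le_mul_self (by linarith [ha0 m]) e2
        have h4 : L * L - 2 * L * η ≤ a m * a m := by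
          rcases le_or_gt (L - η) 0 with h0 | h0
          · nlinarith [mul_self_nonneg (a m)]
          · nlinarith [mul_self_le_mul_self h0.le e5.1.le, mul_self_nonneg η]
        linarith
      rw [dist_eq_norm]
      refine lt_of_pow_lt_pow_left₀ 2 hε.le ?_
      nlinarith [e1, b1, b2, b3, hη1.1, hη1.2, mul_nonneg hη.le hη.le, hη.le]
    refine ⟨N, fun m hm l hl => ?_⟩
    rcases le_total m l with hml | hml
    · exact key m l hm hml
    · rw [dist_comm]; exact key l m hl hml
  obtain ⟨g₀, hg₀⟩ := cauchySeq_tendsto_of_complete hcauchy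
  have hg₀n : ‖g₀‖ ≤ L := by
    have h1 : Tendsto (fun m : ℕ => a m + 1 / ((m : ℝ) + 1)) atTop (𝓝 (L + 0)) :=
      hL.add tendsto_one_div_add_atTop_nhds_zero_nat
    rw [add_zero] at h1
    exact le_of_tendsto_of_tendsto' hg₀.norm h1 fun m => (hgn m).le
  refine ENNReal.le_of_forall_pos_le_add fun δ hδ _ => ?_
  have hδ' : (0 : ℝ) < δ := by exact_mod_cast hδ
  have hsub : ∀ m : ℕ, ∃ l, m ≤ l ∧ ‖g l - g₀‖ ^ 2 ≤ (δ : ℝ) ^ 2 / 2 / 2 ^ m := by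
    intro m
    have h1 : Tendsto (fun l => ‖g l - g₀‖ ^ 2) atTop (𝓝 0) := by
      have := (tendsto_iff_norm_sub_tendsto_zero.1 hg₀).pow 2
      simpa using this
    have h2 : ∀ᶠ l in atTop, ‖g l - g₀‖ ^ 2 < (δ : ℝ) ^ 2 / 2 / 2 ^ m :=
      h1.eventually (gt_mem_nhds (by positivity))
    obtain ⟨l, hl⟩ := (h2.and (eventually_ge_atTop m)).exists
    exact ⟨l, hl.2, hl.1.le⟩
  choose φ hφ hφn using hsub
  obtain ⟨D, hD, hDn⟩ := exists_dominating (fun m => g (φ m) - g₀) hδ'.le hφn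
  have hdom : ∀ m j, g (φ m) j ≤ (g₀ + D) j := by
    intro m j
    have := (abs_le.1 (hD m j)).2
    simp only [lp.coeFn_sub, lp.coeFn_add, Pi.sub_apply, Pi.add_apply] at this ⊢
    linarith
  have hadm : Adm ψ (⋃ m, A m) (g₀ + D) := by
    refine ⟨fun j => ((hg _).nonneg j).trans (hdom 0 j), fun x hx => ?_⟩
    obtain ⟨m, hm⟩ := mem_iUnion.1 hx
    exact ((hg (φ m)).one_le x (hA (hφ m) hm)).trans (pot_mono hψ (hdom m) x)
  calc cap ψ (⋃ m, A m) ≤ ENNReal.ofReal ‖g₀ + D‖ := cap_le hadm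
    _ ≤ ENNReal.ofReal (c + δ) := by
        apply ENNReal.ofReal_le_ofReal
        linarith [norm_add_le g₀ D]
    _ = ENNReal.ofReal c + δ := by
        rw [ENNReal.ofReal_add hc hδ'.le, ENNReal.ofReal_coe_nnreal]

/-! ### Capacitability of analytic sets -/

lemma lowerSemicontinuous_pot [TopologicalSpace X] {ψ : J → X → ℝ} (hc : ∀ j, Continuous (ψ j))
    (g : lp (fun _ : J => ℝ) 2) : LowerSemicontinuous (pot ψ g) :=
  lowerSemicontinuous_tsum fun j =>
    (ENNReal.continuous_ofReal.comp (continuous_const.mul (hc j))).lowerSemicontinuous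

/-- If an open set of `ℕ → ℕ` contains the compact box `∏ i, [0, b i]`, then it contains a box in
which only finitely many of the constraints are kept. -/
lemma exists_truncated_subset {V : Set (ℕ → ℕ)} (hV : IsOpen V) (b : ℕ → ℕ)
    (hb : {z : ℕ → ℕ | ∀ i, z i ≤ b i} ⊆ V) :
    ∃ k, {z : ℕ → ℕ | ∀ i < k, z i ≤ b i} ⊆ V := by
  by_contra! hcon
  simp only [Set.not_subset] at hcon
  choose z hz hzV using hcon
  set B : ℕ → ℕ := fun i => b i + ∑ k ∈ Finset.range (i + 1), z k i with hB
  have hcomp : IsCompact (Set.univ.pi fun i => Set.Iic (B i)) :=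
    isCompact_univ_pi fun i => (Set.finite_Iic (B i)).isCompact
  have hmem : ∀ k, z k ∈ Set.univ.pi fun i => Set.Iic (B i) := by
    intro k i _
    rcases lt_or_ge i k with h | h
    · exact (hz k i h).trans (Nat.le_add_right _ _)
    · refine le_trans ?_ (Nat.le_add_left _ _)
      exact Finset.single_le_sum (f := fun k => z k i) (fun _ _ => Nat.zero_le _)
        (Finset.mem_range.2 (by omega))
  obtain ⟨w, -, φ, hφ, hlim⟩ := hcomp.tendsto_subseq hmem
  have hwb : w ∈ {z : ℕ → ℕ | ∀ i, z i ≤ b i} := by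
    intro i
    have h1 : Tendsto (fun m => z (φ m) i) atTop (𝓝 (w i)) := (tendsto_pi_nhds.1 hlim) i
    refine le_of_tendsto h1 ?_
    filter_upwards [eventually_gt_atTop i] with m hm
    exact hz (φ m) i (hm.trans_le (hφ.id_le m))
  have hwV : w ∈ Vᶜ := hV.isClosed_compl.mem_of_tendsto hlim (Eventually.of_forall fun m => hzV _)
  exact hwV (hb hwb)

/-- Choquet capacitability, in the qualitative form needed here: an analytic set of positive capacity
contains a compact set of positive capacity. The set is the image of the Baire space, and the
coordinates are bounded one after the other while the capacity of the image stays above a fixed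
positive level. -/
lemma exists_compact_cap_pos [TopologicalSpace X] {ψ : J → X → ℝ}
    (hψ : ∀ j x, 0 ≤ ψ j x) (hc : ∀ j, Continuous (ψ j)) {A : Set X} (hA : AnalyticSet A)
    (hpos : cap ψ A ≠ 0) : ∃ K ⊆ A, IsCompact K ∧ cap ψ K ≠ 0 := by
  rw [AnalyticSet] at hA
  rcases hA with rfl | ⟨f, hf, rfl⟩
  · refine ⟨∅, Subset.rfl, isCompact_empty, hpos⟩
  obtain ⟨c, hc0, hcA⟩ : ∃ c : ℝ, 0 < c ∧ ENNReal.ofReal c < cap ψ (range f) := by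
    obtain ⟨c, hc0, hcA⟩ := ENNReal.lt_iff_exists_nnreal_btwn.1 (pos_iff_ne_zero.2 hpos)
    exact ⟨c, by exact_mod_cast hc0, by simpa using hcA⟩
  -- boxes whose first `k` sides are truncated
  let N : (k : ℕ) → (ℕ → ℕ) → Set (ℕ → ℕ) := fun k b => {z | ∀ i < k, z i ≤ b i}
  have step : ∀ k b, ENNReal.ofReal c < cap ψ (f '' N k b) →
      ∃ m, ENNReal.ofReal c < cap ψ (f '' N (k + 1) (Function.update b k m)) := by
    intro k b hkb
    by_contra! hcon
    have hU : f '' N k b = ⋃ m, f '' N (k + 1) (Function.update b k m) := by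
      rw [← image_iUnion]
      congr 1
      ext z
      simp only [N, mem_iUnion, mem_ofPred_eq]
      constructor
      · intro hz
        refine ⟨z k, fun i hi => ?_⟩
        rcases eq_or_ne i k with rfl | hik
        · simp
        · simpa [hik] using hz i (by omega)
      · rintro ⟨m, hz⟩ i hi
        simpa [hi.ne] using hz i (by omega)
    have hmono : Monotone fun m => f '' N (k + 1) (Function.update b k m) := by
      intro m m' hmm
      refine image_mono fun z hz i hi => (hz i hi).trans ?_
      rcases eq_or_ne i k with rfl | hik
      · simpa using hmm
      · simp [hik]
    rw [hU] at hkb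
    exact absurd (cap_iUnion_le hψ hmono hc0.le hcon) (not_le.2 hkb)
  choose! next hnext using step
  let s : ℕ → (ℕ → ℕ) := fun k =>
    Nat.rec (fun _ => 0) (fun k b => Function.update b k (next k b)) k
  have hs_succ : ∀ k, s (k + 1) = Function.update (s k) k (next k (s k)) := fun k => rfl
  have hs : ∀ k, ENNReal.ofReal c < cap ψ (f '' N k (s k)) := by
    intro k
    induction k with
    | zero => simpa [N] using hcA
    | succ k ih => rw [hs_succ]; exact hnext k _ ih
  set b : ℕ → ℕ := fun i => s (i + 1) i with hb
  have hsb : ∀ k, ∀ i < k, s k i = b i := by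
    intro k
    induction k with
    | zero => intro i hi; omega
    | succ k ih =>
      intro i hi
      rcases eq_or_ne i k with rfl | hik
      · rfl
      · rw [hs_succ, Function.update_of_ne hik]
        exact ih i (by omega)
  have hN : ∀ k, N k (s k) = N k b := by
    intro k
    ext z
    exact forall₂_congr fun i hi => by rw [hsb k i hi]
  have hKc : IsCompact {z : ℕ → ℕ | ∀ i, z i ≤ b i} := by
    have : {z : ℕ → ℕ | ∀ i, z i ≤ b i} = Set.univ.pi fun i => Set.Iic (b i) := by
      ext z; simp only [Set.mem_pi, mem_ofPred_eq, mem_univ, mem_Iic, true_imp_iff]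
    rw [this]
    exact isCompact_univ_pi fun i => (Set.finite_Iic (b i)).isCompact
  refine ⟨f '' {z : ℕ → ℕ | ∀ i, z i ≤ b i}, image_subset_range _ _, hKc.image hf, ?_⟩
  intro h0
  have h2 : cap ψ (f '' {z : ℕ → ℕ | ∀ i, z i ≤ b i}) < ENNReal.ofReal (c / 2) := by
    rw [h0]; exact ENNReal.ofReal_pos.2 (half_pos hc0)
  obtain ⟨g, hg, hgn⟩ := exists_of_cap_lt h2
  have hgn' := (ENNReal.ofReal_lt_ofReal_iff_of_nonneg (norm_nonneg _)).1 hgn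
  have hpot : ∀ x, pot ψ ((2 : ℝ) • g) x = 2 * pot ψ g x := fun x => by
    rw [pot_smul (by norm_num)]; simp
  -- the condition `pot > 1` is open, so it persists on one of the truncated boxes
  have hV : IsOpen (f ⁻¹' (pot ψ ((2 : ℝ) • g) ⁻¹' Ioi 1)) :=
    ((lowerSemicontinuous_pot hc _).isOpen_preimage 1).preimage hf
  obtain ⟨k, hk⟩ := exists_truncated_subset hV b (by
    intro z hz
    have := hg.one_le (f z) (mem_image_of_mem f hz)
    simp only [mem_preimage, mem_Ioi, hpot]
    calc (1 : ℝ≥0∞) < 2 * 1 := by norm_num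
      _ ≤ _ := by gcongr)
  have hadm : Adm ψ (f '' N k (s k)) ((2 : ℝ) • g) := by
    refine ⟨fun j => ?_, ?_⟩
    · have := hg.nonneg j
      simp only [lp.coeFn_smul, Pi.smul_apply, smul_eq_mul]
      positivity
    · rw [hN]
      rintro _ ⟨z, hz, rfl⟩
      exact le_of_lt (hk hz)
  refine absurd ((hs k).trans_le (cap_le hadm)) (not_lt.2 (ENNReal.ofReal_le_ofReal ?_))
  rw [norm_smul]
  norm_num
  linarith

/-! ### Measures dual to the capacity -/

/-- On a compact space, the whole space admits an admissible sequence: a strictly positive `g ∈ ℓ²` has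
a positive lower semicontinuous potential, which is therefore bounded away from `0`. -/
lemma exists_pot_ge_one [TopologicalSpace X] [CompactSpace X] [Nonempty X] [Countable J]
    {ψ : J → X → ℝ} (hc : ∀ j, Continuous (ψ j))
    (hpos : ∀ x, ∃ j, 0 < ψ j x) : ∃ g, Adm ψ univ g := by
  obtain ⟨_⟩ := nonempty_encodable J
  obtain ⟨ε, hε, C, hC, -⟩ := posSumOfEncodable (zero_lt_one (α := ℝ)) J
  have hmem : Memℓp (fun j => √(ε j)) 2 := by
    apply memℓp_gen
    simpa [Real.sq_sqrt (hε _).le] using hC.summable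
  let g : lp (fun _ : J => ℝ) 2 := ⟨_, hmem⟩
  have hg : ∀ j, 0 < g j := fun j => Real.sqrt_pos.2 (hε j)
  have hpot : ∀ x, pot ψ g x ≠ 0 := by
    intro x h0
    obtain ⟨j, hj⟩ := hpos x
    have := ENNReal.tsum_eq_zero.1 h0 j
    rw [ENNReal.ofReal_eq_zero] at this
    exact absurd (mul_pos (hg j) hj) (not_lt.2 this)
  obtain ⟨x₀, -, hx₀⟩ := LowerSemicontinuousOn.exists_isMinOn (s := univ) univ_nonempty
    isCompact_univ ((lowerSemicontinuous_pot hc g).lowerSemicontinuousOn _)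
  obtain ⟨c, hc0, hc1⟩ : ∃ c : ℝ, 0 < c ∧ 1 ≤ ENNReal.ofReal c * pot ψ g x₀ := by
    by_cases htop : pot ψ g x₀ = ∞
    · exact ⟨1, one_pos, by simp [htop]⟩
    · have h0 : 0 < (pot ψ g x₀).toReal := ENNReal.toReal_pos (hpot x₀) htop
      refine ⟨_, inv_pos.2 h0, ?_⟩
      calc (1 : ℝ≥0∞) = ENNReal.ofReal ((pot ψ g x₀).toReal⁻¹ * (pot ψ g x₀).toReal) := by
            rw [inv_mul_cancel₀ h0.ne', ENNReal.ofReal_one]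
        _ ≤ _ := by
            rw [ENNReal.ofReal_mul (inv_pos.2 h0).le, ENNReal.ofReal_toReal htop]
  refine ⟨c • g, fun j => ?_, fun x _ => ?_⟩
  · simpa using mul_nonneg hc0.le (hg j).le
  · rw [pot_smul hc0.le]
    refine hc1.trans ?_
    gcongr
    exact isMinOn_iff.1 hx₀ x (mem_univ x)

open CompactlySupported in
/-- Duality on a compact space. The functional `p h = inf ‖g‖`, over `g ≥ 0` with `h ≤ pot ψ g`, is
sublinear and `p 1` is the capacity of the space. A linear functional dominated by `p` and equal to
`p 1` at `1` (Hahn-Banach) is positive, hence given by a measure (Riesz-Markov-Kakutani), and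
domination by `p` says that the sequence of integrals of the `ψ j` has `ℓ²` norm at most `1`. -/
lemma exists_measure_of_cap_pos_aux [TopologicalSpace X] [CompactSpace X] [T2Space X]
    [MeasurableSpace X] [BorelSpace X] [Countable J]
    {ψ : J → X → ℝ} (hψ : ∀ j x, 0 ≤ ψ j x) (hc : ∀ j, Continuous (ψ j))
    (hpos : ∀ x, ∃ j, 0 < ψ j x) (hcap : cap ψ univ ≠ 0) :
    ∃ μ : Measure X, IsFiniteMeasure μ ∧ μ ≠ 0 ∧
      ∀ F : Finset J, ∑ j ∈ F, (∫ x, ψ j x ∂μ) ^ 2 ≤ 1 := by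
  have hne : Nonempty X := by
    by_contra hemp
    rw [not_nonempty_iff] at hemp
    refine hcap (le_antisymm ?_ zero_le)
    have : Adm ψ (univ : Set X) 0 := ⟨fun j => by simp, fun x => hemp.elim x⟩
    simpa using cap_le this
  obtain ⟨g₁, hg₁⟩ := exists_pot_ge_one hc hpos
  let S : C_c(X, ℝ) → Set ℝ := fun h =>
    {r | ∃ g : lp (fun _ : J => ℝ) 2, (∀ j, 0 ≤ g j) ∧
      (∀ x, ENNReal.ofReal (h x) ≤ pot ψ g x) ∧ ‖g‖ = r}
  have hSbdd : ∀ h, BddBelow (S h) := fun h =>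
    ⟨0, by rintro _ ⟨g, -, -, rfl⟩; exact norm_nonneg g⟩
  have hSne : ∀ h, (S h).Nonempty := by
    intro h
    obtain ⟨M, hM⟩ : ∃ M, ∀ x, ‖h x‖ ≤ M := by
      obtain ⟨M, hM⟩ := isCompact_univ.exists_bound_of_continuousOn h.continuous.continuousOn
      exact ⟨M, fun x => hM x (mem_univ x)⟩
    have hM0 : 0 ≤ M := (norm_nonneg _).trans (hM hne.some)
    refine ⟨_, M • g₁, fun j => ?_, fun x => ?_, rfl⟩
    · simpa using mul_nonneg hM0 (hg₁.nonneg j)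
    · rw [pot_smul hM0]
      calc ENNReal.ofReal (h x) ≤ ENNReal.ofReal M * 1 := by
            rw [mul_one]; exact ENNReal.ofReal_le_ofReal ((le_abs_self _).trans (hM x))
        _ ≤ _ := by gcongr; exact hg₁.one_le x (mem_univ x)
  let p : C_c(X, ℝ) → ℝ := fun h => sInf (S h)
  have hp_le : ∀ h (g : lp (fun _ : J => ℝ) 2), (∀ j, 0 ≤ g j) →
      (∀ x, ENNReal.ofReal (h x) ≤ pot ψ g x) → p h ≤ ‖g‖ := fun h g h1 h2 =>
    csInf_le (hSbdd h) ⟨g, h1, h2, rfl⟩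
  have hp0 : ∀ h, 0 ≤ p h := fun h =>
    le_csInf (hSne h) (by rintro _ ⟨g, -, -, rfl⟩; exact norm_nonneg g)
  have hp_add : ∀ h h', p (h + h') ≤ p h + p h' := by
    intro h h'
    refine le_of_forall_pos_le_add fun ε hε => ?_
    obtain ⟨_, ⟨g, g1, g2, rfl⟩, g3⟩ :=
      exists_lt_of_csInf_lt (hSne h) (show sInf (S h) < p h + ε / 2 by change p h < _; linarith)
    obtain ⟨_, ⟨g', g1', g2', rfl⟩, g3'⟩ :=
      exists_lt_of_csInf_lt (hSne h') (show sInf (S h') < p h' + ε / 2 by change p h' < _; linarith)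
    have := hp_le (h + h') (g + g') (fun j => by simpa using add_nonneg (g1 j) (g1' j))
      (fun x => by
        rw [pot_add hψ g1 g1']
        exact ENNReal.ofReal_add_le.trans (add_le_add (g2 x) (g2' x)))
    linarith [norm_add_le g g']
  have hp_hom_le : ∀ c : ℝ, 0 < c → ∀ h, p (c • h) ≤ c * p h := by
    intro c hc0 h
    refine le_of_forall_pos_le_add fun ε hε => ?_
    obtain ⟨_, ⟨g, g1, g2, rfl⟩, g3⟩ :=
      exists_lt_of_csInf_lt (hSne h) (show sInf (S h) < p h + ε / c by
        change p h < _; linarith [div_pos hε hc0])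
    have := hp_le (c • h) (c • g) (fun j => by simpa using mul_nonneg hc0.le (g1 j))
      (fun x => by
        rw [pot_smul hc0.le]
        simp only [CompactlySupportedContinuousMap.coe_smul, Pi.smul_apply, smul_eq_mul]
        rw [ENNReal.ofReal_mul hc0.le]
        gcongr
        exact g2 x)
    rw [norm_smul, Real.norm_of_nonneg hc0.le] at this
    have h3 : c * ‖g‖ ≤ c * (p h + ε / c) := by gcongr
    have h4 : c * (p h + ε / c) = c * p h + ε := by field_simp
    linarith
  have hp_hom : ∀ c : ℝ, 0 < c → ∀ h, p (c • h) = c * p h := by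
    intro c hc0 h
    refine le_antisymm (hp_hom_le c hc0 h) ?_
    have := hp_hom_le c⁻¹ (inv_pos.2 hc0) (c • h)
    rw [smul_smul, inv_mul_cancel₀ hc0.ne', one_smul] at this
    calc c * p h ≤ c * (c⁻¹ * p (c • h)) := by gcongr
      _ = p (c • h) := by field_simp
  have hp_nonpos : ∀ h : C_c(X, ℝ), (∀ x, h x ≤ 0) → p h ≤ 0 := fun h hh => by
    simpa using hp_le h 0 (fun j => by simp) (fun x => by simp [ENNReal.ofReal_of_nonpos (hh x)])
  let e : C(X, ℝ) ≃ C_c(X, ℝ) := CompactlySupportedContinuousMap.continuousMapEquiv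
  let one : C_c(X, ℝ) := e 1
  have hone : ∀ x, one x = 1 := fun x => rfl
  have hp1 : 0 < p one := by
    have hfin : cap ψ univ ≠ ∞ := ne_top_of_le_ne_top ENNReal.ofReal_ne_top (cap_le hg₁)
    refine (ENNReal.toReal_pos hcap hfin).trans_le (le_csInf (hSne one) ?_)
    rintro _ ⟨g, g1, g2, rfl⟩
    refine ENNReal.toReal_le_of_le_ofReal (norm_nonneg g) (cap_le ⟨g1, fun x _ => ?_⟩)
    simpa [hone] using g2 x
  have hone0 : one ≠ 0 := fun h => by
    have := hone hne.some
    rw [h] at this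
    simp at this
  obtain ⟨L, hL1, hL2⟩ := exists_extension_of_le_sublinear
    (LinearPMap.mkSpanSingleton one (p one) hone0) p hp_hom hp_add (by
      rintro ⟨x, hx⟩
      obtain ⟨c, rfl⟩ := Submodule.mem_span_singleton.1 hx
      rw [LinearPMap.mkSpanSingleton'_apply]
      simp only [smul_eq_mul, RingHom.id_apply]
      rcases le_or_gt c 0 with hc0 | hc0
      · exact (mul_nonpos_of_nonpos_of_nonneg hc0 hp1.le).trans (hp0 _)
      · exact (hp_hom c hc0 one).ge)
  have hLone : L one = p one := by
    have h1 := hL1 ⟨one, Submodule.mem_span_singleton_self one⟩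
    exact h1.trans (LinearPMap.mkSpanSingleton'_apply_self _ _ _ _)
  let Λ : C_c(X, ℝ) →ₚ[ℝ] ℝ := PositiveLinearMap.mk₀ L (by
    intro h hh
    have h1 := (hL2 (-h)).trans (hp_nonpos (-h) fun x => by simpa using hh x)
    rw [map_neg] at h1
    linarith)
  refine ⟨RealRMK.rieszMeasure Λ, inferInstance, ?_, ?_⟩
  · intro h0
    have h1 := RealRMK.integral_rieszMeasure Λ one
    rw [h0, integral_zero_measure] at h1
    have h2 : Λ one = p one := hLone
    linarith
  · intro F
    let Ψ : J → C_c(X, ℝ) := fun j => e ⟨ψ j, hc j⟩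
    have hint : ∀ j, ∫ x, ψ j x ∂(RealRMK.rieszMeasure Λ) = L (Ψ j) := fun j =>
      RealRMK.integral_rieszMeasure Λ (Ψ j)
    simp only [hint]
    have hLnn : ∀ j, 0 ≤ L (Ψ j) := fun j => by
      rw [← hint]; exact integral_nonneg (hψ j)
    classical
    set T := ∑ j ∈ F, (L (Ψ j)) ^ 2 with hT
    have hT0 : 0 ≤ T := Finset.sum_nonneg fun _ _ => sq_nonneg _
    -- test `L ≤ p` on the combination of the `ψ j` with coefficients `L (ψ j)`
    let w : J → ℝ := fun j => if j ∈ F then L (Ψ j) else 0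
    have hw : ∀ j, 0 ≤ w j := fun j => by
      by_cases hj : j ∈ F <;> simp [w, hj, hLnn]
    have hmem : Memℓp w 2 := by
      apply memℓp_gen
      refine summable_of_ne_finset_zero (s := F) fun j hj => ?_
      simp [w, hj]
    let g : lp (fun _ : J => ℝ) 2 := ⟨w, hmem⟩
    have hgn : ‖g‖ ^ 2 = T := by
      rw [norm_sq_eq, tsum_eq_sum (s := F) fun j hj => by change w j ^ 2 = 0; simp [w, hj]]
      refine Finset.sum_congr rfl fun j hj => ?_
      change w j ^ 2 = _
      simp [w, hj]
    have hle : T ≤ ‖g‖ := by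
      have h1 := (hL2 (∑ j ∈ F, L (Ψ j) • Ψ j)).trans (hp_le _ g hw fun x => ?_)
      · rw [map_sum] at h1
        simpa [hT, sq] using h1
      · have h2 : (∑ j ∈ F, L (Ψ j) • Ψ j) x = ∑ j ∈ F, w j * ψ j x := by
          rw [CompactlySupportedContinuousMap.sum_apply]
          refine Finset.sum_congr rfl fun j hj => ?_
          simp only [w, hj, if_true]
          rfl
        rw [h2, ENNReal.ofReal_sum_of_nonneg fun j _ => mul_nonneg (hw j) (hψ j x)]
        exact ENNReal.sum_le_tsum F
    nlinarith [norm_nonneg g]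

/-- A compact set of positive capacity carries a nonzero finite measure whose integrals against the
`ψ j` are square summable with sum at most `1`. -/
lemma exists_measure_of_cap_pos [TopologicalSpace X] [T2Space X]
    [MeasurableSpace X] [BorelSpace X] [Countable J]
    {ψ : J → X → ℝ} (hψ : ∀ j x, 0 ≤ ψ j x) (hc : ∀ j, Continuous (ψ j))
    (hpos : ∀ x, ∃ j, 0 < ψ j x) {K : Set X} (hK : IsCompact K) (hcap : cap ψ K ≠ 0) :
    ∃ μ : Measure X, IsFiniteMeasure μ ∧ μ ≠ 0 ∧ μ Kᶜ = 0 ∧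
      ∀ F : Finset J, ∑ j ∈ F, (∫ x, ψ j x ∂μ) ^ 2 ≤ 1 := by
  have : CompactSpace K := isCompact_iff_compactSpace.mp hK
  have hcap' : cap (fun j (x : K) => ψ j x) univ ≠ 0 := by
    refine fun h => hcap (le_antisymm (le_trans ?_ h.le) zero_le)
    refine le_iInf₂ fun g hg => cap_le ⟨hg.nonneg, fun x hx => ?_⟩
    exact hg.one_le ⟨x, hx⟩ (mem_univ _)
  obtain ⟨μ, h1, h2, h3⟩ := exists_measure_of_cap_pos_aux (ψ := fun j (x : K) => ψ j x)
    (fun j x => hψ j x) (fun j => (hc j).comp continuous_subtype_val) (fun x => hpos x) hcap'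
  have hmeas : Measurable (Subtype.val : K → X) := measurable_subtype_coe
  refine ⟨μ.map Subtype.val, inferInstance, ?_, ?_, fun F => ?_⟩
  · rwa [Ne, Measure.map_eq_zero_iff hmeas.aemeasurable]
  · rw [Measure.map_apply hmeas hK.measurableSet.compl]
    simp
  · convert h3 F using 3 with j hj
    exact integral_map hmeas.aemeasurable (hc j).aestronglyMeasurable

end Capacity

/-! ### Frostman measures -/

section Frostman

variable {n : ℕ}

/-- A continuous version of the indicator of a cube of side comparable to `2 ^ (-k)` around the
lattice point `2 ^ (-k) * i`, where `j = (k, i)`: it is `1` where `2 ^ k * x` is within `2` of `i` and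
`0` where it is at distance at least `3`, in the sup norm. -/
noncomputable def bump (j : ℕ × (Fin n → ℤ)) (x : EuclideanSpace ℝ (Fin n)) : ℝ :=
  min 1 (max 0 (3 - ‖(fun l => 2 ^ j.1 * x l - j.2 l : Fin n → ℝ)‖))

lemma continuous_bump (j : ℕ × (Fin n → ℤ)) : Continuous (bump j) := by
  unfold bump
  fun_prop

lemma bump_nonneg (j : ℕ × (Fin n → ℤ)) (x : EuclideanSpace ℝ (Fin n)) : 0 ≤ bump j x :=
  le_min zero_le_one (le_max_left _ _)

lemma bump_le_one (j : ℕ × (Fin n → ℤ)) (x : EuclideanSpace ℝ (Fin n)) : bump j x ≤ 1 :=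
  min_le_left _ _

lemma bump_eq_one {j : ℕ × (Fin n → ℤ)} {x : EuclideanSpace ℝ (Fin n)}
    (h : ∀ l, |2 ^ j.1 * x l - j.2 l| ≤ 2) : bump j x = 1 := by
  have h1 : ‖(fun l => 2 ^ j.1 * x l - j.2 l : Fin n → ℝ)‖ ≤ 2 :=
    (pi_norm_le_iff_of_nonneg (by norm_num)).2 h
  exact min_eq_left (le_max_of_le_right (by linarith))

lemma abs_lt_of_bump_ne_zero {j : ℕ × (Fin n → ℤ)} {x : EuclideanSpace ℝ (Fin n)}
    (h : bump j x ≠ 0) (l : Fin n) : |2 ^ j.1 * x l - j.2 l| < 3 := by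
  by_contra! hcon
  have h1 := hcon.trans (norm_le_pi_norm (fun l => 2 ^ j.1 * x l - j.2 l : Fin n → ℝ) l)
  refine h ?_
  rw [bump, max_eq_left (by linarith)]
  exact min_eq_right zero_le_one

/-- A set of `7 ^ n` lattice points that contains all `i` for which `bump (k, i) x` does not vanish. -/
noncomputable def nearby (k : ℕ) (x : EuclideanSpace ℝ (Fin n)) : Finset (Fin n → ℤ) :=
  Fintype.piFinset fun l => Finset.Icc (⌊2 ^ k * x l⌋ - 3) (⌊2 ^ k * x l⌋ + 3)

lemma card_nearby (k : ℕ) (x : EuclideanSpace ℝ (Fin n)) : (nearby k x).card = 7 ^ n := by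
  rw [nearby, Fintype.card_piFinset]
  have : ∀ z : ℤ, (z + 3 + 1 - (z - 3)).toNat = 7 := fun z => by
    rw [show z + 3 + 1 - (z - 3) = 7 by ring]; rfl
  simp [this]

lemma mem_nearby {k : ℕ} {i : Fin n → ℤ} {x : EuclideanSpace ℝ (Fin n)}
    (h : bump (k, i) x ≠ 0) : i ∈ nearby k x := by
  rw [nearby, Fintype.mem_piFinset]
  intro l
  have h1 := abs_lt.1 (abs_lt_of_bump_ne_zero h l)
  simp only at h1
  have h2 := Int.floor_le (2 ^ k * x l)
  have h3 := Int.lt_floor_add_one (2 ^ k * x l)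
  rw [Finset.mem_Icc]
  constructor
  · have : (⌊2 ^ k * x l⌋ : ℝ) < (i l + 3 : ℤ) := by push_cast; linarith
    have := Int.cast_lt.1 this
    omega
  · have : (i l : ℝ) < (⌊2 ^ k * x l⌋ + 4 : ℤ) := by push_cast; linarith
    have := Int.cast_lt.1 this
    omega

lemma ediam_bump_le (j : ℕ × (Fin n → ℤ)) :
    ediam {x : EuclideanSpace ℝ (Fin n) | bump j x ≠ 0} ≤ ENNReal.ofReal (6 * √n / 2 ^ j.1) := by
  refine ediam_le fun x hx y hy => ?_
  rw [edist_dist]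
  refine ENNReal.ofReal_le_ofReal ?_
  rw [EuclideanSpace.dist_eq]
  have h : ∀ l, dist (x l) (y l) ^ 2 ≤ (6 / 2 ^ j.1) ^ 2 := by
    intro l
    have h1 := abs_lt.1 (abs_lt_of_bump_ne_zero hx l)
    have h2 := abs_lt.1 (abs_lt_of_bump_ne_zero hy l)
    refine pow_le_pow_left₀ dist_nonneg ?_ 2
    have hk : (0 : ℝ) < 2 ^ j.1 := by positivity
    rw [Real.dist_eq, le_div_iff₀ hk]
    have h3 : |x l - y l| * 2 ^ j.1 = |(x l - y l) * 2 ^ j.1| := by rw [abs_mul, abs_of_pos hk]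
    rw [h3, abs_le]
    constructor <;> nlinarith
  calc √(∑ l, dist (x l) (y l) ^ 2) ≤ √(n * (6 / 2 ^ j.1) ^ 2) := by
        refine Real.sqrt_le_sqrt ((Finset.sum_le_sum fun l _ => h l).trans ?_)
        simp
    _ = 6 * √n / 2 ^ j.1 := by
        rw [Real.sqrt_mul (Nat.cast_nonneg n), Real.sqrt_sq (by positivity)]
        ring

/-- The bumps with weight `β ^ k` at scale `2 ^ (-k)`. With `β = 2 ^ (t / 2)`, square summability of
`∫ wbump β j ∂μ` bounds the discrete `t`-energy of `μ`. -/
noncomputable def wbump (β : ℝ) (j : ℕ × (Fin n → ℤ)) (x : EuclideanSpace ℝ (Fin n)) : ℝ :=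
  β ^ j.1 * bump j x

/-- Where the potential of `g` is at least `1`, some coefficient of a bump not vanishing at `x` is
large: at most `7 ^ n` bumps per scale are nonzero at `x`, so otherwise the potential would be bounded
by a geometric series of ratio `β / γ` and sum `1 / 2`. -/
lemma exists_large_coeff {β γ : ℝ} (hβ : 0 < β) (hγ : β < γ) :
    ∃ c : ℝ, 0 < c ∧ ∀ (g : lp (fun _ : ℕ × (Fin n → ℤ) => ℝ) 2) (x : EuclideanSpace ℝ (Fin n)),
      1 ≤ pot (wbump β) g x → ∃ j, bump j x ≠ 0 ∧ c / γ ^ j.1 < g j := by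
  have hγ0 : 0 < γ := hβ.trans hγ
  set q := β / γ with hq
  have hq0 : 0 < q := div_pos hβ hγ0
  have hq1 : q < 1 := (div_lt_one hγ0).2 hγ
  set c : ℝ := (1 - q) / (2 * 7 ^ n) with hc
  have hc0 : 0 < c := div_pos (by linarith) (by positivity)
  refine ⟨c, hc0, fun g x hx => ?_⟩
  by_contra! hcon
  have hterm : ∀ k i, ENNReal.ofReal (g (k, i) * wbump β (k, i) x) ≤ ENNReal.ofReal (c * q ^ k) := by
    intro k i
    refine ENNReal.ofReal_le_ofReal ?_
    by_cases h0 : bump (k, i) x = 0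
    · simp only [wbump, h0, mul_zero]; positivity
    · have h1 := hcon _ h0
      simp only at h1
      have h2 := bump_nonneg (k, i) x
      have h3 := bump_le_one (k, i) x
      calc g (k, i) * wbump β (k, i) x ≤ c / γ ^ k * (β ^ k * bump (k, i) x) := by
            unfold wbump; gcongr
        _ ≤ c / γ ^ k * (β ^ k * 1) := by gcongr
        _ = c * q ^ k := by rw [hq, div_pow]; ring
  have hlevel : ∀ k, ∑' i, ENNReal.ofReal (g (k, i) * wbump β (k, i) x)
      ≤ ENNReal.ofReal ((1 - q) / 2 * q ^ k) := by
    intro k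
    rw [tsum_eq_sum (s := nearby k x)]
    · calc ∑ i ∈ nearby k x, ENNReal.ofReal (g (k, i) * wbump β (k, i) x)
          ≤ ∑ i ∈ nearby k x, ENNReal.ofReal (c * q ^ k) := Finset.sum_le_sum fun i _ => hterm k i
        _ = ENNReal.ofReal ((1 - q) / 2 * q ^ k) := by
            rw [Finset.sum_const, card_nearby, ← ENNReal.ofReal_nsmul]
            congr 1
            rw [hc, nsmul_eq_mul]
            push_cast
            field_simp
    · intro i hi
      have : bump (k, i) x = 0 := by
        by_contra h; exact hi (mem_nearby h)
      simp [wbump, this]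
  have hsum : pot (wbump β) g x ≤ ENNReal.ofReal (1 / 2) := by
    rw [pot, ENNReal.tsum_prod (f := fun k i => ENNReal.ofReal (g (k, i) * wbump β (k, i) x))]
    refine (ENNReal.tsum_le_tsum hlevel).trans ?_
    rw [← ENNReal.ofReal_tsum_of_nonneg]
    · refine ENNReal.ofReal_le_ofReal (le_of_eq ?_)
      rw [tsum_mul_left, tsum_geometric_of_lt_one hq0.le hq1]
      have : 1 - q ≠ 0 := by linarith
      field_simp
    · intro k
      exact mul_nonneg (by linarith) (by positivity)
    · exact (summable_geometric_of_lt_one hq0.le hq1).mul_left _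
  have := hx.trans hsum
  rw [ENNReal.one_le_ofReal] at this
  norm_num at this

/-- Sets of zero capacity for the weight `2 ^ (t / 2)` are null for the Hausdorff measure of every
dimension `u > t`: the supports of the bumps with a large coefficient in an admissible sequence of
small norm form a cover with small `u`-sum. -/
lemma hausdorffMeasure_eq_zero_of_cap {B : Set (EuclideanSpace ℝ (Fin n))} {t u : ℝ} (ht : 0 < t)
    (htu : t < u) (hB : cap (wbump (2 ^ (t / 2))) B = 0) : μH[u] B = 0 := by
  have hu : 0 < u := ht.trans htu
  set γ : ℝ := 2 ^ (u / 2) with hγ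
  have hγ0 : 0 < γ := Real.rpow_pos_of_pos two_pos _
  have hγ2 : ∀ k : ℕ, ((2 : ℝ) ^ k) ^ u = (γ ^ k) ^ 2 := by
    intro k
    rw [hγ, ← Real.rpow_natCast, ← Real.rpow_natCast, ← Real.rpow_natCast, ← Real.rpow_mul two_pos.le,
      ← Real.rpow_mul two_pos.le, ← Real.rpow_mul two_pos.le]
    congr 1
    push_cast
    ring
  obtain ⟨c, hc0, hc⟩ := exists_large_coeff (n := n) (β := 2 ^ (t / 2)) (γ := γ)
    (Real.rpow_pos_of_pos two_pos _)
    (Real.rpow_lt_rpow_of_exponent_lt one_lt_two (by linarith))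
  have hex : ∀ m : ℕ, ∃ g, Adm (wbump (2 ^ (t / 2))) B g ∧ ‖g‖ < 1 / ((m : ℝ) + 1) := by
    intro m
    have h0 : (0 : ℝ) < 1 / ((m : ℝ) + 1) := by positivity
    obtain ⟨g, hg, hgn⟩ := exists_of_cap_lt (c := ENNReal.ofReal (1 / ((m : ℝ) + 1)))
      (by rw [hB]; exact ENNReal.ofReal_pos.2 h0)
    exact ⟨g, hg, (ENNReal.ofReal_lt_ofReal_iff_of_nonneg (norm_nonneg _)).1 hgn⟩
  choose g hg hgn using hex
  classical
  let T : ℕ → ℕ × (Fin n → ℤ) → Set (EuclideanSpace ℝ (Fin n)) := fun m j =>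
    if c / γ ^ j.1 < g m j then {x | bump j x ≠ 0} else ∅
  set M : ℝ := (6 * √n) ^ u / c ^ 2 with hM
  have hM0 : 0 ≤ M := by positivity
  have hT : ∀ m j, ediam (T m j) ^ u ≤ ENNReal.ofReal (M * g m j ^ 2) := by
    intro m j
    by_cases h : c / γ ^ j.1 < g m j
    · simp only [T, h, if_true]
      calc ediam {x : EuclideanSpace ℝ (Fin n) | bump j x ≠ 0} ^ u
          ≤ ENNReal.ofReal (6 * √n / 2 ^ j.1) ^ u := by
            gcongr; exact ediam_bump_le j
        _ = ENNReal.ofReal ((6 * √n / 2 ^ j.1) ^ u) := by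
            rw [ENNReal.ofReal_rpow_of_nonneg (by positivity) hu.le]
        _ ≤ _ := by
            refine ENNReal.ofReal_le_ofReal ?_
            rw [Real.div_rpow (by positivity) (by positivity), hγ2]
            have h1 : (c / γ ^ j.1) ^ 2 ≤ g m j ^ 2 := pow_le_pow_left₀ (by positivity) h.le 2
            calc (6 * √n) ^ u / (γ ^ j.1) ^ 2 = M * (c / γ ^ j.1) ^ 2 := by
                  rw [hM]; field_simp
              _ ≤ _ := by gcongr
    · simp [T, h, hu]
  have hsum : ∀ m, ∑' j, ediam (T m j) ^ u ≤ ENNReal.ofReal (M * (1 / ((m : ℝ) + 1)) ^ 2) := by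
    intro m
    refine (ENNReal.tsum_le_tsum (hT m)).trans ?_
    rw [← ENNReal.ofReal_tsum_of_nonneg (fun j => by positivity) ((summable_sq (g m)).mul_left M),
      tsum_mul_left, ← norm_sq_eq]
    refine ENNReal.ofReal_le_ofReal ?_
    have := (hgn m).le
    gcongr
  have hlim : Tendsto (fun m : ℕ => ENNReal.ofReal (M * (1 / ((m : ℝ) + 1)) ^ 2)) atTop (𝓝 0) := by
    have h1 := ((tendsto_one_div_add_atTop_nhds_zero_nat (𝕜 := ℝ)).pow 2).const_mul M
    have h2 := ENNReal.tendsto_ofReal h1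
    simpa using h2
  have hr : Tendsto (fun m : ℕ => ENNReal.ofReal (M * (1 / ((m : ℝ) + 1)) ^ 2) ^ u⁻¹) atTop (𝓝 0) := by
    have := hlim.ennrpow_const u⁻¹
    rwa [ENNReal.zero_rpow_of_pos (inv_pos.2 hu)] at this
  have hle := Measure.hausdorffMeasure_le_liminf_tsum u B _ hr T
    (Eventually.of_forall fun m j =>
      (ENNReal.le_rpow_inv_iff hu).2 ((ENNReal.le_tsum j).trans (hsum m)))
    (Eventually.of_forall fun m x hx => by
      obtain ⟨j, hj, hj'⟩ := hc (g m) x ((hg m).one_le x hx)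
      exact mem_iUnion.2 ⟨j, by simpa [T, hj'] using hj⟩)
  have hlim' : Tendsto (fun m => ∑' j, ediam (T m j) ^ u) atTop (𝓝 0) :=
    tendsto_of_tendsto_of_tendsto_of_le_of_le tendsto_const_nhds hlim (fun _ => zero_le) hsum
  rw [hlim'.liminf_eq] at hle
  exact le_antisymm hle zero_le

lemma bump_floor_eq_one {k : ℕ} {x y : EuclideanSpace ℝ (Fin n)} (h : dist y x ≤ (1 / 2) ^ k) :
    bump (k, fun l => ⌊2 ^ k * x l⌋) y = 1 := by
  refine bump_eq_one fun l => ?_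
  have h1 := Int.floor_le (2 ^ k * x l)
  have h2 := Int.lt_floor_add_one (2 ^ k * x l)
  have hk : (0 : ℝ) < 2 ^ k := by positivity
  have h3 : |y l - x l| ≤ (1 / 2) ^ k := by
    refine le_trans ?_ h
    rw [dist_eq_norm]
    simpa using PiLp.norm_apply_le (y - x) l
  have h4 : |2 ^ k * (y l - x l)| ≤ 1 := by
    rw [abs_mul, abs_of_pos hk]
    calc 2 ^ k * |y l - x l| ≤ 2 ^ k * (1 / 2) ^ k := by gcongr
      _ = 1 := by rw [← mul_pow]; norm_num
  rw [abs_le] at h4 ⊢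
  simp only
  constructor <;> nlinarith

/-- Frostman lemma for Borel sets, up to an arbitrarily small loss `u - t` in the exponent. A measure
of finite discrete energy is provided by capacitability and duality; it is restricted to a set where
its potential is bounded. -/
theorem exists_frostman {B : Set (EuclideanSpace ℝ (Fin n))} (hB : MeasurableSet B) {t u : ℝ}
    (ht : 0 < t) (htu : t < u) (hpos : μH[u] B ≠ 0) :
    ∃ μ : Measure (EuclideanSpace ℝ (Fin n)), IsFiniteMeasure μ ∧ μ ≠ 0 ∧ μ Bᶜ = 0 ∧
      ∃ C : ℝ, 0 ≤ C ∧ ∀ x r, 0 < r → μ (closedBall x r) ≤ ENNReal.ofReal (C * r ^ t) := by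
  set β : ℝ := 2 ^ (t / 2) with hβ
  have hβ0 : 0 < β := Real.rpow_pos_of_pos two_pos _
  have hβ2 : ∀ k : ℕ, β ^ k * β ^ k = ((2 : ℝ) ^ k) ^ t := by
    intro k
    rw [hβ, ← Real.rpow_natCast, ← Real.rpow_natCast, ← Real.rpow_mul two_pos.le,
      ← Real.rpow_mul two_pos.le, ← Real.rpow_add two_pos]
    congr 1
    ring
  have hψ : ∀ (j : ℕ × (Fin n → ℤ)) x, 0 ≤ wbump β j x := fun j x =>
    mul_nonneg (by positivity) (bump_nonneg j x)
  have hψc : ∀ j : ℕ × (Fin n → ℤ), Continuous (wbump β j) := fun j =>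
    (continuous_bump j).const_mul _
  have hcap : cap (wbump (n := n) β) B ≠ 0 := fun h =>
    hpos (hausdorffMeasure_eq_zero_of_cap ht htu h)
  obtain ⟨K, hKB, hK, hcapK⟩ := exists_compact_cap_pos hψ hψc hB.analyticSet hcap
  obtain ⟨μ₀, hfin, hne, hKc, hsum⟩ := exists_measure_of_cap_pos hψ hψc
    (fun x => ⟨(0, fun l => ⌊2 ^ 0 * x l⌋), by
      rw [wbump, bump_floor_eq_one (by simp)]; simp⟩) hK hcapK
  set a : ℕ × (Fin n → ℤ) → ℝ := fun j => ∫ x, bump j x ∂μ₀ with ha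
  have hint : ∀ j : ℕ × (Fin n → ℤ), Integrable (bump j) μ₀ := fun j =>
    Integrable.of_bound (continuous_bump j).aestronglyMeasurable 1
      (Eventually.of_forall fun x => by
        rw [Real.norm_of_nonneg (bump_nonneg j x)]; exact bump_le_one j x)
  have ha0 : ∀ j, 0 ≤ a j := fun j => integral_nonneg (bump_nonneg j)
  let V : EuclideanSpace ℝ (Fin n) → ℝ≥0∞ := fun x =>
    ∑' j, ENNReal.ofReal (β ^ j.1 * β ^ j.1 * a j * bump j x)
  have hVm : Measurable V := Measurable.tsum fun j =>
    ((continuous_bump j).const_mul _).measurable.ennreal_ofReal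
  have hVint : ∫⁻ x, V x ∂μ₀ ≤ 1 := by
    rw [lintegral_tsum fun j =>
      ((continuous_bump j).const_mul _).measurable.ennreal_ofReal.aemeasurable]
    rw [ENNReal.tsum_eq_iSup_sum]
    refine iSup_le fun F => ?_
    have hj : ∀ j : ℕ × (Fin n → ℤ),
        ∫⁻ x, ENNReal.ofReal (β ^ j.1 * β ^ j.1 * a j * bump j x) ∂μ₀
          = ENNReal.ofReal ((∫ x, wbump β j x ∂μ₀) ^ 2) := by
      intro j
      rw [← ofReal_integral_eq_lintegral_ofReal ((hint j).const_mul _)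
        (Eventually.of_forall fun x => mul_nonneg
          (mul_nonneg (by positivity) (ha0 j)) (bump_nonneg j x))]
      simp only [wbump, integral_const_mul]
      congr 1
      ring
    rw [Finset.sum_congr rfl fun j _ => hj j, ← ENNReal.ofReal_sum_of_nonneg fun j _ => sq_nonneg _]
    exact ENNReal.ofReal_le_one.2 (hsum F)
  have hae : ∀ᵐ x ∂μ₀, V x < ∞ := ae_lt_top hVm (hVint.trans_lt ENNReal.one_lt_top).ne
  obtain ⟨M, hM⟩ : ∃ M : ℕ, μ₀ {x | V x ≤ M} ≠ 0 := by
    by_contra! hcon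
    have h1 : ∀ᵐ x ∂μ₀, ∀ M : ℕ, ¬ V x ≤ M := ae_all_iff.2 fun M => by
      rw [ae_iff]; simpa using hcon M
    have h2 : ∀ᵐ x ∂μ₀, False := by
      filter_upwards [hae, h1] with x hx hx'
      obtain ⟨M, hM⟩ := ENNReal.exists_nat_gt hx.ne
      exact hx' M hM.le
    rw [ae_iff] at h2
    exact hne (by simpa using h2)
  set G := {x | V x ≤ M} with hG
  have hGm : MeasurableSet G := hVm measurableSet_Iic
  have hball : ∀ x ∈ G, ∀ k : ℕ,
      μ₀ (closedBall x ((1 / 2) ^ k)) ≤ ENNReal.ofReal (M * ((1 / 2) ^ k) ^ t) := by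
    intro x hx k
    set j : ℕ × (Fin n → ℤ) := (k, fun l => ⌊2 ^ k * x l⌋) with hj
    have h1 : μ₀.real (closedBall x ((1 / 2) ^ k)) ≤ a j := by
      rw [← integral_indicator_one isClosed_closedBall.measurableSet]
      refine integral_mono_of_nonneg (Eventually.of_forall fun y =>
        indicator_nonneg (fun _ _ => zero_le_one) y) (hint j) (Eventually.of_forall fun y => ?_)
      simp only [indicator]
      split_ifs with h
      · exact (bump_floor_eq_one h).ge
      · exact bump_nonneg _ _
    have h2 : ENNReal.ofReal (β ^ k * β ^ k * a j) ≤ M := by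
      refine le_trans ?_ hx
      have := ENNReal.le_tsum (f := fun j => ENNReal.ofReal (β ^ j.1 * β ^ j.1 * a j * bump j x)) j
      simpa only [hj, bump_floor_eq_one (show dist x x ≤ (1 / 2) ^ k by simp), mul_one] using this
    have h3 : β ^ k * β ^ k * a j ≤ M := by
      rwa [← ENNReal.ofReal_natCast, ENNReal.ofReal_le_ofReal_iff (Nat.cast_nonneg M)] at h2
    rw [← ofReal_measureReal]
    refine ENNReal.ofReal_le_ofReal (h1.trans ?_)
    rw [hβ2] at h3
    rw [one_div, inv_pow, Real.inv_rpow (by positivity), ← div_eq_mul_inv, le_div_iff₀ (by positivity)]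
    linarith
  refine ⟨μ₀.restrict G, inferInstance, by simpa using hM, ?_, (M + μ₀.real univ) * 4 ^ t,
    by positivity, fun x r hr => ?_⟩
  · exact le_antisymm ((Measure.restrict_apply_le _ _).trans
      ((measure_mono (compl_subset_compl.2 hKB)).trans hKc.le)) zero_le
  rw [Measure.restrict_apply isClosed_closedBall.measurableSet]
  rcases (closedBall x r ∩ G).eq_empty_or_nonempty with h | ⟨y, hyx, hyG⟩
  · simp [h]
  have hr4 : 0 ≤ (4 * r) ^ t := by positivity
  rw [mul_assoc, ← Real.mul_rpow (by norm_num) hr.le]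
  rcases le_or_gt (2 * r) 1 with h2r | h2r
  · obtain ⟨k, hk1, hk2⟩ := exists_nat_pow_near_of_lt_one (show 0 < 2 * r by positivity) h2r
      (show (0 : ℝ) < 1 / 2 by norm_num) (by norm_num)
    rw [pow_succ] at hk1
    calc μ₀ (closedBall x r ∩ G) ≤ μ₀ (closedBall y ((1 / 2) ^ k)) := by
          refine measure_mono fun z hz => ?_
          rw [mem_closedBall] at hyx ⊢
          have h1 : dist z x ≤ r := hz.1
          have := dist_triangle_right z y x
          linarith
      _ ≤ ENNReal.ofReal (M * ((1 / 2) ^ k) ^ t) := hball y hyG k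
      _ ≤ _ := by
          refine ENNReal.ofReal_le_ofReal ?_
          have h3 : ((1 / 2 : ℝ) ^ k) ^ t ≤ (4 * r) ^ t :=
            Real.rpow_le_rpow (by positivity) (by linarith) ht.le
          have h4 : (0 : ℝ) ≤ μ₀.real univ := measureReal_nonneg
          have h5 : (0 : ℝ) ≤ M := Nat.cast_nonneg M
          nlinarith [mul_nonneg h4 hr4, mul_le_mul_of_nonneg_left h3 h5]
  · have h3 : (1 : ℝ) ≤ (4 * r) ^ t := Real.one_le_rpow (by linarith) ht.le
    calc μ₀ (closedBall x r ∩ G) ≤ μ₀ univ := measure_mono (subset_univ _)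
      _ = ENNReal.ofReal (μ₀.real univ) := (ofReal_measureReal).symm
      _ ≤ _ := by
          refine ENNReal.ofReal_le_ofReal ?_
          have h4 : (0 : ℝ) ≤ μ₀.real univ := measureReal_nonneg
          have h5 : (0 : ℝ) ≤ M := Nat.cast_nonneg M
          nlinarith [mul_nonneg h5 hr4, mul_le_mul_of_nonneg_left h3 h4]

end Frostman

/-! ### Measures of strips on the sphere -/

section Strip

open scoped Pointwise

variable {n : ℕ}

/-- The `ρ`-neighbourhood of the unit sphere, intersected with the slab of half-width `2 * ρ`
orthogonal to `w`. -/
def thickStrip (w : EuclideanSpace ℝ (Fin n)) (ρ : ℝ) : Set (EuclideanSpace ℝ (Fin n)) :=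
  {x | |‖x‖ - 1| ≤ ρ ∧ |⟪x, w⟫| ≤ 2 * ρ}

lemma isClosed_thickStrip (w : EuclideanSpace ℝ (Fin n)) (ρ : ℝ) :
    IsClosed (thickStrip w ρ) := by
  have h1 : IsClosed {x : EuclideanSpace ℝ (Fin n) | |‖x‖ - 1| ≤ ρ} :=
    isClosed_le (by fun_prop) continuous_const
  have h2 : IsClosed {x : EuclideanSpace ℝ (Fin n) | |⟪x, w⟫| ≤ 2 * ρ} :=
    isClosed_le (by fun_prop) continuous_const
  exact h1.inter h2

/-- The copies of the thick strip obtained by dilating by `1 + 4 * j * ρ` and translating by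
`9 * l * ρ` along `w` are pairwise disjoint: the component along `w` determines `l`, and then the norm
determines `j`. -/
lemma thickStrip_copies_eq {w : EuclideanSpace ℝ (Fin n)} (hw : ‖w‖ = 1) {ρ : ℝ} (hρ : 0 < ρ)
    (hρ' : ρ ≤ 1 / 20) {j l j' l' : ℕ} (hj : j * ρ ≤ 1 / 20) (hj' : j' * ρ ≤ 1 / 20)
    {x y : EuclideanSpace ℝ (Fin n)} (hx : x ∈ thickStrip w ρ) (hy : y ∈ thickStrip w ρ)
    (h : (9 * l * ρ) • w + (1 + 4 * j * ρ) • x = (9 * l' * ρ) • w + (1 + 4 * j' * ρ) • y) :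
    j = j' ∧ l = l' := by
  obtain ⟨hx1, hx2⟩ := hx
  obtain ⟨hy1, hy2⟩ := hy
  rw [abs_le] at hx1 hx2 hy1 hy2
  have hj0 : 0 ≤ j * ρ := by positivity
  have hj0' : 0 ≤ j' * ρ := by positivity
  have hl : l = l' := by
    have h1 := congrArg (fun z => ⟪z, w⟫) h
    simp only [inner_add_left, real_inner_smul_left, real_inner_self_eq_norm_sq, hw] at h1
    set a := ⟪x, w⟫
    set b := ⟪y, w⟫
    have ha : (1 + 4 * j * ρ) * a ≤ 1.2 * (2 * ρ) ∧ -(1.2 * (2 * ρ)) ≤ (1 + 4 * j * ρ) * a := by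
      constructor <;> nlinarith
    have hb : (1 + 4 * j' * ρ) * b ≤ 1.2 * (2 * ρ) ∧ -(1.2 * (2 * ρ)) ≤ (1 + 4 * j' * ρ) * b := by
      constructor <;> nlinarith
    have h2 : (l : ℝ) < l' + 1 := by
      by_contra! hc
      nlinarith
    have h3 : (l' : ℝ) < l + 1 := by
      by_contra! hc
      nlinarith
    have h2' : l < l' + 1 := by exact_mod_cast h2
    have h3' : l' < l + 1 := by exact_mod_cast h3
    omega
  subst hl
  refine ⟨?_, rfl⟩
  have h1 := congrArg norm (add_left_cancel h)
  rw [norm_smul, norm_smul, Real.norm_of_nonneg (by positivity),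
    Real.norm_of_nonneg (by positivity)] at h1
  have h2 : (j : ℝ) < j' + 1 := by
    by_contra! hc
    have : (j' + 1) * ρ ≤ j * ρ := by gcongr
    nlinarith
  have h3 : (j' : ℝ) < j + 1 := by
    by_contra! hc
    have : (j + 1) * ρ ≤ j' * ρ := by gcongr
    nlinarith
  have h2' : j < j' + 1 := by exact_mod_cast h2
  have h3' : j' < j + 1 := by exact_mod_cast h3
  omega

/-- The thick strip has volume `O(ρ ^ 2)`, because about `ρ ^ (-2)` disjoint copies of it of at least the
same volume fit into the ball of radius `2`. -/
lemma volume_thickStrip_le {w : EuclideanSpace ℝ (Fin n)} (hw : ‖w‖ = 1) {ρ : ℝ} (hρ : 0 < ρ)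
    (hρ' : ρ ≤ 1 / 20) :
    volume (thickStrip w ρ) ≤ ENNReal.ofReal (400 * ρ ^ 2) *
      volume (ball (0 : EuclideanSpace ℝ (Fin n)) 2) := by
  set U := thickStrip w ρ with hU
  set N := ⌈1 / (20 * ρ)⌉₊ with hN
  have hlt : ∀ j ∈ Finset.range N, j * ρ ≤ 1 / 20 := by
    intro j hj
    have h1 := Nat.lt_ceil.1 (Finset.mem_range.1 hj)
    rw [lt_div_iff₀ (by positivity)] at h1
    linarith
  let c : ℕ × ℕ → Set (EuclideanSpace ℝ (Fin n)) := fun p =>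
    (fun x => (9 * p.2 * ρ) • w + x) '' ((fun x => (1 + 4 * p.1 * ρ) • x) '' U)
  have hsmul : ∀ p : ℕ × ℕ, (fun x : EuclideanSpace ℝ (Fin n) => (1 + 4 * p.1 * ρ) • x) '' U =
      (1 + 4 * p.1 * ρ : ℝ) • U := fun p => rfl
  have hvol : ∀ p : ℕ × ℕ, volume U ≤ volume (c p) := by
    intro p
    simp only [c]
    rw [image_add_left, measure_preimage_add, hsmul, Measure.addHaar_smul]
    refine le_mul_of_one_le_left zero_le ?_
    rw [ENNReal.one_le_ofReal]
    have : (1 : ℝ) ≤ 1 + 4 * p.1 * ρ := by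
      have : 0 ≤ p.1 * ρ := by positivity
      linarith
    exact (one_le_pow₀ this).trans (le_abs_self _)
  have hmeas : ∀ p : ℕ × ℕ, MeasurableSet (c p) := by
    intro p
    have h0 : (1 + 4 * p.1 * ρ : ℝ) ≠ 0 := by positivity
    simp only [c]
    rw [image_add_left, hsmul]
    exact ((isClosed_thickStrip w ρ).measurableSet.const_smul₀ _).preimage (by fun_prop)
  have hdisj : ((Finset.range N ×ˢ Finset.range N : Finset (ℕ × ℕ)) : Set (ℕ × ℕ)).PairwiseDisjoint
      c := by
    intro p hp q hq hpq
    rw [Finset.mem_coe, Finset.mem_product] at hp hq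
    refine Set.disjoint_left.2 ?_
    rintro _ ⟨_, ⟨x, hx, rfl⟩, rfl⟩ ⟨_, ⟨y, hy, rfl⟩, hxy⟩
    obtain ⟨h1, h2⟩ := thickStrip_copies_eq hw hρ hρ' (hlt _ hq.1) (hlt _ hp.1) hy hx hxy
    exact hpq (Prod.ext h1.symm h2.symm)
  have hsub : ⋃ p ∈ Finset.range N ×ˢ Finset.range N, c p ⊆
      ball (0 : EuclideanSpace ℝ (Fin n)) 2 := by
    refine iUnion₂_subset fun p hp => ?_
    rw [Finset.mem_product] at hp
    rintro _ ⟨_, ⟨x, hx, rfl⟩, rfl⟩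
    have h1 := hlt _ hp.1
    have h2 := hlt _ hp.2
    have h3 : ‖x‖ ≤ 1 + ρ := by linarith [(abs_le.1 hx.1).2]
    have h4 : 0 ≤ p.1 * ρ := by positivity
    rw [mem_ball_zero_iff]
    refine (norm_add_le _ _).trans_lt ?_
    rw [norm_smul, norm_smul, hw, Real.norm_of_nonneg (by positivity),
      Real.norm_of_nonneg (by positivity)]
    nlinarith [norm_nonneg x]
  have hN1 : 1 / (20 * ρ) ≤ N := Nat.le_ceil _
  have key : ENNReal.ofReal (N ^ 2) * volume U ≤ volume (ball (0 : EuclideanSpace ℝ (Fin n)) 2) := by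
    calc ENNReal.ofReal (N ^ 2) * volume U
        = ∑ p ∈ Finset.range N ×ˢ Finset.range N, volume U := by
          rw [Finset.sum_const, Finset.card_product, Finset.card_range, nsmul_eq_mul]
          congr 1
          rw [← ENNReal.ofReal_natCast]
          push_cast
          rw [sq]
      _ ≤ ∑ p ∈ Finset.range N ×ˢ Finset.range N, volume (c p) :=
          Finset.sum_le_sum fun p _ => hvol p
      _ = volume (⋃ p ∈ Finset.range N ×ˢ Finset.range N, c p) :=
          (measure_biUnion_finset hdisj fun p _ => hmeas p).symm
      _ ≤ _ := measure_mono hsub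
  have hone : (1 : ℝ≥0∞) ≤ ENNReal.ofReal (400 * ρ ^ 2) * ENNReal.ofReal (N ^ 2) := by
    rw [← ENNReal.ofReal_mul (by positivity), ENNReal.one_le_ofReal]
    have h1 : 1 ≤ 20 * ρ * N := by
      rw [div_le_iff₀ (by positivity)] at hN1
      linarith
    nlinarith
  calc volume U ≤ ENNReal.ofReal (400 * ρ ^ 2) * ENNReal.ofReal (N ^ 2) * volume U :=
        le_mul_of_one_le_left zero_le hone
    _ ≤ _ := by rw [mul_assoc]; gcongr

/-- A measure on the sphere with `ν (closedBall x r) ≤ C * r ^ u` gives mass `O(ρ ^ (u + 2 - n))` to the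
strip `|⟪e, w⟫| ≤ ρ`, as though the strip were covered by `ρ ^ (2 - n)` balls of radius `ρ`. The
covering is replaced by a volume comparison through Fubini. -/
lemma measure_strip_le_aux {ν : Measure (EuclideanSpace ℝ (Fin n))} [IsFiniteMeasure ν]
    (hS : ν (sphere 0 1)ᶜ = 0) {C u : ℝ} (hC : 0 ≤ C)
    (hν : ∀ x r, 0 < r → ν (closedBall x r) ≤ ENNReal.ofReal (C * r ^ u))
    {w : EuclideanSpace ℝ (Fin n)} (hw : ‖w‖ = 1) {ρ : ℝ} (hρ : 0 < ρ) (hρ' : ρ ≤ 1 / 20) :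
    ν {e | |⟪e, w⟫| ≤ ρ} ≤ ENNReal.ofReal (400 * 2 ^ n * C * ρ ^ (u + 2 - n)) := by
  set S : Set (EuclideanSpace ℝ (Fin n)) := sphere 0 1 ∩ {e | |⟪e, w⟫| ≤ ρ} with hSdef
  have hSm : MeasurableSet S := isClosed_sphere.measurableSet.inter
    (isClosed_le (by fun_prop) continuous_const).measurableSet
  have h0 : ν {e | |⟪e, w⟫| ≤ ρ} ≤ ν S := by
    have : {e : EuclideanSpace ℝ (Fin n) | |⟪e, w⟫| ≤ ρ} ⊆ S ∪ (sphere 0 1)ᶜ := by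
      intro e he
      by_cases h : e ∈ sphere (0 : EuclideanSpace ℝ (Fin n)) 1
      · exact Or.inl ⟨h, he⟩
      · exact Or.inr h
    refine (measure_mono this).trans ((measure_union_le _ _).trans ?_)
    rw [hS, add_zero]
  refine h0.trans ?_
  set v := volume (ball (0 : EuclideanSpace ℝ (Fin n)) 1) with hv
  have hv0 : v ≠ 0 := (measure_ball_pos _ _ one_pos).ne'
  have hvt : v ≠ ∞ := measure_ball_lt_top.ne
  have hclosed : IsClosed {p : EuclideanSpace ℝ (Fin n) × EuclideanSpace ℝ (Fin n) | dist p.1 p.2 ≤ ρ} :=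
    isClosed_le (by fun_prop) continuous_const
  -- double counting of the pairs `(e, x)` with `e ∈ S` and `dist e x ≤ ρ`
  have hleft : (ν.restrict S).prod volume {p : EuclideanSpace ℝ (Fin n) × EuclideanSpace ℝ (Fin n) | dist p.1 p.2 ≤ ρ}
      = ENNReal.ofReal (ρ ^ n) * v * ν S := by
    rw [Measure.prod_apply hclosed.measurableSet]
    have : ∀ e : EuclideanSpace ℝ (Fin n), volume (Prod.mk e ⁻¹' {p : EuclideanSpace ℝ (Fin n) × EuclideanSpace ℝ (Fin n) | dist p.1 p.2 ≤ ρ})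
        = ENNReal.ofReal (ρ ^ n) * v := by
      intro e
      have h1 : Prod.mk e ⁻¹' {p : EuclideanSpace ℝ (Fin n) × EuclideanSpace ℝ (Fin n) | dist p.1 p.2 ≤ ρ} = closedBall e ρ := by
        ext x; simp [dist_comm]
      rw [h1, Measure.addHaar_closedBall _ _ hρ.le, finrank_euclideanSpace, Fintype.card_fin]
    rw [lintegral_congr this]
    simp
  have hright : (ν.restrict S).prod volume {p : EuclideanSpace ℝ (Fin n) × EuclideanSpace ℝ (Fin n) | dist p.1 p.2 ≤ ρ}
      ≤ ENNReal.ofReal (C * ρ ^ u) * volume (thickStrip w ρ) := by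
    rw [Measure.prod_apply_symm hclosed.measurableSet]
    rw [← lintegral_indicator_const (isClosed_thickStrip w ρ).measurableSet]
    refine lintegral_mono fun x => ?_
    have h1 : (fun e => (e, x)) ⁻¹' {p : EuclideanSpace ℝ (Fin n) × EuclideanSpace ℝ (Fin n) | dist p.1 p.2 ≤ ρ} = closedBall x ρ := by
      ext e; simp
    rw [h1, Measure.restrict_apply isClosed_closedBall.measurableSet]
    by_cases hx : x ∈ thickStrip w ρ
    · rw [indicator_of_mem hx]
      exact (measure_mono inter_subset_left).trans (hν x ρ hρ)
    · have : closedBall x ρ ∩ S = ∅ := by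
        refine Set.eq_empty_of_forall_notMem fun e he => hx ?_
        obtain ⟨h2, h3, h4⟩ := he
        rw [mem_sphere_zero_iff_norm] at h3
        rw [mem_closedBall, dist_eq_norm] at h2
        constructor
        · have h5 := abs_norm_sub_norm_le e x
          rw [h3, abs_sub_comm] at h5
          exact h5.trans h2
        · have h5 : ⟪x, w⟫ = ⟪e, w⟫ - ⟪e - x, w⟫ := by rw [inner_sub_left]; ring
          have h6 := abs_real_inner_le_norm (e - x) w
          rw [hw, mul_one] at h6
          have h7 := abs_sub ⟪e, w⟫ ⟪e - x, w⟫
          rw [h5]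
          simp only [mem_ofPred_eq] at h4
          linarith
      simp [this]
  have h2 : volume (ball (0 : EuclideanSpace ℝ (Fin n)) 2) = ENNReal.ofReal (2 ^ n) * v := by
    rw [Measure.addHaar_ball_of_pos _ _ two_pos, finrank_euclideanSpace, Fintype.card_fin]
  have hmain : ENNReal.ofReal (ρ ^ n) * v * ν S ≤
      ENNReal.ofReal (ρ ^ n) * v * ENNReal.ofReal (400 * 2 ^ n * C * ρ ^ (u + 2 - n)) := by
    calc ENNReal.ofReal (ρ ^ n) * v * ν S
        ≤ ENNReal.ofReal (C * ρ ^ u) * volume (thickStrip w ρ) := hleft ▸ hright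
      _ ≤ ENNReal.ofReal (C * ρ ^ u) * (ENNReal.ofReal (400 * ρ ^ 2) *
            (ENNReal.ofReal (2 ^ n) * v)) := by
          rw [← h2]
          gcongr
          exact volume_thickStrip_le hw hρ hρ'
      _ = ENNReal.ofReal (C * ρ ^ u * (400 * ρ ^ 2) * 2 ^ n) * v := by
          rw [ENNReal.ofReal_mul (p := C * ρ ^ u * (400 * ρ ^ 2)) (by positivity),
            ENNReal.ofReal_mul (p := C * ρ ^ u) (by positivity)]
          ring
      _ = ENNReal.ofReal (ρ ^ n * (400 * 2 ^ n * C * ρ ^ (u + 2 - n))) * v := by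
          congr 2
          rw [Real.rpow_sub hρ, Real.rpow_add hρ, Real.rpow_natCast, Real.rpow_two]
          field_simp
      _ = _ := by
          rw [ENNReal.ofReal_mul (by positivity)]
          ring
  refine (ENNReal.mul_le_mul_iff_right ?_ ?_).1 hmain
  · exact mul_ne_zero (ENNReal.ofReal_pos.2 (by positivity)).ne' hv0
  · exact ENNReal.mul_ne_top ENNReal.ofReal_ne_top hvt

/-- The strip estimate in scaled form: the set of directions in which the projection of `v` has length
at most `ρ` has `ν`-mass at most a constant times `(ρ / ‖v‖) ^ t`. -/
lemma exists_measure_strip_le {ν : Measure (EuclideanSpace ℝ (Fin n))} [IsFiniteMeasure ν]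
    (hS : ν (sphere 0 1)ᶜ = 0) {C t : ℝ} (hC : 0 ≤ C) (ht : 0 < t)
    (hν : ∀ x r, 0 < r → ν (closedBall x r) ≤ ENNReal.ofReal (C * r ^ (n - 2 + t))) :
    ∃ D : ℝ, 0 ≤ D ∧ ∀ v : EuclideanSpace ℝ (Fin n), v ≠ 0 → ∀ ρ, 0 < ρ →
      ν {e | |⟪e, v⟫| ≤ ρ} ≤ ENNReal.ofReal (D * (ρ / ‖v‖) ^ t) := by
  refine ⟨400 * 2 ^ n * C + ν.real univ * 20 ^ t, by positivity, fun v hv ρ hρ => ?_⟩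
  have hv' : 0 < ‖v‖ := norm_pos_iff.2 hv
  have hτ : 0 < ρ / ‖v‖ := by positivity
  set τ := ρ / ‖v‖ with hτdef
  have hw : ‖(‖v‖⁻¹ • v)‖ = 1 := by
    rw [norm_smul, norm_inv, norm_norm, inv_mul_cancel₀ hv'.ne']
  have hset : {e : EuclideanSpace ℝ (Fin n) | |⟪e, v⟫| ≤ ρ} = {e | |⟪e, ‖v‖⁻¹ • v⟫| ≤ τ} := by
    ext e
    simp only [mem_ofPred_eq, real_inner_smul_right, abs_mul, abs_inv, abs_norm, hτdef,
      le_div_iff₀ hv']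
    rw [mul_right_comm, inv_mul_cancel₀ hv'.ne', one_mul]
  rw [hset]
  have h0 : (0 : ℝ) ≤ ν.real univ := measureReal_nonneg
  have hτt : 0 ≤ τ ^ t := by positivity
  rcases le_or_gt τ (1 / 20) with h | h
  · refine (measure_strip_le_aux hS hC hν hw hτ h).trans (ENNReal.ofReal_le_ofReal ?_)
    rw [show (n : ℝ) - 2 + t + 2 - n = t by ring]
    gcongr
    have : (0 : ℝ) ≤ ν.real univ * 20 ^ t := by positivity
    linarith
  · calc ν {e | |⟪e, ‖v‖⁻¹ • v⟫| ≤ τ} ≤ ν univ := measure_mono (subset_univ _)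
      _ = ENNReal.ofReal (ν.real univ) := (ofReal_measureReal).symm
      _ ≤ _ := by
        refine ENNReal.ofReal_le_ofReal ?_
        have h1 : (1 : ℝ) ≤ 20 ^ t * τ ^ t := by
          rw [← Real.mul_rpow (by norm_num) hτ.le]
          exact Real.one_le_rpow (by linarith) ht.le
        have h2 : 0 ≤ 400 * 2 ^ n * C * τ ^ t := by positivity
        nlinarith [mul_le_mul_of_nonneg_left h1 h0]

end Strip

/-! ### Energies of projections -/

section Energy

/-- A dyadic version of the Riesz kernel: `∑ 2 ^ (k * t)` over the `k` with `|s| ≤ 2 ^ (-k)`. For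
`t > 0` it is comparable to `|s| ^ (-t)` when `|s| ≤ 1`, it vanishes for `|s| > 1`, and it is `∞` at
`s = 0`. -/
noncomputable def dyadicKernel (t s : ℝ) : ℝ≥0∞ :=
  ∑' k : ℕ, (closedBall (0 : ℝ) ((1 / 2) ^ k)).indicator (fun _ => ENNReal.ofReal ((2 ^ k) ^ t)) s

lemma measurable_dyadicKernel (t : ℝ) : Measurable (dyadicKernel t) :=
  Measurable.tsum fun _ => measurable_const.indicator isClosed_closedBall.measurableSet

lemma lintegral_dyadicKernel {X : Type*} [MeasurableSpace X] (μ : Measure X) (t : ℝ) {g : X → ℝ}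
    (hg : Measurable g) :
    ∫⁻ x, dyadicKernel t (g x) ∂μ =
      ∑' k : ℕ, ENNReal.ofReal ((2 ^ k) ^ t) * μ {x | |g x| ≤ (1 / 2) ^ k} := by
  unfold dyadicKernel
  have hm : ∀ k : ℕ, AEMeasurable (fun x => (closedBall (0 : ℝ) ((1 / 2) ^ k)).indicator
      (fun _ => ENNReal.ofReal ((2 ^ k) ^ t)) (g x)) μ := fun k =>
    ((measurable_const.indicator isClosed_closedBall.measurableSet).comp hg).aemeasurable
  rw [lintegral_tsum hm]
  refine tsum_congr fun k => ?_
  have hset : MeasurableSet {x | |g x| ≤ (1 / 2) ^ k} :=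
    measurableSet_le (hg.abs) measurable_const
  rw [← lintegral_indicator_const hset]
  refine lintegral_congr fun x => ?_
  simp [indicator]

lemma tsum_dyadic_ne_top {t t' : ℝ} (h : t < t') :
    ∑' k : ℕ, ENNReal.ofReal ((2 ^ k) ^ t) * ENNReal.ofReal (((1 / 2) ^ k) ^ t') ≠ ∞ := by
  have h1 : ∀ k : ℕ, ENNReal.ofReal (((2 : ℝ) ^ k) ^ t) * ENNReal.ofReal (((1 / 2) ^ k) ^ t')
      = ENNReal.ofReal (2 ^ (t - t')) ^ k := by
    intro k
    rw [← ENNReal.ofReal_mul (by positivity), ← ENNReal.ofReal_pow (by positivity)]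
    congr 1
    rw [one_div, inv_pow, Real.inv_rpow (by positivity), ← Real.rpow_neg (by positivity),
      ← Real.rpow_add (by positivity), ← sub_eq_add_neg, ← Real.rpow_natCast, ← Real.rpow_natCast,
      ← Real.rpow_mul two_pos.le, ← Real.rpow_mul two_pos.le, mul_comm]
  simp only [h1]
  rw [ENNReal.tsum_geometric]
  refine ENNReal.inv_ne_top.2 (tsub_pos_of_lt ?_).ne'
  rw [ENNReal.ofReal_lt_one]
  exact Real.rpow_lt_one_of_one_lt_of_neg one_lt_two (by linarith)

lemma dyadicKernel_zero {t : ℝ} (ht : 0 ≤ t) : dyadicKernel t 0 = ∞ := by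
  rw [eq_top_iff, ← ENNReal.tsum_const_eq_top_of_ne_zero (α := ℕ) one_ne_zero]
  refine ENNReal.tsum_le_tsum fun k => ?_
  rw [indicator_of_mem (mem_closedBall_self (by positivity)), ENNReal.one_le_ofReal]
  exact Real.one_le_rpow (one_le_pow₀ one_le_two) ht

lemma rpow_neg_le_dyadicKernel {t s : ℝ} (ht : 0 ≤ t) (hs : 0 < s) :
    ENNReal.ofReal (s ^ (-t)) ≤ ENNReal.ofReal (2 ^ t) * (1 + dyadicKernel t s) := by
  have h2 : 1 ≤ ENNReal.ofReal ((2 : ℝ) ^ t) := by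
    rw [ENNReal.one_le_ofReal]; exact Real.one_le_rpow one_le_two ht
  rcases le_or_gt 1 s with h | h
  · calc ENNReal.ofReal (s ^ (-t)) ≤ 1 := by
          rw [ENNReal.ofReal_le_one]
          exact Real.rpow_le_one_of_one_le_of_nonpos h (by linarith)
      _ ≤ _ := one_le_mul h2 le_self_add
  · obtain ⟨k, hk1, hk2⟩ := exists_nat_pow_near_of_lt_one hs h.le
      (show (0 : ℝ) < 1 / 2 by norm_num) (by norm_num)
    calc ENNReal.ofReal (s ^ (-t)) ≤ ENNReal.ofReal (2 ^ t * (2 ^ k) ^ t) := by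
          refine ENNReal.ofReal_le_ofReal ?_
          rw [← Real.mul_rpow two_pos.le (by positivity), Real.rpow_neg hs.le,
            ← Real.inv_rpow hs.le]
          refine Real.rpow_le_rpow (by positivity) ?_ ht
          rw [inv_le_comm₀ hs (by positivity)]
          refine le_trans (le_of_eq ?_) hk1.le
          rw [one_div, inv_pow, pow_succ, mul_comm]
      _ ≤ _ := by
          rw [ENNReal.ofReal_mul (by positivity)]
          gcongr
          refine le_trans ?_ le_add_self
          refine le_trans ?_ (ENNReal.le_tsum k)
          rw [indicator_of_mem]
          rw [mem_closedBall_zero_iff, Real.norm_of_nonneg hs.le]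
          exact hk2

variable {n : ℕ}

/-- Averaged over directions, the kernel of the projected difference `⟪e, v⟫` is controlled by the
kernel, with a slightly larger exponent, of `‖v‖`. This is the strip estimate summed over dyadic
scales. -/
lemma exists_lintegral_kernel_inner_le {ν : Measure (EuclideanSpace ℝ (Fin n))} [IsFiniteMeasure ν]
    (hS : ν (sphere 0 1)ᶜ = 0) {C t t' : ℝ} (hC : 0 ≤ C) (ht' : 0 < t') (htt' : t < t')
    (hν : ∀ x r, 0 < r → ν (closedBall x r) ≤ ENNReal.ofReal (C * r ^ (n - 2 + t'))) :
    ∃ D : ℝ≥0∞, D ≠ ∞ ∧ ∀ v : EuclideanSpace ℝ (Fin n),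
      ∫⁻ e, dyadicKernel t ⟪e, v⟫ ∂ν ≤ D * (1 + dyadicKernel t' ‖v‖) := by
  obtain ⟨D, hD0, hD⟩ := exists_measure_strip_le hS hC ht' hν
  set Γ := ∑' k : ℕ, ENNReal.ofReal ((2 ^ k) ^ t) * ENNReal.ofReal (((1 / 2) ^ k) ^ t') with hΓ
  refine ⟨ENNReal.ofReal D * Γ * ENNReal.ofReal (2 ^ t') + 1, ?_, fun v => ?_⟩
  · exact ENNReal.add_ne_top.2 ⟨ENNReal.mul_ne_top (ENNReal.mul_ne_top ENNReal.ofReal_ne_top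
      (tsum_dyadic_ne_top htt')) ENNReal.ofReal_ne_top, ENNReal.one_ne_top⟩
  by_cases hv : v = 0
  · rw [hv, norm_zero, dyadicKernel_zero ht'.le, add_top, ENNReal.mul_top (by simp)]
    exact le_top
  have hv' : 0 < ‖v‖ := norm_pos_iff.2 hv
  rw [lintegral_dyadicKernel ν t (by fun_prop)]
  calc ∑' k : ℕ, ENNReal.ofReal ((2 ^ k) ^ t) * ν {e | |⟪e, v⟫| ≤ (1 / 2) ^ k}
      ≤ ∑' k : ℕ, ENNReal.ofReal D * ENNReal.ofReal (‖v‖ ^ (-t')) *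
          (ENNReal.ofReal ((2 ^ k) ^ t) * ENNReal.ofReal (((1 / 2) ^ k) ^ t')) := by
        refine ENNReal.tsum_le_tsum fun k => ?_
        calc ENNReal.ofReal ((2 ^ k) ^ t) * ν {e | |⟪e, v⟫| ≤ (1 / 2) ^ k}
            ≤ ENNReal.ofReal ((2 ^ k) ^ t) *
                ENNReal.ofReal (D * (((1 / 2) ^ k) / ‖v‖) ^ t') := by
              gcongr
              exact hD v hv _ (by positivity)
          _ = ENNReal.ofReal ((2 ^ k) ^ t) *
                ENNReal.ofReal (D * (‖v‖ ^ (-t') * ((1 / 2) ^ k) ^ t')) := by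
              rw [Real.div_rpow (by positivity) hv'.le, Real.rpow_neg hv'.le, div_eq_inv_mul]
          _ = _ := by
              rw [ENNReal.ofReal_mul hD0, ENNReal.ofReal_mul (by positivity)]
              ring
    _ = ENNReal.ofReal D * Γ * ENNReal.ofReal (‖v‖ ^ (-t')) := by
        rw [ENNReal.tsum_mul_left, ← hΓ]
        ring
    _ ≤ ENNReal.ofReal D * Γ * (ENNReal.ofReal (2 ^ t') * (1 + dyadicKernel t' ‖v‖)) := by
        gcongr
        exact rpow_neg_le_dyadicKernel ht'.le hv'
    _ ≤ _ := by
        rw [← mul_assoc]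
        gcongr
        exact le_self_add

lemma exists_lintegral_kernel_norm_le {μ : Measure (EuclideanSpace ℝ (Fin n))}
    {C t t' : ℝ} (hC : 0 ≤ C) (htt' : t < t')
    (hμ : ∀ x r, 0 < r → μ (closedBall x r) ≤ ENNReal.ofReal (C * r ^ t')) :
    ∃ D : ℝ≥0∞, D ≠ ∞ ∧ ∀ x : EuclideanSpace ℝ (Fin n),
      ∫⁻ y, dyadicKernel t ‖x - y‖ ∂μ ≤ D := by
  refine ⟨ENNReal.ofReal C *
    ∑' k : ℕ, ENNReal.ofReal ((2 ^ k) ^ t) * ENNReal.ofReal (((1 / 2) ^ k) ^ t'),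
    ENNReal.mul_ne_top ENNReal.ofReal_ne_top (tsum_dyadic_ne_top htt'), fun x => ?_⟩
  rw [lintegral_dyadicKernel μ t (by fun_prop), ← ENNReal.tsum_mul_left]
  refine ENNReal.tsum_le_tsum fun k => ?_
  have h1 : {y | |‖x - y‖| ≤ (1 / 2) ^ k} = closedBall x ((1 / 2) ^ k) := by
    ext y
    simp [dist_eq_norm, norm_sub_rev]
  calc ENNReal.ofReal ((2 ^ k) ^ t) * μ {y | |‖x - y‖| ≤ (1 / 2) ^ k}
      ≤ ENNReal.ofReal ((2 ^ k) ^ t) * ENNReal.ofReal (C * ((1 / 2) ^ k) ^ t') := by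
        rw [h1]
        gcongr
        exact hμ x _ (by positivity)
    _ = _ := by
        rw [ENNReal.ofReal_mul hC]
        ring

/-- The dyadic `t`-energy of the image of `μ` under `x ↦ ⟪e, x⟫`. -/
noncomputable def projEnergy (μ : Measure (EuclideanSpace ℝ (Fin n))) (t : ℝ)
    (e : EuclideanSpace ℝ (Fin n)) : ℝ≥0∞ :=
  ∫⁻ x, ∫⁻ y, dyadicKernel t (⟪e, x⟫ - ⟪e, y⟫) ∂μ ∂μ

lemma measurable_projEnergy (μ : Measure (EuclideanSpace ℝ (Fin n))) [SFinite μ] (t : ℝ) :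
    Measurable (projEnergy μ t) := by
  unfold projEnergy
  refine Measurable.lintegral_prod_right' (f := fun p : EuclideanSpace ℝ (Fin n) ×
    EuclideanSpace ℝ (Fin n) => ∫⁻ y, dyadicKernel t (⟪p.1, p.2⟫ - ⟪p.1, y⟫) ∂μ) ?_
  exact Measurable.lintegral_prod_right' (f := fun p : (EuclideanSpace ℝ (Fin n) ×
    EuclideanSpace ℝ (Fin n)) × EuclideanSpace ℝ (Fin n) =>
      dyadicKernel t (⟪p.1.1, p.1.2⟫ - ⟪p.1.1, p.2⟫))
    ((measurable_dyadicKernel t).comp (by fun_prop))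

/-- The projected energies of `μ` are integrable over the directions, with respect to a measure on the
sphere of dimension `n - 2 + t` and up to losses in the exponents. -/
lemma lintegral_projEnergy_ne_top {μ ν : Measure (EuclideanSpace ℝ (Fin n))}
    [IsFiniteMeasure μ] [IsFiniteMeasure ν] (hS : ν (sphere 0 1)ᶜ = 0) {C C' t t' t'' : ℝ}
    (hC : 0 ≤ C) (hC' : 0 ≤ C') (ht' : 0 < t') (htt' : t < t') (htt'' : t' < t'')
    (hν : ∀ x r, 0 < r → ν (closedBall x r) ≤ ENNReal.ofReal (C * r ^ (n - 2 + t')))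
    (hμ : ∀ x r, 0 < r → μ (closedBall x r) ≤ ENNReal.ofReal (C' * r ^ t'')) :
    ∫⁻ e, projEnergy μ t e ∂ν ≠ ∞ := by
  obtain ⟨D, hDt, hD⟩ := exists_lintegral_kernel_inner_le hS hC ht' htt' hν
  obtain ⟨D', hDt', hD'⟩ := exists_lintegral_kernel_norm_le hC' htt'' hμ
  have hm : Measurable fun p : (EuclideanSpace ℝ (Fin n) × EuclideanSpace ℝ (Fin n)) ×
      EuclideanSpace ℝ (Fin n) => dyadicKernel t (⟪p.1.1, p.1.2⟫ - ⟪p.1.1, p.2⟫) :=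
    (measurable_dyadicKernel t).comp (by fun_prop)
  have hswap : ∫⁻ e, projEnergy μ t e ∂ν =
      ∫⁻ x, ∫⁻ y, ∫⁻ e, dyadicKernel t ⟪e, x - y⟫ ∂ν ∂μ ∂μ := by
    unfold projEnergy
    rw [lintegral_lintegral_swap hm.lintegral_prod_right'.aemeasurable]
    refine lintegral_congr fun x => ?_
    rw [lintegral_lintegral_swap]
    · simp only [inner_sub_right]
    · exact ((measurable_dyadicKernel t).comp (by fun_prop)).aemeasurable
  have hle : ∫⁻ e, projEnergy μ t e ∂ν ≤ D * (μ univ + D') * μ univ := by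
    rw [hswap]
    calc ∫⁻ x, ∫⁻ y, ∫⁻ e, dyadicKernel t ⟪e, x - y⟫ ∂ν ∂μ ∂μ
        ≤ ∫⁻ x, D * (μ univ + D') ∂μ := by
          refine lintegral_mono fun x => ?_
          calc ∫⁻ y, ∫⁻ e, dyadicKernel t ⟪e, x - y⟫ ∂ν ∂μ
              ≤ ∫⁻ y, D * (1 + dyadicKernel t' ‖x - y‖) ∂μ := lintegral_mono fun y => hD _
            _ = D * (μ univ + ∫⁻ y, dyadicKernel t' ‖x - y‖ ∂μ) := by
                rw [lintegral_const_mul' _ _ hDt, lintegral_add_left measurable_const,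
                  lintegral_one]
            _ ≤ _ := by
                gcongr
                exact hD' x
      _ = _ := by rw [lintegral_const]
  refine (hle.trans_lt ?_).ne
  exact (ENNReal.mul_ne_top (ENNReal.mul_ne_top hDt
    (ENNReal.add_ne_top.2 ⟨measure_ne_top μ _, hDt'⟩)) (measure_ne_top μ _)).lt_top

/-- A projection under which `μ` has finite `t`-energy maps every set of full `μ`-measure to a set of
dimension at least `t`: the mass distribution principle for the image of `μ` restricted to a set where
the potential is bounded. -/
lemma le_dimH_of_energy {μ : Measure (EuclideanSpace ℝ (Fin n))} [IsFiniteMeasure μ] (hμ : μ ≠ 0)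
    {A : Set (EuclideanSpace ℝ (Fin n))} (hA : μ Aᶜ = 0) {t : ℝ≥0} (ht : 0 < t)
    {e : EuclideanSpace ℝ (Fin n)} (hJ : projEnergy μ t e ≠ ∞) :
    (t : ℝ≥0∞) ≤ dimH ((fun x => ⟪e, x⟫) '' A) := by
  set f : EuclideanSpace ℝ (Fin n) → ℝ := fun x => ⟪e, x⟫ with hf
  have hfc : Continuous f := by fun_prop
  have ht0 : (0 : ℝ) < t := ht
  set h : EuclideanSpace ℝ (Fin n) → ℝ≥0∞ := fun x => ∫⁻ y, dyadicKernel t (f x - f y) ∂μ with hh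
  have hm : Measurable h := Measurable.lintegral_prod_right' (f := fun p : EuclideanSpace ℝ (Fin n) ×
    EuclideanSpace ℝ (Fin n) => dyadicKernel t (f p.1 - f p.2))
    ((measurable_dyadicKernel t).comp (by fun_prop))
  have hae : ∀ᵐ x ∂μ, h x < ∞ := ae_lt_top hm hJ
  obtain ⟨M, hM⟩ : ∃ M : ℕ, μ {x | h x ≤ M} ≠ 0 := by
    by_contra! hcon
    have h1 : ∀ᵐ x ∂μ, ∀ M : ℕ, ¬ h x ≤ M := ae_all_iff.2 fun M => by
      rw [ae_iff]; simpa using hcon M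
    have h2 : ∀ᵐ x ∂μ, False := by
      filter_upwards [hae, h1] with x hx hx'
      obtain ⟨M, hM⟩ := ENNReal.exists_nat_gt hx.ne
      exact hx' M hM.le
    rw [ae_iff] at h2
    exact hμ (by simpa using h2)
  set G := {x | h x ≤ M} with hG
  have hGm : MeasurableSet G := hm measurableSet_Iic
  have hball : ∀ x ∈ G, ∀ k : ℕ,
      μ {y | |f x - f y| ≤ (1 / 2) ^ k} ≤ ENNReal.ofReal (M * ((1 / 2) ^ k) ^ (t : ℝ)) := by
    intro x hx k
    have h1 : ENNReal.ofReal ((2 ^ k) ^ (t : ℝ)) * μ {y | |f x - f y| ≤ (1 / 2) ^ k} ≤ M := by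
      refine le_trans ?_ hx
      rw [hh]
      simp only
      rw [lintegral_dyadicKernel μ t (by fun_prop)]
      exact ENNReal.le_tsum (f := fun k : ℕ => ENNReal.ofReal ((2 ^ k) ^ (t : ℝ)) *
        μ {y | |f x - f y| ≤ (1 / 2) ^ k}) k
    calc μ {y | |f x - f y| ≤ (1 / 2) ^ k}
        = ENNReal.ofReal (((1 / 2) ^ k) ^ (t : ℝ)) *
            (ENNReal.ofReal ((2 ^ k) ^ (t : ℝ)) * μ {y | |f x - f y| ≤ (1 / 2) ^ k}) := by
          rw [← mul_assoc, ← ENNReal.ofReal_mul (by positivity),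
            ← Real.mul_rpow (by positivity) (by positivity), ← mul_pow]
          norm_num
      _ ≤ ENNReal.ofReal (((1 / 2) ^ k) ^ (t : ℝ)) * M := by gcongr
      _ = _ := by
          rw [← ENNReal.ofReal_natCast, ← ENNReal.ofReal_mul (by positivity), mul_comm]
  set lam := (μ.restrict G).map f with hlam
  set c : ℝ≥0∞ := ENNReal.ofReal (M * 2 ^ (t : ℝ)) + 1 with hc
  have hc0 : c ≠ 0 := by simp [hc]
  have hct : c ≠ ∞ := ENNReal.add_ne_top.2 ⟨ENNReal.ofReal_ne_top, ENNReal.one_ne_top⟩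
  have hclosed : ∀ W : Set ℝ, IsClosed W → ediam W ≤ 1 → lam W ≤ c * ediam W ^ (t : ℝ) := by
    intro W hW hdiam
    rw [hlam, Measure.map_apply hfc.measurable hW.measurableSet,
      Measure.restrict_apply (hfc.measurable hW.measurableSet)]
    rcases (f ⁻¹' W ∩ G).eq_empty_or_nonempty with hemp | ⟨x, hxW, hxG⟩
    · simp [hemp]
    have hdt : ediam W ≠ ∞ := (hdiam.trans_lt ENNReal.one_lt_top).ne
    set d := (ediam W).toReal with hd
    have hdW : ediam W = ENNReal.ofReal d := (ENNReal.ofReal_toReal hdt).symm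
    have hd1 : d ≤ 1 := by
      rw [hdW, ENNReal.ofReal_le_one] at hdiam
      exact hdiam
    have hd0 : 0 ≤ d := ENNReal.toReal_nonneg
    have hk : ∀ k : ℕ, d ≤ (1 / 2) ^ k →
        μ (f ⁻¹' W ∩ G) ≤ ENNReal.ofReal (M * ((1 / 2) ^ k) ^ (t : ℝ)) := by
      intro k hk
      refine (measure_mono fun y hy => ?_).trans (hball x hxG k)
      have h1 : edist (f x) (f y) ≤ ediam W := edist_le_ediam_of_mem hxW hy.1
      rw [hdW, edist_dist, ENNReal.ofReal_le_ofReal_iff hd0, Real.dist_eq] at h1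
      exact h1.trans hk
    rcases hd0.eq_or_lt with h0 | h0
    · have hlim : Tendsto (fun k : ℕ => ENNReal.ofReal (M * ((1 / 2) ^ k) ^ (t : ℝ))) atTop (𝓝 0) := by
        have h1 : Tendsto (fun k : ℕ => ((1 / 2 : ℝ) ^ k) ^ (t : ℝ)) atTop (𝓝 (0 ^ (t : ℝ))) :=
          (tendsto_pow_atTop_nhds_zero_of_lt_one (by norm_num) (by norm_num)).rpow_const
            (Or.inr ht0.le)
        have h2 := ENNReal.tendsto_ofReal (h1.const_mul (M : ℝ))
        simpa [Real.zero_rpow ht0.ne'] using h2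
      refine (ge_of_tendsto' hlim fun k => hk k ?_).trans zero_le
      rw [← h0]; positivity
    · obtain ⟨k, hk1, hk2⟩ := exists_nat_pow_near_of_lt_one h0 hd1
        (show (0 : ℝ) < 1 / 2 by norm_num) (by norm_num)
      rw [pow_succ] at hk1
      calc μ (f ⁻¹' W ∩ G) ≤ ENNReal.ofReal (M * ((1 / 2) ^ k) ^ (t : ℝ)) := hk k hk2
        _ ≤ ENNReal.ofReal (M * 2 ^ (t : ℝ) * d ^ (t : ℝ)) := by
            refine ENNReal.ofReal_le_ofReal ?_
            rw [mul_assoc, ← Real.mul_rpow two_pos.le hd0]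
            gcongr
            linarith
        _ = ENNReal.ofReal (M * 2 ^ (t : ℝ)) * ediam W ^ (t : ℝ) := by
            rw [ENNReal.ofReal_mul (by positivity), hdW,
              ENNReal.ofReal_rpow_of_nonneg hd0 ht0.le]
        _ ≤ _ := by
            gcongr
            exact le_self_add
  have hle : c⁻¹ • lam ≤ μH[(t : ℝ)] := by
    refine Measure.le_hausdorffMeasure _ _ 1 one_pos fun W hW => ?_
    rw [Measure.smul_apply, smul_eq_mul, ENNReal.inv_mul_le_iff hc0 hct]
    refine (measure_mono subset_closure).trans ?_
    have := hclosed (closure W) isClosed_closure (by rwa [ediam_closure])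
    rwa [ediam_closure] at this
  refine le_dimH_of_hausdorffMeasure_ne_zero fun h0 => hM ?_
  have h1 := le_antisymm ((hle (f '' A)).trans h0.le) zero_le
  rw [Measure.smul_apply, smul_eq_mul, mul_eq_zero, ENNReal.inv_eq_zero] at h1
  have h2 : lam (f '' A) = 0 := h1.resolve_left hct
  have h3 : μ.restrict G A = 0 := le_antisymm
    (((measure_mono (subset_preimage_image f A)).trans
      (Measure.le_map_apply hfc.measurable.aemeasurable _)).trans h2.le) zero_le
  have h4 : μ.restrict G Aᶜ = 0 :=
    le_antisymm ((Measure.restrict_apply_le _ _).trans hA.le) zero_le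
  have h5 : μ.restrict G univ = 0 := by
    rw [← union_compl_self A]
    exact measure_union_null h3 h4
  simpa using h5

end Energy

end Kaufman

/-! ### The exceptional set -/

open Kaufman

/-- Kaufman's exceptional set estimate: if `A ⊆ ℝⁿ` is a Borel set with
`dim A ≤ 1`, then the set of unit vectors `e ∈ S^{n-1}` for which the projection
`P_e(A)` has Hausdorff dimension strictly less than `dim A` has Hausdorff
dimension at most `n - 2 + dim A`. -/
theorem kaufman_exceptional_projections (n : ℕ) (hn : 2 ≤ n)
    (A : Set (EuclideanSpace ℝ (Fin n))) (hA : MeasurableSet A)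
    (hdim : dimH A ≤ 1) :
    dimH {e : EuclideanSpace ℝ (Fin n) | e ∈ sphere 0 1 ∧
        dimH ((fun x => ⟪e, x⟫) '' A) < dimH A}
      ≤ (n : ℝ≥0∞) - 2 + dimH A := by
  by_contra! hcon
  have hcover : {e : EuclideanSpace ℝ (Fin n) | e ∈ sphere 0 1 ∧
      dimH ((fun x => ⟪e, x⟫) '' A) < dimH A} ⊆
      ⋃ q : ℚ, {e : EuclideanSpace ℝ (Fin n) | e ∈ sphere 0 1 ∧
        dimH ((fun x => ⟪e, x⟫) '' A) < Real.toNNReal q ∧ (Real.toNNReal q : ℝ≥0∞) < dimH A} := by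
    rintro e ⟨he, hlt⟩
    obtain ⟨q, -, hq1, hq2⟩ := ENNReal.lt_iff_exists_rat_btwn.1 hlt
    exact Set.mem_iUnion.2 ⟨q, he, hq1, hq2⟩
  -- by countable stability a single rational threshold already gives too large a set
  have h1 := hcon.trans_le (dimH_mono hcover)
  rw [dimH_iUnion, lt_iSup_iff] at h1
  obtain ⟨q, hq⟩ := h1
  set t := Real.toNNReal q
  obtain ⟨e₀, -, he₀, htA⟩ : {e : EuclideanSpace ℝ (Fin n) | e ∈ sphere 0 1 ∧
      dimH ((fun x => ⟪e, x⟫) '' A) < t ∧ (t : ℝ≥0∞) < dimH A}.Nonempty := by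
    rw [Set.nonempty_iff_ne_empty]
    rintro h
    rw [h, dimH_empty] at hq
    exact not_lt_zero hq
  have ht : 0 < t := by exact_mod_cast (zero_le.trans_lt he₀ : (0 : ℝ≥0∞) < t)
  obtain ⟨t₁, htt₁, ht₁A⟩ := ENNReal.lt_iff_exists_nnreal_btwn.1 htA
  obtain ⟨t₂, ht₁t₂, ht₂A⟩ := ENNReal.lt_iff_exists_nnreal_btwn.1 ht₁A
  obtain ⟨t₃, ht₂t₃, ht₃A⟩ := ENNReal.lt_iff_exists_nnreal_btwn.1 ht₂A
  have htt₁' : (t : ℝ) < t₁ := by exact_mod_cast htt₁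
  have ht₁t₂' : (t₁ : ℝ) < t₂ := by exact_mod_cast ht₁t₂
  have ht₂t₃' : (t₂ : ℝ) < t₃ := by exact_mod_cast ht₂t₃
  have ht' : (0 : ℝ) < t := ht
  have hμA : μH[(t₃ : ℝ)] A ≠ 0 := by
    rw [hausdorffMeasure_of_lt_dimH ht₃A]; exact ENNReal.top_ne_zero
  -- `A` carries a measure of dimension `t₂`; directions in which its projected energy is finite are
  -- not exceptional
  obtain ⟨μ, hμfin, hμ0, hμc, C', hC', hμ⟩ := exists_frostman hA (by linarith) ht₂t₃' hμA
  set F : Set (EuclideanSpace ℝ (Fin n)) := sphere 0 1 ∩ {e | projEnergy μ t e = ∞} with hF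
  have hFm : MeasurableSet F := isClosed_sphere.measurableSet.inter
    (measurable_projEnergy μ t (measurableSet_singleton ∞))
  have hsub : {e : EuclideanSpace ℝ (Fin n) | e ∈ sphere 0 1 ∧
      dimH ((fun x => ⟪e, x⟫) '' A) < t ∧ (t : ℝ≥0∞) < dimH A} ⊆ F := by
    rintro e ⟨he, hlt, -⟩
    refine ⟨he, ?_⟩
    by_contra hne
    exact absurd (le_dimH_of_energy hμ0 hμc ht hne) hlt.not_ge
  have hn2 : (2 : ℝ) ≤ n := by exact_mod_cast hn
  have hνF : μH[(n - 2 + t₂ : ℝ)] F ≠ 0 := by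
    have h2 : (((n - 2 : ℕ) + t₂ : NNReal) : ℝ≥0∞) < dimH F := by
      refine lt_of_le_of_lt ?_ (hq.trans_le (dimH_mono hsub))
      push_cast
      gcongr
    have h3 := hausdorffMeasure_of_lt_dimH h2
    rw [show ((((n - 2 : ℕ) + t₂ : NNReal)) : ℝ) = n - 2 + t₂ by
      rw [NNReal.coe_add, NNReal.coe_natCast, Nat.cast_sub hn]; norm_num] at h3
    rw [h3]
    exact ENNReal.top_ne_zero
  -- a Frostman measure on the set of directions of infinite energy contradicts integrability
  obtain ⟨ν, hνfin, hν0, hνc, C, hC, hν⟩ := exists_frostman hFm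
    (t := n - 2 + t₁) (by linarith) (by linarith) hνF
  have hS : ν (sphere 0 1)ᶜ = 0 := measure_mono_null
    (Set.compl_subset_compl.2 Set.inter_subset_left) hνc
  have hfinite := lintegral_projEnergy_ne_top hS hC hC' (ht'.trans htt₁') htt₁' ht₁t₂' hν hμ
  have h4 : ∀ᵐ e ∂ν, projEnergy μ t e < ∞ := ae_lt_top (measurable_projEnergy μ t) hfinite
  have h5 : ∀ᵐ e ∂ν, e ∈ F := hνc
  have h6 : ∀ᵐ e ∂ν, False := by
    filter_upwards [h4, h5] with e he he'
    exact he.ne he'.2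
  rw [ae_iff] at h6
  exact hν0 (by simpa using h6)
end
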